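/- There exists a decidable small theory T in the language of graphs, all of whose types are decidable, such that the prime model of T is not decidable; consequently, the saturated model of T is not decidable either. -/

import Mathlib

open FirstOrder FirstOrder.Language

namespace PaperAL

variable {L : FirstOrder.Language.{0, 0}}

/-- Bundled countable-universe models of `T`. -/
abbrev Mdl (T : L.Theory) := Theory.ModelType.{0, 0, 0} T

/-- The complete type of a finite tuple `a` in a structure `M`:
the set of formulas in `n` free variables realized by `a`. -/
def typeOf (M : Type) [L.Structure M] {n : ℕ} (a : Fin n → M) :
    Set (L.Formula (Fin n)) :=
  {φ : L.Formula (Fin n) | φ.Realize a}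

/-- `p` is an (n-)type of the theory `T`: i.e. `p` is realized in some model of `T`. -/
def IsTypeOf (T : L.Theory) {n : ℕ} (p : Set (L.Formula (Fin n))) : Prop :=
  ∃ M : Mdl T, Countable M ∧ ∃ a : Fin n → M, typeOf M a = p

/-- `M` realizes the type `p`. -/
def Realizes (M : Type) [L.Structure M] {n : ℕ} (p : Set (L.Formula (Fin n))) : Prop :=
  ∃ a : Fin n → M, typeOf M a = p

/-- A theory is small if, for each `n`, its set of `n`-types is countable. -/
def IsSmall (T : L.Theory) : Prop :=
  ∀ n : ℕ, {p : Set (L.Formula (Fin n)) | IsTypeOf T p}.Countable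

/-- Two tuples (possibly in different structures) have the same complete type. -/
def SameType {M N : Type} [L.Structure M] [L.Structure N] {n : ℕ}
    (a : Fin n → M) (b : Fin n → N) : Prop :=
  ∀ φ : L.Formula (Fin n), φ.Realize a ↔ φ.Realize b

/-- `M` with the distinguished tuple `a` is a prime model of `Th(M, a)`:
it elementarily embeds, respecting the tuple, into every model of `T` with a
tuple of the same complete type. -/
def IsPrimeOver (T : L.Theory) (M : Type) [L.Structure M] {n : ℕ} (a : Fin n → M) : Prop :=
  M ⊨ T ∧ ∀ N : Mdl T, Countable N → ∀ b : Fin n → N, SameType (L := L) a b →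
    ∃ f : M ↪ₑ[L] N, f ∘ a = b

/-- `M` is a `p`-prime model of `T`. -/
def IsPPrime (T : L.Theory) {n : ℕ} (p : Set (L.Formula (Fin n)))
    (M : Type) [L.Structure M] : Prop :=
  ∃ a : Fin n → M, typeOf M a = p ∧ IsPrimeOver T M a

/-- `M` is an almost prime model of `T`, i.e. `p`-prime for some type `p`. -/
def AlmostPrime (T : L.Theory) (M : Type) [L.Structure M] : Prop :=
  ∃ (n : ℕ) (a : Fin n → M), IsPrimeOver T M a

/-- `M` is a prime model of `T`. -/
def IsPrimeModel (T : L.Theory) (M : Type) [L.Structure M] : Prop :=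
  M ⊨ T ∧ ∀ N : Mdl T, Countable N → Nonempty (M ↪ₑ[L] N)

/-- `S` is an elementary chain of elementary substructures of `M` whose union is `M`. -/
def IsElemChainUnion (M : Type) [L.Structure M]
    (S : ℕ → L.ElementarySubstructure M) : Prop :=
  Monotone S ∧ ∀ x : M, ∃ i, x ∈ S i

/-- `M` is a limit model of `T`: the union of an elementary chain of pairwise isomorphic
almost prime models, but not itself almost prime. -/
def IsLimit (T : L.Theory) (M : Type) [L.Structure M] : Prop :=
  (∃ S : ℕ → L.ElementarySubstructure M, IsElemChainUnion M S ∧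
      (∀ i, AlmostPrime T (S i)) ∧ ∀ i j, Nonempty ((S i) ≃[L] (S j))) ∧
    ¬ AlmostPrime T M

/-- `M` is a `p`-limit model of `T`: the union of an elementary chain of `p`-prime models,
but not itself `p`-prime. -/
def IsPLimit (T : L.Theory) {n : ℕ} (p : Set (L.Formula (Fin n)))
    (M : Type) [L.Structure M] : Prop :=
  (∃ S : ℕ → L.ElementarySubstructure M, IsElemChainUnion M S ∧
      ∀ i, IsPPrime T p (S i)) ∧
    ¬ IsPPrime T p M

/-- `M` is a weakly limit model of `T`: the union of an elementary chain of almost prime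
models. -/
def IsWeaklyLimit (T : L.Theory) (M : Type) [L.Structure M] : Prop :=
  ∃ S : ℕ → L.ElementarySubstructure M, IsElemChainUnion M S ∧ ∀ i, AlmostPrime T (S i)

/-- `M` is a (countably) saturated model of `T`: every type over a finite tuple of `M`
consistent with the theory of that tuple is realized in `M`. -/
def IsSaturatedModel (T : L.Theory) (M : Type) [L.Structure M] : Prop :=
  M ⊨ T ∧ ∀ (n : ℕ) (a : Fin n → M) (N : Mdl T), Countable N →
    ∀ (b : Fin n → N) (c : N), SameType (L := L) a b →
      ∃ d : M, SameType (L := L) (Fin.snoc a d) (Fin.snoc b c)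

/-- `T` is an AL theory: a complete small theory each of whose countable non-saturated
models is either almost prime or limit. -/
def IsALTheory (T : L.Theory) : Prop :=
  T.IsComplete ∧ IsSmall T ∧
    ∀ M : Mdl T, Countable M → ¬ IsSaturatedModel T M →
      AlmostPrime T M ∨ IsLimit T M

/-- A type `p` of `T` is principal if it is generated by a single formula. -/
def IsPrincipalType (T : L.Theory) {n : ℕ} (p : Set (L.Formula (Fin n))) : Prop :=
  ∃ φ ∈ p, ∀ M : Mdl T, Countable M → ∀ a : Fin n → M,
    φ.Realize a → typeOf M a = p

/-- A type `p` of `T` is powerful if every model of `T` realizing `p` realizes every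
type of `T`. -/
def IsPowerfulType (T : L.Theory) {n : ℕ} (p : Set (L.Formula (Fin n))) : Prop :=
  ∀ M : Mdl T, Countable M → Realizes M p →
    ∀ (m : ℕ) (q : Set (L.Formula (Fin m))), IsTypeOf T q → Realizes M q

section Computability

variable [∀ k, Encodable (L.Functions k)] [∀ k, Encodable (L.Relations k)]

/-- A canonical injective Gödel numbering of first-order formulas over an
encodable language. -/
def fmlCode {α : Type} [Encodable α] {n : ℕ} (φ : L.BoundedFormula α n) : ℕ :=
  Encodable.encode φ.listEncode

/-- A structure is decidable if its elementary diagram is computable: under some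
surjective enumeration of its universe, the set of codes of true first-order formulas
with parameters is computable. -/
def DecidableModel (M : Type) [L.Structure M] : Prop :=
  ∃ g : ℕ → M, Function.Surjective g ∧
    ComputablePred (fun c : ℕ => ∃ φ : L.Formula ℕ, fmlCode φ = c ∧ φ.Realize g)

/-- A structure is computable if its atomic diagram is computable. -/
def ComputableModel (M : Type) [L.Structure M] : Prop :=
  ∃ g : ℕ → M, Function.Surjective g ∧
    ComputablePred (fun c : ℕ =>
      ∃ φ : L.Formula ℕ, φ.IsAtomic ∧ fmlCode φ = c ∧ φ.Realize g)

/-- A theory is decidable if it is a computable set of sentences. -/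
def DecidableTheory (T : L.Theory) : Prop :=
  ComputablePred (fun c : ℕ => ∃ φ : L.Sentence, fmlCode φ = c ∧ φ ∈ T)

/-- A type is decidable if it is a computable set of formulas. -/
def DecidableType {n : ℕ} (p : Set (L.Formula (Fin n))) : Prop :=
  ComputablePred (fun c : ℕ => ∃ φ : L.Formula (Fin n), fmlCode φ = c ∧ φ ∈ p)

end Computability


/-- `DecidableModel` with the encodability data of the language given explicitly. -/
def DecidableModel' (L : FirstOrder.Language.{0, 0})
    (i1 : ∀ k, Encodable (L.Functions k)) (i2 : ∀ k, Encodable (L.Relations k))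
    (M : Type) (iM : L.Structure M) : Prop :=
  @DecidableModel L i1 i2 M iM

/-- `ComputableModel` with the encodability data of the language given explicitly. -/
def ComputableModel' (L : FirstOrder.Language.{0, 0})
    (i1 : ∀ k, Encodable (L.Functions k)) (i2 : ∀ k, Encodable (L.Relations k))
    (M : Type) (iM : L.Structure M) : Prop :=
  @ComputableModel L i1 i2 M iM

/-- `T` has exactly one countable model up to isomorphism. -/
def Aleph0Categorical {L : FirstOrder.Language.{0, 0}} (T : L.Theory) : Prop :=
  (∃ M : Mdl T, Countable M) ∧
    ∀ M N : Mdl T, Countable M → Countable N → Nonempty (M ≃[L] N)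

/-- `T` has exactly one model of cardinality `ℵ₁` up to isomorphism. -/
def Aleph1Categorical {L : FirstOrder.Language.{0, 0}} (T : L.Theory) : Prop :=
  (∃ M : Mdl T, Cardinal.mk M = Cardinal.aleph 1) ∧
    ∀ M N : Mdl T, Cardinal.mk M = Cardinal.aleph 1 → Cardinal.mk N = Cardinal.aleph 1 →
      Nonempty (M ≃[L] N)


instance instGraphRelEnc (k : ℕ) : Encodable (FirstOrder.Language.graph.Relations k) :=
  ⟨fun _ => 0,
   fun _ =>
     match k with
     | 2 => some FirstOrder.Language.graphRel.adj
     | 0 => none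
     | 1 => none
     | (_ + 3) => none,
   fun r => by cases r; rfl⟩

instance instGraphFunEnc (k : ℕ) : Encodable (FirstOrder.Language.graph.Functions k) :=
  show Encodable Empty from inferInstance

section

/-! ### The tree of paths -/

/-- Stage `s` approximation of the `n`-th value of the `e`-th computable sequence. -/
def stg (e n s : ℕ) : Option ℕ :=
  Nat.Partrec.Code.evaln s (Denumerable.ofNat Nat.Partrec.Code e) (Nat.pair e n)

/-- The node `σ` may be extended by `true`. -/
def allowed (σ : List Bool) : Prop :=
  σ.idxOf true = σ.length ∨ ∃ k ∈ List.range (σ.length + 1),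
    (∀ n ∈ List.range k, stg (σ.idxOf true) n σ.length = some (σ.getD n false).toNat) ∧
    stg (σ.idxOf true) k σ.length = none ∧ ¬ stg (σ.idxOf true) k (σ.length + 1) = none

/-- The first `n` bits of `p`. -/
def pre (p : ℕ → Bool) (n : ℕ) : List Bool := (List.range n).map p

/-- `p` is a path of the tree. -/
def InC (p : ℕ → Bool) : Prop := ∀ n, p n = true → allowed (pre p n)

/-- `p` is an isolated path of the tree. -/
def Isol (p : ℕ → Bool) : Prop := InC p ∧ ∃ N, ∀ n ≥ N, ¬ allowed (pre p n)

theorem pre_length (p : ℕ → Bool) (n : ℕ) : (pre p n).length = n := by simp [pre]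

theorem pre_succ (p : ℕ → Bool) (n : ℕ) : pre p (n + 1) = pre p n ++ [p n] := by
  simp [pre, List.range_succ]

theorem pre_getD (p : ℕ → Bool) {n k : ℕ} (h : k < n) : (pre p n).getD k false = p k := by
  simp [pre, List.getD, h]

theorem pre_eq_iff {p p' : ℕ → Bool} {n : ℕ} : pre p n = pre p' n ↔ ∀ k < n, p k = p' k := by
  simp [pre]

theorem stg_mono {e n s s' x : ℕ} (h : s ≤ s') (hx : stg e n s = some x) :
    stg e n s' = some x := Nat.Partrec.Code.evaln_mono h hx

theorem stg_bound {e n s x : ℕ} (hx : stg e n s = some x) : n < s :=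
  lt_of_le_of_lt (Nat.right_le_pair _ _) (Nat.Partrec.Code.evaln_bound hx)

theorem prim_stg : Primrec fun a : (ℕ × ℕ) × ℕ => stg a.1.1 a.1.2 a.2 := by
  unfold stg
  exact Nat.Partrec.Code.primrec_evaln.comp
    (((Primrec.snd).pair ((Primrec.ofNat _).comp (Primrec.fst.comp Primrec.fst))).pair
      (Primrec₂.natPair.comp (Primrec.fst.comp Primrec.fst) (Primrec.snd.comp Primrec.fst)))

theorem prim_toNat : Primrec Bool.toNat := Primrec.dom_finite _

theorem prim_allowed : PrimrecPred allowed := by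
  have hidx : Primrec fun σ : List Bool => σ.idxOf true :=
    Primrec.list_idxOf.comp (Primrec.const true) Primrec.id
  have hlen : Primrec fun σ : List Bool => σ.length := Primrec.list_length
  have h1 : PrimrecRel fun (n : ℕ) (σ : List Bool) =>
      stg (σ.idxOf true) n σ.length = some (σ.getD n false).toNat := by
    apply Primrec.eq.comp
    · exact prim_stg.comp (((hidx.comp Primrec.snd).pair Primrec.fst).pair
        (hlen.comp Primrec.snd))
    · exact Primrec.option_some.comp (prim_toNat.comp
        ((Primrec.list_getD false).comp Primrec.snd Primrec.fst))
  have h2 := h1.forall_mem_list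
  have h3 : PrimrecRel fun (k : ℕ) (σ : List Bool) =>
    (∀ n ∈ List.range k, stg (σ.idxOf true) n σ.length = some (σ.getD n false).toNat) ∧
    stg (σ.idxOf true) k σ.length = none ∧ ¬ stg (σ.idxOf true) k (σ.length + 1) = none := by
    apply PrimrecPred.and
    · exact h2.comp (Primrec.list_range.comp Primrec.fst) Primrec.snd
    · apply PrimrecPred.and
      · exact Primrec.eq.comp (prim_stg.comp (((hidx.comp Primrec.snd).pair Primrec.fst).pair
          (hlen.comp Primrec.snd))) (Primrec.const _)
      · exact (Primrec.eq.comp (prim_stg.comp (((hidx.comp Primrec.snd).pair Primrec.fst).pair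
          (Primrec.succ.comp (hlen.comp Primrec.snd)))) (Primrec.const _)).not
  have h4 := h3.exists_mem_list
  exact (Primrec.eq.comp hidx hlen).or
    (h4.comp (Primrec.list_range.comp (Primrec.succ.comp hlen)) Primrec.id)

theorem idxOf_pre {p : ℕ → Bool} {e n : ℕ} (he : p e = true) (h0 : ∀ k < e, p k = false)
    (hn : e < n) : (pre p n).idxOf true = e := by
  have hl : e < (pre p n).length := by rw [pre_length]; exact hn
  have hg : (pre p n)[e]'hl = true := by simp [pre, he]
  have hle : (pre p n).idxOf true ≤ e := by
    rw [← hg]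
    by_contra hc
    push Not at hc
    have := List.not_of_lt_findIdx hc
    simp at this
  rcases hle.lt_or_eq with h | h
  · have hm : (pre p n).idxOf true < (pre p n).length := lt_trans h hl
    have := List.getElem_idxOf hm
    have h2 : ∀ (i : ℕ) (hi : i < (pre p n).length), (pre p n)[i]'hi = p i := by
      intro i hi
      simp [pre]
    rw [h2, h0 _ h] at this
    cases this
  · exact h

theorem allowed_zero {p : ℕ → Bool} {n : ℕ} (h0 : ∀ k < n, p k = false) : allowed (pre p n) := by
  left
  rw [List.idxOf_eq_length_iff]
  simp only [pre, List.mem_map, List.mem_range, not_exists, not_and]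
  intro k hk
  simp [h0 k hk]

theorem allowed_iff {p : ℕ → Bool} {e n : ℕ} (he : p e = true) (h0 : ∀ k < e, p k = false)
    (hn : e < n) : allowed (pre p n) ↔ ∃ k ≤ n, (∀ i < k, stg e i n = some (p i).toNat) ∧
      stg e k n = none ∧ stg e k (n + 1) ≠ none := by
  unfold allowed
  rw [idxOf_pre he h0 hn, pre_length]
  constructor
  · rintro (h | ⟨k, hk, h1, h2, h3⟩)
    · omega
    · rw [List.mem_range] at hk
      refine ⟨k, by omega, fun i hi => ?_, h2, h3⟩
      rw [h1 i (List.mem_range.2 hi), pre_getD _ (by omega)]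
  · rintro ⟨k, hk, h1, h2, h3⟩
    refine Or.inr ⟨k, List.mem_range.2 (by omega), fun i hi => ?_, h2, h3⟩
    rw [List.mem_range] at hi
    rw [h1 i hi, pre_getD _ (by omega)]

theorem exists_first {p : ℕ → Bool} {n : ℕ} (h : p n = true) :
    ∃ e ≤ n, p e = true ∧ ∀ k < e, p k = false := by
  classical
  have hex : ∃ n, p n = true := ⟨n, h⟩
  refine ⟨Nat.find hex, Nat.find_min' hex h, Nat.find_spec hex, fun k hk => ?_⟩
  simpa using Nat.find_min hex hk

/-- A path with infinitely many splittings is a computed sequence. -/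
theorem noniso_stg {p : ℕ → Bool} {e : ℕ} (he : p e = true) (h0 : ∀ k < e, p k = false)
    (hinf : ∀ N, ∃ n ≥ N, allowed (pre p n)) (n : ℕ) : ∃ s, stg e n s = some (p n).toNat := by
  have key : ∀ m, ∃ s > e, ∃ k ≥ m, k ≤ s ∧ (∀ i < k, stg e i s = some (p i).toNat) ∧
      stg e k s = none ∧ stg e k (s + 1) ≠ none := by
    intro m
    induction m with
    | zero =>
      obtain ⟨s, hs, ha⟩ := hinf (e + 1)
      obtain ⟨k, hk⟩ := (allowed_iff he h0 (by omega)).1 ha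
      exact ⟨s, by omega, k, by omega, hk⟩
    | succ m ih =>
      obtain ⟨s, hs, k, hkm, hks, h1, h2, h3⟩ := ih
      obtain ⟨s', hs', ha⟩ := hinf (s + 1)
      obtain ⟨k', hk', h1', h2', h3'⟩ := (allowed_iff he h0 (by omega)).1 ha
      refine ⟨s', by omega, k', ?_, hk', h1', h2', h3'⟩
      by_contra hc
      have hle : k' ≤ k := by omega
      rcases hle.lt_or_eq with h | h
      · have := stg_mono (s' := s') (by omega) (h1 k' h)
        rw [this] at h2'
        cases h2'
      · subst h
        obtain ⟨x, hx⟩ := Option.ne_none_iff_exists'.1 h3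
        have := stg_mono (s' := s') (by omega) hx
        rw [this] at h2'
        cases h2'
  obtain ⟨s, -, k, hk, -, h1, -⟩ := key (n + 1)
  exact ⟨s, h1 n (by omega)⟩

theorem stg_unique {e n s s' x y : ℕ} (h : stg e n s = some x) (h' : stg e n s' = some y) :
    x = y := by
  have h1 := stg_mono (le_max_left s s') h
  have h2 := stg_mono (le_max_right s s') h'
  rw [h1] at h2
  exact Option.some.inj h2

theorem toNat_inj {a b : Bool} (h : a.toNat = b.toNat) : a = b := by
  cases a <;> cases b <;> simp_all

theorem InC.computable {p : ℕ → Bool} (hp : InC p) : Computable p := by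
  by_cases hN : ∃ N, ∀ n ≥ N, ¬ allowed (pre p n)
  · obtain ⟨N, hN⟩ := hN
    have : p = fun n => (pre p N).getD n false := by
      funext n
      by_cases hn : n < N
      · rw [pre_getD _ hn]
      · have h1 : p n = false := by
          by_contra hc
          exact hN n (by omega) (hp n (by simpa using hc))
        rw [h1, List.getD_eq_default]
        rw [pre_length]; omega
    rw [this]
    exact ((Primrec.list_getD false).comp (Primrec.const _) Primrec.id).to_comp
  · push Not at hN
    by_cases hz : ∀ n, p n = false
    · rw [show p = fun _ => false from funext hz]
      exact Computable.const _
    · push Not at hz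
      obtain ⟨n, hn⟩ := hz
      obtain ⟨e, -, he, h0⟩ := exists_first (p := p) (n := n) (by simpa using hn)
      have h1 := noniso_stg he h0 hN
      have h2 : ∀ n, (Nat.Partrec.Code.eval (Denumerable.ofNat Nat.Partrec.Code e)
          (Nat.pair e n)) = Part.some (p n).toNat := by
        intro n
        rw [Part.eq_some_iff, Nat.Partrec.Code.evaln_complete]
        exact h1 n
      have h3 : Partrec fun n : ℕ => (Nat.Partrec.Code.eval
          (Denumerable.ofNat Nat.Partrec.Code e) (Nat.pair e n)) :=
        Nat.Partrec.Code.eval_part.comp (Computable.const _)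
          ((Primrec₂.natPair.comp (Primrec.const e) Primrec.id).to_comp)
      have h4 : Computable fun n : ℕ => (p n).toNat := h3.of_eq h2
      have h5 : Computable fun n => decide ((p n).toNat = 1) :=
        ((Primrec.eq.comp Primrec.id (Primrec.const 1)).decide.to_comp).comp h4
      refine h5.of_eq fun n => ?_
      cases p n <;> rfl

theorem countable_computable : {p : ℕ → Bool | Computable p}.Countable := by
  have h : ∀ p : {p : ℕ → Bool | Computable p}, ∃ c : Nat.Partrec.Code,
      c.eval = fun n => Part.some (Encodable.encode (p.1 n)) := by
    intro p
    have h1 : Computable fun n => Encodable.encode (p.1 n) := Computable.encode.comp p.2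
    exact Nat.Partrec.Code.exists_code.1 (Partrec.nat_iff.1 h1)
  choose c hc using h
  rw [Set.countable_coe_iff.symm]
  apply Function.Injective.countable (f := c)
  intro p p' hpp
  apply Subtype.ext
  funext n
  have := (hc p).symm.trans ((congrArg _ hpp).trans (hc p'))
  exact Encodable.encode_injective (Part.some_injective (congrFun this n))

theorem countable_InC : {p : ℕ → Bool | InC p}.Countable :=
  countable_computable.mono fun _ hp => InC.computable hp

/-- Extend a finite part of `p` by the bit `b` and then zeros. -/
def ext1 (p : ℕ → Bool) (n : ℕ) (b : Bool) : ℕ → Bool := fun k =>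
  if k < n then p k else if k = n then b else false

theorem pre_ext1 (p : ℕ → Bool) (n : ℕ) (b : Bool) {m : ℕ} (h : m ≤ n) :
    pre (ext1 p n b) m = pre p m := by
  rw [pre_eq_iff]
  intro k hk
  simp [ext1, show k < n by omega]

theorem InC_ext1 {p : ℕ → Bool} (hp : InC p) (n : ℕ) (b : Bool)
    (h : b = true → allowed (pre p n)) : InC (ext1 p n b) := by
  intro k hk
  unfold ext1 at hk
  split_ifs at hk with h1 h2
  · rw [pre_ext1 _ _ _ h1.le]; exact hp k hk
  · rw [pre_ext1 _ _ _ h2.le, h2]; exact h hk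

theorem dense_aux {p : ℕ → Bool} (hp : InC p) {e : ℕ} (he : p e = true)
    (h0 : ∀ k < e, p k = false) (q : ℕ) (hq : e < q) :
    ∃ p', Isol p' ∧ pre p' q = pre p q := by
  by_cases hN : ∃ N, ∀ n ≥ N, ¬ allowed (pre p n)
  · exact ⟨p, ⟨hp, hN⟩, rfl⟩
  · push Not at hN
    obtain ⟨n, hn, ha⟩ := hN q
    refine ⟨ext1 p n (!p n), ⟨InC_ext1 hp n _ fun _ => ha, ?_⟩, pre_ext1 _ _ _ hn⟩
    by_contra hc
    push Not at hc
    have he' : ext1 p n (!p n) e = true := by simp [ext1, show e < n by omega, he]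
    have h0' : ∀ k < e, ext1 p n (!p n) k = false := by
      intro k hk
      simp [ext1, show k < n by omega, h0 k hk]
    obtain ⟨s, hs⟩ := noniso_stg he' h0' hc n
    obtain ⟨s', hs'⟩ := noniso_stg he h0 hN n
    have := toNat_inj (stg_unique hs hs')
    simp [ext1] at this

theorem dense_Isol {p : ℕ → Bool} (hp : InC p) (q : ℕ) : ∃ p', Isol p' ∧ pre p' q = pre p q := by
  by_cases hz : ∀ n < q, p n = false
  · have hp' : InC (ext1 p q true) := InC_ext1 hp q _ fun _ => allowed_zero hz
    obtain ⟨p', h1, h2⟩ := dense_aux hp' (e := q) (by simp [ext1])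
      (fun k hk => by simp [ext1, hk, hz k hk]) (q + 1) (by omega)
    refine ⟨p', h1, ?_⟩
    rw [← pre_ext1 p q true le_rfl, pre_eq_iff]
    rw [pre_eq_iff] at h2
    exact fun k hk => h2 k (by omega)
  · push Not at hz
    obtain ⟨n, hn, hnt⟩ := hz
    obtain ⟨e, hen, he, h0⟩ := exists_first (p := p) (n := n) (by simpa using hnt)
    exact dense_aux hp he h0 q (by omega)

/-- There is no computable selection of isolated paths. -/
theorem no_selector (F : ℕ → ℕ → Bool) (hF : Computable₂ F) (hiso : ∀ e, Isol (F e))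
    (h1 : ∀ e, F e e = true) (h0 : ∀ e, ∀ k < e, F e k = false) : False := by
  have hc : Computable fun n : ℕ => (F n.unpair.1 n.unpair.2).toNat :=
    prim_toNat.to_comp.comp (hF.comp (Computable.fst.comp Computable.unpair)
      (Computable.snd.comp Computable.unpair))
  obtain ⟨c, hc⟩ := Nat.Partrec.Code.exists_code.1 (Partrec.nat_iff.1 hc)
  set e := Encodable.encode c with hedef
  have hX : ∀ n, ∃ s, stg e n s = some (F e n).toNat := by
    intro n
    unfold stg
    rw [hedef, Denumerable.ofNat_encode]
    have : (F e n).toNat ∈ c.eval (Nat.pair e n) := by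
      rw [hc]; simp
    exact Nat.Partrec.Code.evaln_complete.1 this
  obtain ⟨hC, N, hN⟩ := hiso e
  classical
  have hex : ∃ k, stg e k (N + e + 1) = none := by
    refine ⟨N + e + 1, ?_⟩
    by_contra hcon
    obtain ⟨x, hx⟩ := Option.ne_none_iff_exists'.1 hcon
    have := stg_bound hx
    omega
  set k := Nat.find hex with hk
  have hk1 : stg e k (N + e + 1) = none := Nat.find_spec hex
  have hk2 : ∀ i < k, stg e i (N + e + 1) ≠ none := fun i hi => Nat.find_min hex hi
  have hex2 : ∃ s, stg e k s ≠ none := by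
    obtain ⟨s, hs⟩ := hX k
    exact ⟨s, by rw [hs]; simp⟩
  set s := Nat.find hex2 with hs
  have hs1 : stg e k s ≠ none := Nat.find_spec hex2
  have hs2 : ∀ i < s, stg e k i = none := fun i hi => by
    simpa using Nat.find_min hex2 hi
  obtain ⟨x, hx⟩ := Option.ne_none_iff_exists'.1 hs1
  have hsN : N + e + 1 < s := by
    by_contra hcon
    have := stg_mono (s' := N + e + 1) (by omega) hx
    rw [this] at hk1
    cases hk1
  have hb := stg_bound hx
  clear_value s k
  obtain ⟨t, rfl⟩ : ∃ t, s = t + 1 := ⟨s - 1, by omega⟩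
  apply hN t (by omega)
  rw [allowed_iff (h1 e) (h0 e) (by omega)]
  refine ⟨k, by omega, fun i hi => ?_, hs2 t (by omega), hs1⟩
  obtain ⟨y, hy⟩ := Option.ne_none_iff_exists'.1 (hk2 i hi)
  obtain ⟨s', hs'⟩ := hX i
  rw [← stg_unique hy hs']
  exact stg_mono (by omega) hy

open Classical in
/-- The nodes at level `q`. -/
noncomputable def lev : ℕ → List (List Bool)
  | 0 => [ [] ]
  | q + 1 => (lev q).flatMap fun σ =>
      (σ ++ [false]) :: if allowed σ then [σ ++ [true] ] else []

theorem prim_lev : Primrec lev := by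
  classical
  have h : Primrec₂ fun (_ : ℕ) (L : List (List Bool)) => L.flatMap fun σ =>
      (σ ++ [false]) :: if allowed σ then [σ ++ [true] ] else [] := by
    apply Primrec.list_flatMap Primrec.snd
    apply Primrec.list_cons.comp
    · exact Primrec.list_concat.comp Primrec.snd (Primrec.const _)
    · refine Primrec.ite (prim_allowed.comp Primrec.snd) ?_ (Primrec.const _)
      exact Primrec.list_cons.comp (Primrec.list_concat.comp Primrec.snd (Primrec.const _))
        (Primrec.const _)
  refine (Primrec.nat_rec₁ [ [] ] h).of_eq fun n => ?_
  induction n with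
  | zero => rfl
  | succ n ih => simp only [lev, ← ih]

theorem mem_lev {q : ℕ} {σ : List Bool} : σ ∈ lev q ↔ ∃ p, InC p ∧ pre p q = σ := by
  induction q generalizing σ with
  | zero =>
    simp only [lev, List.mem_singleton, pre, List.range_zero, List.map_nil]
    exact ⟨fun h => ⟨fun _ => false, fun n hn => by simp at hn, h.symm⟩, fun ⟨_, _, h⟩ => h.symm⟩
  | succ q ih =>
    simp only [lev, List.mem_flatMap, List.mem_cons]
    constructor
    · rintro ⟨τ, hτ, h⟩
      obtain ⟨p, hp, rfl⟩ := ih.1 hτ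
      have hh : ∀ b, pre (ext1 p q b) (q + 1) = pre p q ++ [b] := by
        intro b
        rw [pre_succ, pre_ext1 _ _ _ le_rfl]
        simp [ext1]
      rcases h with rfl | h
      · exact ⟨ext1 p q false, InC_ext1 hp q _ (by simp), hh _⟩
      · split_ifs at h with ha
        · simp only [List.mem_singleton] at h
          subst h
          exact ⟨ext1 p q true, InC_ext1 hp q _ fun _ => ha, hh _⟩
        · simp at h
    · rintro ⟨p, hp, rfl⟩
      refine ⟨pre p q, ih.2 ⟨p, hp, rfl⟩, ?_⟩
      rw [pre_succ]
      cases h : p q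
      · simp
      · right
        rw [if_pos (hp q h)]
        simp

end

section

/-! ### Tree-like graphs and the back-and-forth game -/

/-- Vertices of our graphs: the empty list is the centre, `n :: u` is a child of `u`. -/
abbrev Node := List ℕ

/-- Adjacency: one vertex is the parent of the other. -/
def adjN (u v : Node) : Prop := (v ≠ [] ∧ v.tail = u) ∨ (u ≠ [] ∧ u.tail = v)

theorem adjN_iff {u v : Node} : adjN u v ↔ (∃ n, v = n :: u) ∨ (∃ n, u = n :: v) := by
  unfold adjN
  constructor
  · rintro (⟨h, rfl⟩ | ⟨h, rfl⟩)
    · left; cases v with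
      | nil => exact absurd rfl h
      | cons a v => exact ⟨a, rfl⟩
    · right; cases u with
      | nil => exact absurd rfl h
      | cons a v => exact ⟨a, rfl⟩
  · rintro (⟨n, rfl⟩ | ⟨n, rfl⟩) <;> simp

/-- The graph on a set of vertices. -/
def grN (A : Set Node) : SimpleGraph A where
  Adj u v := adjN u.1 v.1
  symm := ⟨fun u v h => by
    rw [adjN_iff] at h ⊢
    exact h.symm⟩
  loopless := ⟨fun u h => by
    rw [adjN_iff] at h
    rcases h with ⟨n, h⟩ | ⟨n, h⟩ <;>
    · have := congrArg List.length h
      simp at this⟩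

/-- The first-order structure on a set of vertices. -/
instance instStrN (A : Set Node) : FirstOrder.Language.graph.Structure A := (grN A).structure

theorem relMap_adjN (A : Set Node) (w : Fin 2 → A) :
    Structure.RelMap (L := FirstOrder.Language.graph) graphRel.adj w ↔
      adjN (w 0).1 (w 1).1 := by
  rfl

/-- Colours of vertices. -/
inductive Col where
  | top : Col
  | root : List Bool → Col
  | child : ℕ∞ → Col
  | leaf : Col

/-- A partial isomorphism. -/
structure PI (A : Set Node) (cA : Node → Col) (B : Set Node) (cB : Node → Col)
    (S : Finset (Node × Node)) : Prop where
  nil : ([], []) ∈ S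
  mem : ∀ a b, (a, b) ∈ S → a ∈ A ∧ b ∈ B ∧ cA a = cB b
  inj : ∀ a b a' b', (a, b) ∈ S → (a', b') ∈ S → (a = a' ↔ b = b')
  parL : ∀ n a b, (n :: a, b) ∈ S → ∃ m b', b = m :: b' ∧ (a, b') ∈ S
  parR : ∀ m a b, (a, m :: b) ∈ S → ∃ n a', a = n :: a' ∧ (a', b) ∈ S

theorem PI.swap {A cA B cB S} (h : PI A cA B cB S) : PI B cB A cA (S.image Prod.swap) := by
  have hs : ∀ a b, (a, b) ∈ S.image Prod.swap ↔ (b, a) ∈ S := by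
    intro a b
    simp only [Finset.mem_image, Prod.exists, Prod.swap_prod_mk, Prod.mk.injEq]
    constructor
    · rintro ⟨x, y, h, rfl, rfl⟩; exact h
    · intro h; exact ⟨b, a, h, rfl, rfl⟩
  constructor
  · rw [hs]; exact h.nil
  · intro a b hab
    rw [hs] at hab
    obtain ⟨h1, h2, h3⟩ := h.mem _ _ hab
    exact ⟨h2, h1, h3.symm⟩
  · intro a b a' b' h1 h2
    rw [hs] at h1 h2
    exact (h.inj _ _ _ _ h1 h2).symm
  · intro n a b h1
    rw [hs] at h1
    obtain ⟨m, b', h2, h3⟩ := h.parR _ _ _ h1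
    exact ⟨m, b', h2, (hs _ _).2 h3⟩
  · intro n a b h1
    rw [hs] at h1
    obtain ⟨m, b', h2, h3⟩ := h.parL _ _ _ h1
    exact ⟨m, b', h2, (hs _ _).2 h3⟩

theorem PI.adj {A cA B cB S} (h : PI A cA B cB S) {a b a' b'} (h1 : (a, b) ∈ S)
    (h2 : (a', b') ∈ S) : adjN a a' ↔ adjN b b' := by
  rw [adjN_iff, adjN_iff]
  constructor
  · rintro (⟨n, rfl⟩ | ⟨n, rfl⟩)
    · obtain ⟨m, c, rfl, h3⟩ := h.parL _ _ _ h2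
      have := (h.inj _ _ _ _ h1 h3).1 rfl
      subst this
      exact Or.inl ⟨m, rfl⟩
    · obtain ⟨m, c, rfl, h3⟩ := h.parL _ _ _ h1
      have := (h.inj _ _ _ _ h2 h3).1 rfl
      subst this
      exact Or.inr ⟨m, rfl⟩
  · rintro (⟨n, rfl⟩ | ⟨n, rfl⟩)
    · obtain ⟨m, c, rfl, h3⟩ := h.parR _ _ _ h2
      have := (h.inj _ _ _ _ h1 h3).2 rfl
      subst this
      exact Or.inl ⟨m, rfl⟩
    · obtain ⟨m, c, rfl, h3⟩ := h.parR _ _ _ h1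
      have := (h.inj _ _ _ _ h2 h3).2 rfl
      subst this
      exact Or.inr ⟨m, rfl⟩

/-- Number of children of `u` of a given colour. -/
noncomputable def cnt (A : Set Node) (cA : Node → Col) (u : Node) (κ : Col) : ℕ∞ :=
  Set.encard {n : ℕ | n :: u ∈ A ∧ cA (n :: u) = κ}

/-- Equally coloured vertices have the same numbers of coloured children, up to `t`. -/
def Match (t : ℕ) (A : Set Node) (cA : Node → Col) (B : Set Node) (cB : Node → Col) : Prop :=
  ∀ u ∈ A, ∀ v ∈ B, cA u = cB v → ∀ κ, min (cnt A cA u κ) t = min (cnt B cB v κ) t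

theorem Match.symm {t A cA B cB} (h : Match t A cA B cB) : Match t B cB A cA :=
  fun u hu v hv huv κ => (h v hv u hu huv.symm κ).symm

theorem PI.fresh {t A cA B cB} (hM : Match t A cA B cB) {S1 : Finset (Node × Node)}
    (hS1 : PI A cA B cB S1) {n : ℕ} {a b : Node} (hb : (a, b) ∈ S1) (ha : n :: a ∈ A)
    (hex : ¬ ∃ b', (n :: a, b') ∈ S1) (hcard : S1.card < t) :
    ∃ m, m :: b ∈ B ∧ cB (m :: b) = cA (n :: a) ∧ ∀ a', (a', m :: b) ∉ S1 := by
  by_contra hcon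
  push Not at hcon
  set κ := cA (n :: a) with hκ
  have hall : ∀ m, m ∈ {m : ℕ | m :: b ∈ B ∧ cB (m :: b) = κ} →
      ∃ n', (n' :: a, m :: b) ∈ S1 := by
    rintro m ⟨h1, h2⟩
    obtain ⟨a', ha'⟩ := hcon m h1 h2
    obtain ⟨n', a'', rfl, h3⟩ := hS1.parR _ _ _ ha'
    have := (hS1.inj _ _ _ _ hb h3).2 rfl
    subst this
    exact ⟨n', ha'⟩
  choose! f hf using hall
  have hinj : Set.InjOn f {m : ℕ | m :: b ∈ B ∧ cB (m :: b) = κ} := by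
    intro m hm m' hm' hff
    have h1 := hf m hm
    have h2 := hf m' hm'
    rw [hff] at h1
    have := (hS1.inj _ _ _ _ h1 h2).1 rfl
    simpa using this
  have hsub : insert n (f '' {m : ℕ | m :: b ∈ B ∧ cB (m :: b) = κ}) ⊆
      {n' : ℕ | n' :: a ∈ A ∧ cA (n' :: a) = κ} := by
    rintro x (rfl | ⟨m, hm, rfl⟩)
    · exact ⟨ha, rfl⟩
    · obtain ⟨h1, h2, h3⟩ := hS1.mem _ _ (hf m hm)
      exact ⟨h1, h3.trans hm.2⟩
  have hnot : n ∉ f '' {m : ℕ | m :: b ∈ B ∧ cB (m :: b) = κ} := by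
    rintro ⟨m, hm, rfl⟩
    exact hex ⟨_, hf m hm⟩
  have hle : cnt B cB b κ + 1 ≤ cnt A cA a κ := by
    have h := Set.encard_le_encard hsub
    rw [Set.encard_insert_of_notMem hnot, hinj.encard_image] at h
    exact h
  have hle2 : cnt B cB b κ ≤ S1.card := by
    have h1 : Set.encard ((fun m : ℕ => (f m :: a, m :: b)) ''
        {m : ℕ | m :: b ∈ B ∧ cB (m :: b) = κ}) ≤ Set.encard (S1 : Set (Node × Node)) := by
      apply Set.encard_le_encard
      rintro _ ⟨m, hm, rfl⟩
      exact hf m hm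
    rw [Set.InjOn.encard_image, Set.encard_coe_eq_coe_finsetCard] at h1
    · exact h1
    · intro m _ m' _ hmm
      simpa using (congrArg Prod.snd hmm)
  obtain ⟨ha1, hb1, hab⟩ := hS1.mem _ _ hb
  have hm := hM a ha1 b hb1 hab κ
  have hlt : (S1.card : ℕ∞) < t := by
    exact_mod_cast (by omega : S1.card < t)
  have hlt' : cnt B cB b κ < t := lt_of_le_of_lt hle2 hlt
  rw [min_eq_left hlt'.le] at hm
  obtain ⟨c, hc'⟩ := ENat.ne_top_iff_exists.1 (ne_top_of_lt hlt')
  rw [← hc'] at hm hle hlt'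
  have h3 : ((c + 1 : ℕ) : ℕ∞) ≤ min (cnt A cA a κ) t := by
    apply le_min
    · exact_mod_cast hle
    · have : c < t := by exact_mod_cast hlt'
      exact_mod_cast this
  rw [hm] at h3
  have : c + 1 ≤ c := by exact_mod_cast h3
  omega

theorem PI.extend {t A cA B cB} (hM : Match t A cA B cB)
    (hA : ∀ n u, n :: u ∈ A → u ∈ A) (a : Node) : ∀ S, PI A cA B cB S →
    a ∈ A → S.card + a.length ≤ t →
    ∃ S', S ⊆ S' ∧ PI A cA B cB S' ∧ S'.card ≤ S.card + a.length ∧ ∃ b, (a, b) ∈ S' := by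
  induction a with
  | nil =>
    intro S hS _ _
    exact ⟨S, subset_rfl, hS, by simp, [], hS.nil⟩
  | cons n a ih =>
    intro S hS ha hc
    simp only [List.length_cons] at hc
    obtain ⟨S1, hSS, hS1, hcard, b, hb⟩ := ih S hS (hA _ _ ha) (by omega)
    by_cases hex : ∃ b', (n :: a, b') ∈ S1
    · exact ⟨S1, hSS, hS1, by simp; omega, hex⟩
    · have key := PI.fresh hM hS1 hb ha hex (by omega)
      obtain ⟨m, hmB, hmc, hmn⟩ := key
      obtain ⟨ha1, hb1, hab⟩ := hS1.mem _ _ hb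
      refine ⟨insert (n :: a, m :: b) S1, hSS.trans (Finset.subset_insert _ _), ?_, ?_,
        m :: b, Finset.mem_insert_self _ _⟩
      · constructor
        · exact Finset.mem_insert_of_mem hS1.nil
        · intro x y h
          rcases Finset.mem_insert.1 h with h | h
          · cases h; exact ⟨ha, hmB, hmc.symm⟩
          · exact hS1.mem _ _ h
        · intro x y x' y' h h'
          rcases Finset.mem_insert.1 h with h | h <;> rcases Finset.mem_insert.1 h' with h' | h'
          · cases h; cases h'; simp
          · cases h
            constructor
            · rintro rfl; exact absurd ⟨_, h'⟩ hex
            · rintro rfl; exact absurd h' (hmn _)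
          · cases h'
            constructor
            · rintro rfl; exact absurd ⟨_, h⟩ hex
            · rintro rfl; exact absurd h (hmn _)
          · exact hS1.inj _ _ _ _ h h'
        · intro k x y h
          rcases Finset.mem_insert.1 h with h | h
          · cases h; exact ⟨m, b, rfl, Finset.mem_insert_of_mem hb⟩
          · obtain ⟨m', b', h1, h2⟩ := hS1.parL _ _ _ h
            exact ⟨m', b', h1, Finset.mem_insert_of_mem h2⟩
        · intro k x y h
          rcases Finset.mem_insert.1 h with h | h
          · cases h; exact ⟨n, a, rfl, Finset.mem_insert_of_mem hb⟩
          · obtain ⟨m', b', h1, h2⟩ := hS1.parR _ _ _ h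
            exact ⟨m', b', h1, Finset.mem_insert_of_mem h2⟩
      · have := Finset.card_insert_le (n :: a, m :: b) S1
        simp only [List.length_cons]
        omega

/-- Quantifier rank (an upper bound). -/
def qr {α : Type} : {k : ℕ} → FirstOrder.Language.graph.BoundedFormula α k → ℕ
  | _, .falsum => 0
  | _, .equal _ _ => 0
  | _, .rel _ _ => 0
  | _, .imp φ ψ => qr φ + qr ψ
  | _, .all φ => qr φ + 1

theorem term_var {α : Type} (t : FirstOrder.Language.graph.Term α) : ∃ a, t = Term.var a := by
  cases t with
  | var a => exact ⟨a, rfl⟩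
  | func f _ => exact f.elim

theorem EF {t A cA B cB} (hM : Match t A cA B cB)
    (hA : ∀ n u, n :: u ∈ A → u ∈ A) (hB : ∀ n u, n :: u ∈ B → u ∈ B)
    (hA3 : ∀ u ∈ A, u.length ≤ 3) (hB3 : ∀ u ∈ B, u.length ≤ 3) {α : Type} {k : ℕ}
    (φ : FirstOrder.Language.graph.BoundedFormula α k) : ∀ (S : Finset (Node × Node)),
    PI A cA B cB S → S.card + 3 * qr φ ≤ t → ∀ (v : α → A) (v' : α → B) (w : Fin k → A)
    (w' : Fin k → B), (∀ i, ((v i).1, (v' i).1) ∈ S) → (∀ i, ((w i).1, (w' i).1) ∈ S) →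
    (φ.Realize v w ↔ φ.Realize v' w') := by
  have hterm : ∀ {k : ℕ} (S : Finset (Node × Node)) (v : α → A) (v' : α → B) (w : Fin k → A)
    (w' : Fin k → B), (∀ i, ((v i).1, (v' i).1) ∈ S) → (∀ i, ((w i).1, (w' i).1) ∈ S) →
    ∀ s : FirstOrder.Language.graph.Term (α ⊕ Fin k), ((s.realize (Sum.elim v w)).1,
      (s.realize (Sum.elim v' w')).1) ∈ S := by
    intro k S v v' w w' h1 h2 s
    obtain ⟨a, rfl⟩ := term_var s
    cases a with
    | inl a => exact h1 a
    | inr a => exact h2 a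
  induction φ with
  | falsum => intros; rfl
  | equal t1 t2 =>
    intro S hS _ v v' w w' h1 h2
    have e1 := hterm S v v' w w' h1 h2 t1
    have e2 := hterm S v v' w w' h1 h2 t2
    have := hS.inj _ _ _ _ e1 e2
    simp only [BoundedFormula.Realize]
    rw [Subtype.ext_iff, Subtype.ext_iff]
    exact this
  | rel R ts =>
    intro S hS _ v v' w w' h1 h2
    cases R
    have e1 := hterm S v v' w w' h1 h2 (ts 0)
    have e2 := hterm S v v' w w' h1 h2 (ts 1)
    exact hS.adj e1 e2
  | imp φ ψ ih1 ih2 =>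
    intro S hS hc v v' w w' h1 h2
    simp only [qr] at hc
    have e1 := ih1 S hS (by omega) v v' w w' h1 h2
    have e2 := ih2 S hS (by omega) v v' w w' h1 h2
    simp only [BoundedFormula.realize_imp]
    rw [e1, e2]
  | all φ ih =>
    intro S hS hc v v' w w' h1 h2
    simp only [qr] at hc
    simp only [BoundedFormula.realize_all]
    constructor
    · intro h b
      have hl := hB3 b.1 b.2
      obtain ⟨S', hss, hS', hcard, a, ha⟩ := PI.extend hM.symm hB b.1 _ hS.swap b.2
        (by rw [Finset.card_image_of_injective _ Prod.swap_injective]; omega)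
      have hss' : ∀ x y, (x, y) ∈ S → (x, y) ∈ S'.image Prod.swap := by
        intro x y hxy
        exact Finset.mem_image.2 ⟨(y, x), hss (Finset.mem_image.2 ⟨(x, y), hxy, rfl⟩), rfl⟩
      have hc1 : (S'.image Prod.swap).card = S'.card :=
        Finset.card_image_of_injective _ Prod.swap_injective
      rw [Finset.card_image_of_injective _ Prod.swap_injective] at hcard
      have haA := (hS'.mem _ _ ha).2.1
      refine (ih _ hS'.swap (by omega) v v' (Fin.snoc w ⟨a, haA⟩) (Fin.snoc w' b)
        (fun i => hss' _ _ (h1 i)) ?_).1 (h _)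
      intro i
      refine Fin.lastCases ?_ (fun i => ?_) i
      · simp only [Fin.snoc_last]
        exact Finset.mem_image.2 ⟨(b.1, a), ha, rfl⟩
      · simp only [Fin.snoc_castSucc]
        exact hss' _ _ (h2 i)
    · intro h a
      have hl := hA3 a.1 a.2
      obtain ⟨S', hss, hS', hcard, b, hb⟩ := PI.extend hM hA a.1 _ hS a.2 (by omega)
      have hbB := (hS'.mem _ _ hb).2.1
      refine (ih _ hS' (by omega) v v' (Fin.snoc w a) (Fin.snoc w' ⟨b, hbB⟩)
        (fun i => hss (h1 i)) ?_).2 (h _)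
      intro i
      refine Fin.lastCases ?_ (fun i => ?_) i
      · simp only [Fin.snoc_last]
        exact hb
      · simp only [Fin.snoc_castSucc]
        exact hss (h2 i)

/-! ### Models given by root sets, root paths and leaf counts -/

/-- The vertex set with roots `Rt`, the `n`-th child of `x` having `ch x n` leaves. -/
def nodes (Rt : Set ℕ) (ch : ℕ → ℕ → ℕ∞) : Set Node := fun u =>
  match u with
  | [] => True
  | [x] => x ∈ Rt
  | [n, x] => x ∈ Rt ∧ ch x n ≠ 0
  | [l, n, x] => x ∈ Rt ∧ (l : ℕ∞) < ch x n
  | _ => False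

/-- Colours. -/
noncomputable def colr (sg : ℕ → List Bool) (ch : ℕ → ℕ → ℕ∞) (T : ℕ) : Node → Col := fun u =>
  match u with
  | [] => Col.top
  | [x] => Col.root (sg x)
  | [n, x] => Col.child (min (ch x n) T)
  | _ => Col.leaf

theorem nodes_tail {Rt ch} : ∀ n u, n :: u ∈ nodes Rt ch → u ∈ nodes Rt ch := by
  intro n u h
  match u, h with
  | [], _ => trivial
  | [x], h => exact h.1
  | [m, x], h => exact ⟨h.1, fun h0 => by have := h.2; rw [h0] at this; simp at this⟩
  | [_, _, _], h => exact h.elim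
  | (_ :: _ :: _ :: _ :: _), h => exact h.elim

theorem nodes_len {Rt ch} : ∀ u ∈ nodes Rt ch, u.length ≤ 3 := by
  intro u h
  match u, h with
  | [], _ => simp
  | [x], h => simp
  | [m, x], h => simp
  | [_, _, _], h => simp
  | (_ :: _ :: _ :: _ :: _), h => exact h.elim

/-- A model is good at precision `q`. -/
structure GoodM (q : ℕ) (Rt : Set ℕ) (sg : ℕ → List Bool) (ch : ℕ → ℕ → ℕ∞) : Prop where
  a1 : ∀ x ∈ Rt, sg x ∈ lev q
  a2 : ∀ σ ∈ lev q, (q : ℕ∞) ≤ Set.encard {x | x ∈ Rt ∧ sg x = σ}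
  b1 : ∀ x ∈ Rt, ∀ n < q, ch x (2 * n) = (2 * n + ((sg x).getD n false).toNat + 2 : ℕ)
  b2 : ∀ x ∈ Rt, ∀ j, (∃ n < q, j = 2 * n) ∨ ch x j = 0 ∨ ((2 * q + 2 : ℕ) : ℕ∞) ≤ ch x j
  b3 : ∀ x ∈ Rt, (q : ℕ∞) ≤ Set.encard {j | ((2 * q + 2 : ℕ) : ℕ∞) ≤ ch x j}

open Classical in
/-- Common value of the capped counts. -/
noncomputable def NN (q : ℕ) : Col → Col → ℕ∞
  | .top, .root σ => if σ ∈ lev q then q else 0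
  | .root σ, .child c => if c = ((2 * q + 2 : ℕ) : ℕ∞) then q else
      min (Set.encard {n : ℕ | n < q ∧ c = (2 * n + (σ.getD n false).toNat + 2 : ℕ)}) q
  | .child c, .leaf => min c q
  | _, _ => 0

theorem encard_lt (k : ℕ∞) : Set.encard {l : ℕ | (l : ℕ∞) < k} = k := by
  induction k using ENat.recTopCoe with
  | top =>
    have : {l : ℕ | (l : ℕ∞) < ⊤} = Set.univ := by ext; simp
    rw [this]; simp
  | coe n =>
    have : {l : ℕ | (l : ℕ∞) < n} = (Finset.range n : Set ℕ) := by ext; simp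
    rw [this, Set.encard_coe_eq_coe_finsetCard]; simp

theorem GoodM.cnt_eq {q Rt sg ch} (h : GoodM q Rt sg ch) : ∀ u ∈ nodes Rt ch, ∀ κ,
    min (cnt (nodes Rt ch) (colr sg ch (2 * q + 2)) u κ) q =
      NN q (colr sg ch (2 * q + 2) u) κ := by
  have hempty : ∀ u κ, (∀ n, n :: u ∈ nodes Rt ch → colr sg ch (2 * q + 2) (n :: u) ≠ κ) →
      min (cnt (nodes Rt ch) (colr sg ch (2 * q + 2)) u κ) q = 0 := by
    intro u κ hne
    have : cnt (nodes Rt ch) (colr sg ch (2 * q + 2)) u κ = 0 := by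
      unfold cnt
      rw [Set.encard_eq_zero, Set.eq_empty_iff_forall_notMem]
      rintro n ⟨h1, h2⟩
      exact hne n h1 h2
    rw [this]; simp
  intro u hu κ
  match u, hu with
  | [], _ =>
    cases κ with
    | root σ =>
      simp only [colr, NN]
      split_ifs with hσ
      · apply min_eq_right
        refine (h.a2 σ hσ).trans (Set.encard_le_encard ?_)
        rintro x ⟨hx, rfl⟩
        exact ⟨hx, rfl⟩
      · apply hempty
        intro n hn hc
        simp only [colr, Col.root.injEq] at hc
        exact hσ (hc ▸ h.a1 n hn)
    | top => exact hempty _ _ (fun n _ => by simp [colr])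
    | child c => exact hempty _ _ (fun n _ => by simp [colr])
    | leaf => exact hempty _ _ (fun n _ => by simp [colr])
  | [x], hx =>
    cases κ with
    | child c =>
      simp only [colr, NN]
      split_ifs with hc
      · apply min_eq_right
        refine (h.b3 x hx).trans (Set.encard_le_encard ?_)
        intro j hj
        refine ⟨⟨hx, fun h0 => ?_⟩, ?_⟩
        · rw [Set.mem_ofPred_eq, h0] at hj
          simp at hj
        · subst hc
          exact congrArg Col.child (min_eq_right hj)
      · congr 1
        rw [← Function.Injective.encard_image (f := fun n : ℕ => 2 * n)
          (fun a b hab => by simpa using hab)]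
        unfold cnt
        congr 1
        ext j
        simp only [Set.mem_ofPred_eq, colr, Col.child.injEq, Set.mem_image]
        have hsmall : ∀ n < q, ((2 * n + ((sg x).getD n false).toNat + 2 : ℕ) : ℕ∞) ≤
            ((2 * q + 2 : ℕ) : ℕ∞) := by
          intro n hn
          have : ((sg x).getD n false).toNat ≤ 1 := Bool.toNat_le _
          exact_mod_cast (by omega)
        constructor
        · rintro ⟨⟨_, h1⟩, h2⟩
          rcases h.b2 x hx j with ⟨n, hn, rfl⟩ | h0 | h0
          · refine ⟨n, ⟨hn, ?_⟩, rfl⟩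
            rw [← h2, h.b1 x hx n hn]
            exact min_eq_left (hsmall n hn)
          · exact absurd h0 h1
          · exact absurd ((min_eq_right h0).symm.trans h2).symm hc
        · rintro ⟨n, ⟨hn, h1⟩, rfl⟩
          refine ⟨⟨hx, ?_⟩, ?_⟩
          · rw [h.b1 x hx n hn]
            exact Nat.cast_ne_zero.2 (by omega)
          · rw [h.b1 x hx n hn, h1]
            exact min_eq_left (hsmall n hn)
    | top => exact hempty _ _ (fun n _ => by simp [colr])
    | root c => exact hempty _ _ (fun n _ => by simp [colr])
    | leaf => exact hempty _ _ (fun n _ => by simp [colr])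
  | [n, x], hx =>
    cases κ with
    | leaf =>
      simp only [colr, NN]
      have : cnt (nodes Rt ch) (colr sg ch (2 * q + 2)) [n, x] Col.leaf = ch x n := by
        unfold cnt
        rw [← encard_lt (ch x n)]
        congr 1
        ext l
        simp only [Set.mem_ofPred_eq, colr, and_true]
        exact ⟨fun h => h.2, fun h => ⟨hx.1, h⟩⟩
      rw [this, min_assoc]
      congr 1
      symm
      apply min_eq_right
      exact_mod_cast (by omega)
    | top => exact hempty _ _ (fun n _ => by simp [colr])
    | root c => exact hempty _ _ (fun n _ => by simp [colr])
    | child c => exact hempty _ _ (fun n _ => by simp [colr])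
  | [l, n, x], hx =>
    have : NN q (colr sg ch (2 * q + 2) [l, n, x]) κ = 0 := by
      cases κ <;> rfl
    rw [this]
    exact hempty _ _ (fun n h => h.elim)
  | (_ :: _ :: _ :: _ :: _), h => exact h.elim

theorem GoodM.match {q Rt sg ch Rt' sg' ch'} (h : GoodM q Rt sg ch) (h' : GoodM q Rt' sg' ch') :
    Match q (nodes Rt ch) (colr sg ch (2 * q + 2)) (nodes Rt' ch')
      (colr sg' ch' (2 * q + 2)) := by
  intro u hu v hv huv κ
  rw [h.cnt_eq u hu κ, h'.cnt_eq v hv κ, huv]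

end

section

/-! ### The concrete models -/

theorem InC_zero : InC fun _ => false := fun n hn => by simp at hn

theorem exists_enumC : ∃ f : ℕ → ℕ → Bool, {p | InC p} = Set.range f :=
  countable_InC.exists_eq_range ⟨_, InC_zero⟩

theorem exists_enumI : ∃ f : ℕ → ℕ → Bool, {p | Isol p} = Set.range f := by
  obtain ⟨p, hp, -⟩ := dense_Isol InC_zero 0
  exact (countable_InC.mono fun p (hp : Isol p) => hp.1).exists_eq_range ⟨p, hp⟩

/-- Paths of the roots in the saturated model. -/
noncomputable def Psat (x : ℕ) : ℕ → Bool := exists_enumC.choose x.unpair.1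

/-- Paths of the roots in the prime model. -/
noncomputable def Pat (x : ℕ) : ℕ → Bool := exists_enumI.choose x.unpair.1

theorem Psat_InC (x : ℕ) : InC (Psat x) := by
  have h : Psat x ∈ Set.range exists_enumC.choose := ⟨_, rfl⟩
  rw [← exists_enumC.choose_spec] at h
  exact h

theorem Pat_Isol (x : ℕ) : Isol (Pat x) := by
  have h : Pat x ∈ Set.range exists_enumI.choose := ⟨_, rfl⟩
  rw [← exists_enumI.choose_spec] at h
  exact h

theorem Psat_surj {p : ℕ → Bool} (hp : InC p) : ∃ i, ∀ j, Psat (Nat.pair i j) = p := by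
  have h : p ∈ {p | InC p} := hp
  rw [exists_enumC.choose_spec] at h
  obtain ⟨i, hi⟩ := h
  exact ⟨i, fun j => by simp [Psat, hi]⟩

theorem Pat_surj {p : ℕ → Bool} (hp : Isol p) : ∃ i, ∀ j, Pat (Nat.pair i j) = p := by
  have h : p ∈ {p | Isol p} := hp
  rw [exists_enumI.choose_spec] at h
  obtain ⟨i, hi⟩ := h
  exact ⟨i, fun j => by simp [Pat, hi]⟩

/-- Leaf counts in infinite models; odd children get `o` leaves. -/
noncomputable def chM (P : ℕ → ℕ → Bool) (o : ℕ∞) (x j : ℕ) : ℕ∞ :=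
  if j % 2 = 0 then ((j + (P x (j / 2)).toNat + 2 : ℕ) : ℕ∞) else o

theorem good_inf (P : ℕ → ℕ → Bool) (o : ℕ∞) (ho : o = 0 ∨ o = ⊤) (hP : ∀ x, InC (P x))
    (q : ℕ) (hd : ∀ p, InC p → ∃ i, ∀ j, pre (P (Nat.pair i j)) q = pre p q) :
    GoodM q Set.univ (fun x => pre (P x) q) (chM P o) := by
  constructor
  · intro x _
    exact mem_lev.2 ⟨P x, hP x, rfl⟩
  · intro σ hσ
    obtain ⟨p, hp, rfl⟩ := mem_lev.1 hσ
    obtain ⟨i, hi⟩ := hd p hp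
    have : Set.encard {x | x ∈ Set.univ ∧ pre (P x) q = pre p q} = ⊤ := by
      rw [Set.encard_eq_top_iff]
      apply Set.infinite_of_injective_forall_mem (f := fun j => Nat.pair i j)
      · intro a b hab
        exact (Nat.pair_eq_pair.1 hab).2
      · intro j
        exact ⟨trivial, hi j⟩
    rw [this]; simp
  · intro x _ n hn
    rw [pre_getD _ hn]
    simp [chM]
  · intro x _ j
    by_cases hj : j % 2 = 0
    · by_cases hq : j / 2 < q
      · exact Or.inl ⟨j / 2, hq, by omega⟩
      · right; right
        simp only [chM, hj, if_true]
        exact_mod_cast (by omega)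
    · simp only [chM, hj, if_false]
      rcases ho with h | h <;> simp [h]
  · intro x _
    have : Set.encard {j | ((2 * q + 2 : ℕ) : ℕ∞) ≤ chM P o x j} = ⊤ := by
      rw [Set.encard_eq_top_iff]
      apply Set.infinite_of_injective_forall_mem (f := fun j => 2 * (j + q))
      · intro a b hab
        simpa using hab
      · intro j
        have : (2 * (j + q)) % 2 = 0 := by omega
        simp only [Set.mem_ofPred_eq, chM, this, if_true]
        exact_mod_cast (by omega)
    rw [this]; simp

/-- The saturated model. -/
noncomputable def Dsat : Set Node := nodes Set.univ (chM Psat ⊤)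

/-- The prime model. -/
noncomputable def Dat : Set Node := nodes Set.univ (chM Pat 0)

theorem good_sat (q : ℕ) : GoodM q Set.univ (fun x => pre (Psat x) q) (chM Psat ⊤) := by
  apply good_inf _ _ (Or.inr rfl) Psat_InC
  intro p hp
  obtain ⟨i, hi⟩ := Psat_surj hp
  exact ⟨i, fun j => by rw [hi]⟩

theorem good_at (q : ℕ) : GoodM q Set.univ (fun x => pre (Pat x) q) (chM Pat 0) := by
  apply good_inf _ _ (Or.inl rfl) (fun x => (Pat_Isol x).1)
  intro p hp
  obtain ⟨p', hp', h⟩ := dense_Isol hp q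
  obtain ⟨i, hi⟩ := Pat_surj hp'
  exact ⟨i, fun j => by rw [hi, h]⟩

/-- Root labels in the finite approximation. -/
noncomputable def sl (m q : ℕ) : List (List Bool) :=
  (List.range m).map (fun x => pre (Psat x) q) ++
    (lev q).flatMap fun σ => (List.range q).map fun _ => σ

/-- Leaf counts in the finite approximation. -/
def chF (q : ℕ) (s : List (List Bool)) (x j : ℕ) : ℕ :=
  if j % 2 = 0 then j + ((s.getD x []).getD (j / 2) false).toNat + 2 else 2 * q + 2

/-- Leaf counts in the finite approximation, with absent children. -/
def chG (q : ℕ) (s : List (List Bool)) (x j : ℕ) : ℕ∞ :=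
  if j < 2 * q then (chF q s x j : ℕ) else 0

/-- Vertex list of the finite approximation. -/
def DL (q : ℕ) (s : List (List Bool)) : List Node :=
  [] :: (List.range s.length).flatMap fun x =>
    [x] :: (List.range (2 * q)).flatMap fun j =>
      [j, x] :: (List.range (chF q s x j)).map fun l => [l, j, x]

theorem mem_DL (q : ℕ) (s : List (List Bool)) (u : Node) :
    u ∈ DL q s ↔ u ∈ nodes {x | x < s.length} (chG q s) := by
  have hpos : ∀ x j, chF q s x j ≠ 0 := by
    intro x j
    unfold chF
    split_ifs <;> omega
  match u with
  | [] =>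
    have : ([] : Node) ∈ nodes {x | x < s.length} (chG q s) ↔ True := Iff.rfl
    rw [this]; simp [DL]
  | [x] =>
    have : [x] ∈ nodes {x | x < s.length} (chG q s) ↔ x < s.length := Iff.rfl
    rw [this]; simp [DL]
  | [n, x] =>
    have : [n, x] ∈ nodes {x | x < s.length} (chG q s) ↔ x < s.length ∧ chG q s x n ≠ 0 := Iff.rfl
    rw [this]
    by_cases hn : n < 2 * q
    · simp [DL, chG, hn, hpos]
    · simp [DL, chG, hn]
  | [l, n, x] =>
    have : [l, n, x] ∈ nodes {x | x < s.length} (chG q s) ↔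
      x < s.length ∧ (l : ℕ∞) < chG q s x n := Iff.rfl
    rw [this]
    by_cases hn : n < 2 * q
    · simp [DL, chG, hn]
    · simp [DL, chG, hn]
  | (a :: b :: c :: d :: e) =>
    have : (a :: b :: c :: d :: e) ∈ nodes {x | x < s.length} (chG q s) ↔ False := Iff.rfl
    rw [this]; simp [DL]

theorem sl_getD {m q x : ℕ} (h : x < m) : (sl m q).getD x [] = pre (Psat x) q := by
  unfold sl
  rw [List.getD_append _ _ _ _ (by simpa using h)]
  simp [List.getD, h]

theorem good_fin (m q : ℕ) : GoodM q {x | x < (sl m q).length} (fun x => (sl m q).getD x [])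
    (chG q (sl m q)) := by
  have hbit : ∀ x n, (((sl m q).getD x []).getD n false).toNat ≤ 1 := fun _ _ => Bool.toNat_le _
  constructor
  · intro x hx
    have h : (sl m q).getD x [] ∈ sl m q := by
      rw [List.getD_eq_getElem _ _ hx]
      exact List.getElem_mem _
    have h2 : ∀ σ ∈ sl m q, σ ∈ lev q := by
      intro σ hσ
      unfold sl at hσ
      rw [List.mem_append] at hσ
      rcases hσ with hσ | hσ
      · obtain ⟨x, -, rfl⟩ := List.mem_map.1 hσ
        exact mem_lev.2 ⟨_, Psat_InC x, rfl⟩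
      · obtain ⟨τ, hτ, h⟩ := List.mem_flatMap.1 hσ
        obtain ⟨_, -, rfl⟩ := List.mem_map.1 h
        exact hτ
    exact h2 _ h
  · intro σ hσ
    obtain ⟨X, Y, hXY⟩ : ∃ X Y, sl m q = X ++ ((List.range q).map fun _ => σ) ++ Y := by
      obtain ⟨s, t, hst⟩ := List.append_of_mem hσ
      unfold sl
      rw [hst]
      simp only [List.flatMap_append, List.flatMap_cons]
      refine ⟨(List.range m).map (fun x => pre (Psat x) q) ++
        (s.flatMap fun σ => (List.range q).map fun _ => σ),
        t.flatMap fun σ => (List.range q).map fun _ => σ, ?_⟩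
      simp only [List.append_assoc]
    have h1 : Set.encard ((fun r => X.length + r) '' (Finset.range q : Set ℕ)) = q := by
      rw [Function.Injective.encard_image, Set.encard_coe_eq_coe_finsetCard, Finset.card_range]
      intro a b hab
      simpa using hab
    conv_lhs => rw [← h1]
    apply Set.encard_le_encard
    rintro _ ⟨r, hr, rfl⟩
    have hr' : r < q := by simpa using hr
    simp only [Set.mem_ofPred_eq]
    rw [hXY]
    constructor
    · simp; omega
    · rw [List.append_assoc, List.getD_append_right _ _ _ _ (by simp)]
      rw [List.getD_append _ _ _ _ (by simp; omega)]
      simp [List.getD, hr']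
  · intro x hx n hn
    have : 2 * n < 2 * q := by omega
    simp [chG, chF, this]
  · intro x hx j
    by_cases hj : j < 2 * q
    · by_cases hj2 : j % 2 = 0
      · exact Or.inl ⟨j / 2, by omega, by omega⟩
      · simp [chG, chF, hj, hj2]
    · simp [chG, hj]
  · intro x hx
    have h1 : Set.encard ((fun r => 2 * r + 1) '' (Finset.range q : Set ℕ)) = q := by
      rw [Function.Injective.encard_image, Set.encard_coe_eq_coe_finsetCard, Finset.card_range]
      intro a b hab
      simpa using hab
    conv_lhs => rw [← h1]
    apply Set.encard_le_encard
    rintro _ ⟨r, hr, rfl⟩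
    have hr' : r < q := by simpa using hr
    have h2 : 2 * r + 1 < 2 * q := by omega
    simp [chG, chF, h2, Nat.add_mod]

/-- All suffixes of given nodes. -/
def sfx (l : List Node) : Finset Node := insert [] ((l.flatMap List.tails).toFinset)

theorem mem_sfx {l : List Node} {u : Node} : u ∈ sfx l ↔ u = [] ∨ ∃ a ∈ l, u <:+ a := by
  simp [sfx]

theorem sfx_tail {l : List Node} {u : Node} {n : ℕ} (h : n :: u ∈ sfx l) : u ∈ sfx l := by
  rw [mem_sfx] at h ⊢
  rcases h with h | ⟨a, ha, h⟩
  · cases h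
  · exact Or.inr ⟨a, ha, (List.suffix_cons n u).trans h⟩

theorem nodes_suffix {Rt ch} {u a : Node} (h : u <:+ a) (ha : a ∈ nodes Rt ch) :
    u ∈ nodes Rt ch := by
  obtain ⟨t, rfl⟩ := h
  induction t with
  | nil => exact ha
  | cons n t ih => exact ih (nodes_tail _ _ ha)

/-- Truth in the saturated model reduces to truth in finite approximations. -/
theorem sat_to_fin {α : Type} [Finite α] (a : α → Dsat) : ∃ m N, ∀ q,
    ∀ φ : FirstOrder.Language.graph.Formula α, N + 3 * qr φ ≤ q →
    (φ.Realize a ↔ ∃ h : ∀ i, (a i).1 ∈ DL q (sl m q),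
      φ.Realize (fun i => (⟨(a i).1, h i⟩ : ({u | u ∈ DL q (sl m q)} : Set Node)))) := by
  classical
  have := Fintype.ofFinite α
  set l : List Node := (Finset.univ : Finset α).toList.map fun i => (a i).1 with hl
  have hla : ∀ i, (a i).1 ∈ sfx l := by
    intro i
    rw [mem_sfx]
    exact Or.inr ⟨_, List.mem_map.2 ⟨i, by simp, rfl⟩, List.suffix_rfl⟩
  have hD : ∀ u ∈ sfx l, u ∈ Dsat := by
    intro u hu
    rw [mem_sfx] at hu
    rcases hu with rfl | ⟨b, hb, hub⟩
    · trivial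
    · obtain ⟨i, -, rfl⟩ := List.mem_map.1 hb
      exact nodes_suffix hub (a i).2
  obtain ⟨M, hM⟩ : ∃ M, ∀ u ∈ sfx l, ∀ x ∈ u, x < M := by
    refine ⟨(∑ u ∈ sfx l, u.sum) + 1, fun u hu x hx => ?_⟩
    have h1 : x ≤ u.sum := List.le_sum_of_mem hx
    have h2 : u.sum ≤ ∑ u ∈ sfx l, u.sum :=
      Finset.single_le_sum (f := fun u : Node => u.sum) (fun _ _ => Nat.zero_le _) hu
    omega
  refine ⟨M, M + (sfx l).card, fun q φ hq => ?_⟩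
  have hset : ({u | u ∈ DL q (sl M q)} : Set Node) =
      nodes {x | x < (sl M q).length} (chG q (sl M q)) := by
    ext u; exact mem_DL _ _ _
  have hlen : M ≤ (sl M q).length := by simp [sl]
  have hG : ∀ u ∈ sfx l, u ∈ nodes {x | x < (sl M q).length} (chG q (sl M q)) ∧
      colr (fun x => pre (Psat x) q) (chM Psat ⊤) (2 * q + 2) u =
      colr (fun x => (sl M q).getD x []) (chG q (sl M q)) (2 * q + 2) u := by
    have hch : ∀ x < M, ∀ j < M, chM Psat ⊤ x j = chG q (sl M q) x j ∨
        (chM Psat ⊤ x j = ⊤ ∧ chG q (sl M q) x j = (2 * q + 2 : ℕ)) := by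
      intro x hx j hj
      have hj2 : j < 2 * q := by omega
      by_cases h : j % 2 = 0
      · left
        simp only [chM, chG, chF, h, if_true, hj2]
        rw [sl_getD hx, pre_getD _ (by omega)]
      · right
        simp [chM, chG, chF, h, hj2]
    intro u hu
    have hu1 := hD u hu
    have hu2 := hM u hu
    match u, hu1 with
    | [], _ => exact ⟨trivial, rfl⟩
    | [x], _ =>
      have hx := hu2 x (by simp)
      refine ⟨lt_of_lt_of_le hx hlen, ?_⟩
      simp only [colr]
      rw [sl_getD hx]
    | [n, x], h =>
      have hx := hu2 x (by simp)
      have hn := hu2 n (by simp)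
      refine ⟨⟨lt_of_lt_of_le hx hlen, ?_⟩, ?_⟩
      · rcases hch x hx n hn with h' | ⟨-, h'⟩
        · rw [← h']; exact h.2
        · rw [h']; exact Nat.cast_ne_zero.2 (by omega)
      · simp only [colr]
        rcases hch x hx n hn with h' | ⟨h'', h'⟩
        · rw [← h']
        · rw [h', h'']; simp
    | [k, n, x], h =>
      have hx := hu2 x (by simp)
      have hn := hu2 n (by simp)
      have hk := hu2 k (by simp)
      refine ⟨⟨lt_of_lt_of_le hx hlen, ?_⟩, rfl⟩
      rcases hch x hx n hn with h' | ⟨-, h'⟩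
      · rw [← h']; exact h.2
      · rw [h']; exact_mod_cast (by omega)
    | (_ :: _ :: _ :: _ :: _), h => exact h.elim
  have hPI : PI Dsat (colr (fun x => pre (Psat x) q) (chM Psat ⊤) (2 * q + 2))
      (nodes {x | x < (sl M q).length} (chG q (sl M q)))
      (colr (fun x => (sl M q).getD x []) (chG q (sl M q)) (2 * q + 2))
      ((sfx l).image fun u => (u, u)) := by
    have hmem : ∀ x y, (x, y) ∈ ((sfx l).image fun u => (u, u)) ↔ x = y ∧ x ∈ sfx l := by
      intro x y
      simp only [Finset.mem_image, Prod.mk.injEq]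
      constructor
      · rintro ⟨u, hu, rfl, rfl⟩; exact ⟨rfl, hu⟩
      · rintro ⟨rfl, hu⟩; exact ⟨x, hu, rfl, rfl⟩
    constructor
    · rw [hmem]; exact ⟨rfl, mem_sfx.2 (Or.inl rfl)⟩
    · intro x y h
      obtain ⟨rfl, hx⟩ := (hmem _ _).1 h
      exact ⟨hD x hx, (hG x hx).1, (hG x hx).2⟩
    · intro x y x' y' h h'
      obtain ⟨rfl, -⟩ := (hmem _ _).1 h
      obtain ⟨rfl, -⟩ := (hmem _ _).1 h'
      rfl
    · intro n x y h
      obtain ⟨rfl, hx⟩ := (hmem _ _).1 h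
      exact ⟨n, x, rfl, (hmem _ _).2 ⟨rfl, sfx_tail hx⟩⟩
    · intro n x y h
      obtain ⟨rfl, hx⟩ := (hmem _ _).1 h
      exact ⟨n, y, rfl, (hmem _ _).2 ⟨rfl, sfx_tail hx⟩⟩
  have hcard : ((sfx l).image fun u => (u, u)).card ≤ (sfx l).card := Finset.card_image_le
  have hmemG : ∀ i, (a i).1 ∈ DL q (sl M q) := fun i => (mem_DL _ _ _).2 (hG _ (hla i)).1
  have hfin : ∀ (B : Set Node) (hB : B = nodes {x | x < (sl M q).length} (chG q (sl M q)))
      (h : ∀ i, (a i).1 ∈ B), φ.Realize a ↔ φ.Realize (fun i => (⟨(a i).1, h i⟩ : B)) := by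
    rintro _ rfl h
    exact EF ((good_sat q).match (good_fin M q)) nodes_tail nodes_tail nodes_len nodes_len φ _
      hPI (by omega) _ _ _ _ (fun i => Finset.mem_image.2 ⟨_, hla i, rfl⟩) (fun i => i.elim0)
  rw [hfin _ hset hmemG]
  exact ⟨fun h => ⟨hmemG, h⟩, fun ⟨_, h⟩ => h⟩

/-! ### Computability of the finite approximations -/

theorem computable_sl (m : ℕ) : Computable (sl m) := by
  have h1 : ∀ m, Computable fun q => (List.range m).map (fun x => pre (Psat x) q) := by
    intro m
    induction m with
    | zero => exact Computable.const _
    | succ m ih =>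
      have h2 : Computable fun q => pre (Psat m) q := by
        have h3 : Computable fun q : ℕ => Nat.rec (motive := fun _ => List Bool) []
            (fun n l => l ++ [Psat m n]) q := by
          refine Computable.nat_rec (f := fun q : ℕ => q) (g := fun _ => [])
            (h := fun _ (p : ℕ × List Bool) => p.2 ++ [Psat m p.1]) Computable.id
            (Computable.const _) ?_
          exact Computable.list_concat.comp (Computable.snd.comp Computable.snd)
            ((Psat_InC m).computable.comp (Computable.fst.comp Computable.snd))
        refine h3.of_eq fun q => ?_
        induction q with
        | zero => rfl
        | succ q ih => rw [pre_succ, ← ih]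
      refine (Computable.list_concat.comp ih h2).of_eq fun q => ?_
      simp [List.range_succ]
  have h2 : Primrec fun q => (lev q).flatMap fun σ => (List.range q).map fun _ => σ := by
    apply Primrec.list_flatMap prim_lev
    exact Primrec.list_map (Primrec.list_range.comp Primrec.fst) (Primrec.snd.comp Primrec.fst)
  exact Computable.list_append.comp (h1 m) h2.to_comp

theorem prim_chF : Primrec fun a : (ℕ × List (List Bool)) × ℕ × ℕ =>
    chF a.1.1 a.1.2 a.2.1 a.2.2 := by
  unfold chF
  have hj : Primrec fun a : (ℕ × List (List Bool)) × ℕ × ℕ => a.2.2 :=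
    Primrec.snd.comp Primrec.snd
  have hx : Primrec fun a : (ℕ × List (List Bool)) × ℕ × ℕ => a.2.1 :=
    Primrec.fst.comp Primrec.snd
  apply Primrec.ite
  · exact Primrec.eq.comp (Primrec.nat_mod.comp hj (Primrec.const 2)) (Primrec.const 0)
  · apply Primrec.nat_add.comp _ (Primrec.const 2)
    apply Primrec.nat_add.comp hj
    apply prim_toNat.comp
    apply (Primrec.list_getD false).comp
    · exact (Primrec.list_getD []).comp (Primrec.snd.comp Primrec.fst) hx
    · exact Primrec.nat_div.comp hj (Primrec.const 2)
  · exact Primrec.nat_add.comp (Primrec.nat_mul.comp (Primrec.const 2)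
      (Primrec.fst.comp Primrec.fst)) (Primrec.const 2)

theorem prim_DL : Primrec₂ DL := by
  unfold DL
  apply Primrec.list_cons.comp (Primrec.const _)
  apply Primrec.list_flatMap (Primrec.list_range.comp (Primrec.list_length.comp Primrec.snd))
  apply Primrec.list_cons.comp (Primrec.list_cons.comp Primrec.snd (Primrec.const _))
  apply Primrec.list_flatMap
  · exact Primrec.list_range.comp (Primrec.nat_mul.comp (Primrec.const 2)
      (Primrec.fst.comp Primrec.fst))
  have hjx : Primrec fun a : ((ℕ × List (List Bool)) × ℕ) × ℕ => [a.2, a.1.2] :=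
    Primrec.list_cons.comp Primrec.snd
      (Primrec.list_cons.comp (Primrec.snd.comp Primrec.fst) (Primrec.const _))
  apply Primrec.list_cons.comp hjx
  apply Primrec.list_map
  · apply Primrec.list_range.comp
    exact prim_chF.comp ((Primrec.fst.comp Primrec.fst).pair
      ((Primrec.snd.comp Primrec.fst).pair Primrec.snd))
  · exact Primrec.list_cons.comp Primrec.snd (hjx.comp Primrec.fst)

end

section

/-! ### Evaluating formulas in finite graphs -/

theorem prim_filter {α β : Type} [Primcodable α] [Primcodable β] {f : α → List β}
    {p : α → β → Prop} [∀ a b, Decidable (p a b)] (hf : Primrec f) (hp : PrimrecRel p) :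
    Primrec fun a => (f a).filter fun b => decide (p a b) := by
  have h : Primrec fun a => (f a).filterMap fun b => if p a b then some b else none :=
    Primrec.listFilterMap hf
      (Primrec.ite (PrimrecRel.comp hp Primrec.fst Primrec.snd)
        (Primrec.option_some.comp Primrec.snd) (Primrec.const none))
  refine h.of_eq fun a => ?_
  rw [← List.filterMap_eq_filter]
  congr 1
  funext b
  simp [Option.guard]

theorem prim_mem {β : Type} [Primcodable β] : PrimrecRel fun (b : β) (l : List β) => b ∈ l := by
  classical
  have h : PrimrecRel fun (l : List β) (b : β) => ∃ a ∈ l, a = b :=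
    (PrimrecRel.exists_mem_list (R := fun a b : β => a = b) Primrec.eq)
  refine (h.comp Primrec.snd Primrec.fst).of_eq fun x => ?_
  simp

theorem prim_adjN : PrimrecRel adjN := by
  unfold adjN
  have ht : ∀ {γ : Type} [Primcodable γ] {f : γ → Node}, Primrec f →
      Primrec fun c => (f c).tail := fun hf => Primrec.list_tail.comp hf
  apply PrimrecPred.or
  · exact (PrimrecPred.not (Primrec.eq.comp Primrec.snd (Primrec.const _))).and
      (Primrec.eq.comp (ht Primrec.snd) Primrec.fst)
  · exact (PrimrecPred.not (Primrec.eq.comp Primrec.fst (Primrec.const _))).and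
      (Primrec.eq.comp (ht Primrec.fst) Primrec.snd)

/-- All `k`-tuples. -/
def EE (D : List Node) : ℕ → List (List Node)
  | 0 => [ [] ]
  | k + 1 => (EE D k).flatMap fun e => D.map fun u => e ++ [u]

theorem prim_EE : Primrec₂ EE := by
  have h : Primrec₂ fun (D : List Node) (k : ℕ) => Nat.rec (motive := fun _ => List (List Node))
      [ [] ] (fun _ L => L.flatMap fun e => D.map fun u => e ++ [u]) k := by
    refine Primrec.nat_rec (f := fun _ : List Node => [ [] ])
      (g := fun D (p : ℕ × List (List Node)) => p.2.flatMap fun e => D.map fun u => e ++ [u])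
      (Primrec.const _) ?_
    refine Primrec.list_flatMap (Primrec.snd.comp Primrec.snd) ?_
    refine Primrec.list_map (Primrec.fst.comp Primrec.fst) ?_
    exact Primrec.list_concat.comp (Primrec.snd.comp Primrec.fst) Primrec.snd
  refine h.of_eq fun D k => ?_
  induction k with
  | zero => rfl
  | succ k ih => simp only [EE, ← ih]

theorem mem_EE {D : List Node} {k : ℕ} (w : Fin k → ({u | u ∈ D} : Set Node)) :
    (List.ofFn fun i => (w i).1) ∈ EE D k := by
  induction k with
  | zero => simp [EE]
  | succ k ih =>
    rw [List.ofFn_succ', List.concat_eq_append]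
    simp only [EE, List.mem_flatMap, List.mem_map]
    exact ⟨_, ih (fun i => w i.castSucc), _, (w (Fin.last k)).2, rfl⟩

/-- Code of a variable token. -/
def tk (k s : ℕ) : ℕ := 2 * Nat.pair k (Nat.pair (2 * s) 0 + 1)

/-- Decoding a variable token. -/
def dec (x : ℕ) : ℕ := ((x / 2).unpair.2 - 1).unpair.1 / 2

theorem dec_tk (k s : ℕ) : dec (tk k s) = s := by
  unfold dec tk
  rw [Nat.mul_div_cancel_left _ (by norm_num), Nat.unpair_pair]
  simp

/-- Valid variable tokens. -/
def vald (n k x : ℕ) : Prop :=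
  tk k (dec x) = x ∧ ((dec x % 2 = 0 ∧ dec x / 2 < n) ∨ (dec x % 2 = 1 ∧ dec x / 2 < k))

/-- Value of a variable token. -/
def vv (vl e : List Node) (x : ℕ) : Node :=
  if dec x % 2 = 0 then vl.getD (dec x / 2) [] else e.getD (dec x / 2) []

theorem prim_tk : Primrec₂ tk := by
  unfold tk
  apply Primrec.nat_mul.comp (Primrec.const 2)
  apply Primrec₂.natPair.comp Primrec.fst
  apply Primrec.succ.comp
  exact Primrec₂.natPair.comp (Primrec.nat_mul.comp (Primrec.const 2) Primrec.snd)
    (Primrec.const 0)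

theorem prim_dec : Primrec dec := by
  unfold dec
  refine Primrec.nat_div.comp ?_ (Primrec.const 2)
  apply Primrec.fst.comp
  apply Primrec.unpair.comp
  apply Primrec.pred.comp
  apply Primrec.snd.comp
  apply Primrec.unpair.comp
  exact Primrec.nat_div.comp Primrec.id (Primrec.const 2)

theorem prim_vald {γ : Type} [Primcodable γ] {f g h : γ → ℕ} (hf : Primrec f) (hg : Primrec g)
    (hh : Primrec h) : PrimrecPred fun c => vald (f c) (g c) (h c) := by
  unfold vald
  have hd := prim_dec.comp hh
  have hm := Primrec.nat_mod.comp hd (Primrec.const 2)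
  have hv := Primrec.nat_div.comp hd (Primrec.const 2)
  refine (Primrec.eq.comp (prim_tk.comp hg hd) hh).and (PrimrecPred.or ?_ ?_)
  · exact (Primrec.eq.comp hm (Primrec.const 0)).and (Primrec.nat_lt.comp hv hf)
  · exact (Primrec.eq.comp hm (Primrec.const 1)).and (Primrec.nat_lt.comp hv hg)

theorem prim_vv {γ : Type} [Primcodable γ] {f g : γ → List Node} {h : γ → ℕ} (hf : Primrec f)
    (hg : Primrec g) (hh : Primrec h) : Primrec fun c => vv (f c) (g c) (h c) := by
  unfold vv
  have hd := prim_dec.comp hh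
  have hm := Primrec.nat_mod.comp hd (Primrec.const 2)
  have hv := Primrec.nat_div.comp hd (Primrec.const 2)
  exact Primrec.ite (Primrec.eq.comp hm (Primrec.const 0)) ((Primrec.list_getD []).comp hf hv)
    ((Primrec.list_getD []).comp hg hv)

/-- Parse results: length of the rest and the list of satisfying environments. -/
abbrev Ent := Option (ℕ × List (List Node))

/-- Parameters: number of levels, values of free variables, vertex list. -/
abbrev Par := ℕ × List Node × List Node

/-- Table lookup. -/
def getE (Rs : List (List Ent)) (i k : ℕ) : Ent := (Rs.getD i []).getD k none

open Classical in
/-- Entry for an implication. -/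
noncomputable def entImp (D : List Node) (k len : ℕ) (Rs : List (List Ent)) : Ent :=
  (getE Rs 0 k).bind fun p1 => (getE Rs (len - p1.1) k).bind fun p2 =>
    some (p2.1, (EE D k).filter fun e => decide (¬ e ∈ p1.2 ∨ e ∈ p2.2))

open Classical in
/-- Entry for a universal quantifier. -/
noncomputable def entAll (D : List Node) (k : ℕ) (Rs : List (List Ent)) : Ent :=
  (getE Rs 0 (k + 1)).bind fun p =>
    some (p.1, (EE D k).filter fun e => decide (∀ u ∈ D, e ++ [u] ∈ p.2))

open Classical in
/-- Entry for adjacency. -/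
noncomputable def entRel (vl D : List Node) (k : ℕ) (ts : List ℕ) : Ent :=
  if 3 ≤ ts.length ∧ ts.getD 0 0 = 4 * k + 3 ∧ vald vl.length k (ts.getD 1 0) ∧
      vald vl.length k (ts.getD 2 0) then
    some (ts.length - 3, (EE D k).filter fun e =>
      decide (adjN (vv vl e (ts.getD 1 0)) (vv vl e (ts.getD 2 0))))
  else none

open Classical in
/-- Entry for equality. -/
noncomputable def entEq (vl D : List Node) (k x : ℕ) (ts : List ℕ) : Ent :=
  if 1 ≤ ts.length ∧ vald vl.length k x ∧ vald vl.length k (ts.getD 0 0) then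
    some (ts.length - 1, (EE D k).filter fun e =>
      decide (vv vl e x = vv vl e (ts.getD 0 0)))
  else none

/-- The parse entry of `x :: ts` at level `k`. -/
noncomputable def ent (P : Par) (k x : ℕ) (ts : List ℕ) (Rs : List (List Ent)) : Ent :=
  if x = 3 then entImp P.2.2 k ts.length Rs
  else if x = 7 then entAll P.2.2 k Rs
  else if x = 4 * k + 11 then some (ts.length, [])
  else if x = 25 then entRel P.2.1 P.2.2 k ts
  else entEq P.2.1 P.2.2 k x ts

/-- Parse tables of all suffixes. -/
noncomputable def RR (P : Par) : List ℕ → List (List Ent)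
  | [] => []
  | x :: ts => ((List.range (P.1 + 1)).map fun k => ent P k x ts (RR P ts)) :: RR P ts

theorem prim_getE {γ : Type} [Primcodable γ] {f : γ → List (List Ent)} {g h : γ → ℕ}
    (hf : Primrec f) (hg : Primrec g) (hh : Primrec h) :
    Primrec fun c => getE (f c) (g c) (h c) :=
  (Primrec.list_getD none).comp ((Primrec.list_getD []).comp hf hg) hh

theorem prim_entImp {γ : Type} [Primcodable γ] {D : γ → List Node} {k len : γ → ℕ}
    {Rs : γ → List (List Ent)} (hD : Primrec D) (hk : Primrec k) (hl : Primrec len)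
    (hR : Primrec Rs) : Primrec fun c => entImp (D c) (k c) (len c) (Rs c) := by
  classical
  unfold entImp
  refine Primrec.option_bind (prim_getE hR (Primrec.const 0) hk) ?_
  refine Primrec.option_bind (prim_getE (hR.comp Primrec.fst)
    (Primrec.nat_sub.comp (hl.comp Primrec.fst) (Primrec.fst.comp Primrec.snd))
    (hk.comp Primrec.fst)) ?_
  refine Primrec.option_some.comp ((Primrec.fst.comp Primrec.snd).pair ?_)
  refine prim_filter (p := fun (c : (γ × (ℕ × List (List Node))) × (ℕ × List (List Node)))
    (e : List Node) => ¬ e ∈ c.1.2.2 ∨ e ∈ c.2.2)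
    (prim_EE.comp (hD.comp (Primrec.fst.comp Primrec.fst))
    (hk.comp (Primrec.fst.comp Primrec.fst))) ?_
  refine PrimrecPred.or (α := ((γ × (ℕ × List (List Node))) × (ℕ × List (List Node))) × List Node)
    (p := fun c => ¬ c.2 ∈ c.1.1.2.2) (q := fun c => c.2 ∈ c.1.2.2) ?_ ?_
  · exact PrimrecPred.not (prim_mem.comp Primrec.snd
      (Primrec.snd.comp (Primrec.snd.comp (Primrec.fst.comp Primrec.fst))))
  · exact prim_mem.comp Primrec.snd (Primrec.snd.comp (Primrec.snd.comp Primrec.fst))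

theorem prim_entAll {γ : Type} [Primcodable γ] {D : γ → List Node} {k : γ → ℕ}
    {Rs : γ → List (List Ent)} (hD : Primrec D) (hk : Primrec k)
    (hR : Primrec Rs) : Primrec fun c => entAll (D c) (k c) (Rs c) := by
  classical
  unfold entAll
  refine Primrec.option_bind (prim_getE hR (Primrec.const 0) (Primrec.succ.comp hk)) ?_
  refine Primrec.option_some.comp ((Primrec.fst.comp Primrec.snd).pair ?_)
  refine prim_filter (p := fun (c : γ × (ℕ × List (List Node))) (e : List Node) =>
    ∀ u ∈ D c.1, e ++ [u] ∈ c.2.2)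
    (prim_EE.comp (hD.comp Primrec.fst) (hk.comp Primrec.fst)) ?_
  have h : PrimrecRel fun (u : Node) (c : (γ × (ℕ × List (List Node))) × List Node) =>
      c.2 ++ [u] ∈ c.1.2.2 :=
    prim_mem.comp (Primrec.list_concat.comp (Primrec.snd.comp Primrec.snd) Primrec.fst)
      (Primrec.snd.comp (Primrec.snd.comp (Primrec.fst.comp Primrec.snd)))
  exact h.forall_mem_list.comp (hD.comp (Primrec.fst.comp Primrec.fst)) Primrec.id

theorem prim_entRel {γ : Type} [Primcodable γ] {vl D : γ → List Node} {k : γ → ℕ}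
    {ts : γ → List ℕ} (hv : Primrec vl) (hD : Primrec D) (hk : Primrec k)
    (ht : Primrec ts) : Primrec fun c => entRel (vl c) (D c) (k c) (ts c) := by
  classical
  unfold entRel
  have hg : ∀ i, Primrec fun c => (ts c).getD i 0 :=
    fun i => (Primrec.list_getD 0).comp ht (Primrec.const i)
  have hn := Primrec.list_length.comp hv
  have hl := Primrec.list_length.comp ht
  refine Primrec.ite ?_ ?_ (Primrec.const none)
  · refine (Primrec.nat_le.comp (Primrec.const 3) hl).and (PrimrecPred.and ?_
      ((prim_vald hn hk (hg 1)).and (prim_vald hn hk (hg 2))))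
    exact Primrec.eq.comp (hg 0) (Primrec.nat_add.comp
      (Primrec.nat_mul.comp (Primrec.const 4) hk) (Primrec.const 3))
  · refine Primrec.option_some.comp ((Primrec.nat_sub.comp hl (Primrec.const 3)).pair ?_)
    refine prim_filter (prim_EE.comp hD hk) ?_
    exact prim_adjN.comp
      (prim_vv (hv.comp Primrec.fst) Primrec.snd ((hg 1).comp Primrec.fst))
      (prim_vv (hv.comp Primrec.fst) Primrec.snd ((hg 2).comp Primrec.fst))

theorem prim_entEq {γ : Type} [Primcodable γ] {vl D : γ → List Node} {k x : γ → ℕ}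
    {ts : γ → List ℕ} (hv : Primrec vl) (hD : Primrec D) (hk : Primrec k) (hx : Primrec x)
    (ht : Primrec ts) : Primrec fun c => entEq (vl c) (D c) (k c) (x c) (ts c) := by
  classical
  unfold entEq
  have hg : ∀ i, Primrec fun c => (ts c).getD i 0 :=
    fun i => (Primrec.list_getD 0).comp ht (Primrec.const i)
  have hn := Primrec.list_length.comp hv
  have hl := Primrec.list_length.comp ht
  refine Primrec.ite ?_ ?_ (Primrec.const none)
  · exact (Primrec.nat_le.comp (Primrec.const 1) hl).and
      ((prim_vald hn hk hx).and (prim_vald hn hk (hg 0)))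
  · refine Primrec.option_some.comp ((Primrec.nat_sub.comp hl (Primrec.const 1)).pair ?_)
    refine prim_filter (p := fun c e => vv (vl c) e (x c) = vv (vl c) e ((ts c).getD 0 0))
      (prim_EE.comp hD hk) ?_
    exact Primrec.eq.comp
      (prim_vv (hv.comp Primrec.fst) Primrec.snd (hx.comp Primrec.fst))
      (prim_vv (hv.comp Primrec.fst) Primrec.snd ((hg 0).comp Primrec.fst))

theorem prim_ent {γ : Type} [Primcodable γ] {P : γ → Par} {k x : γ → ℕ}
    {ts : γ → List ℕ} {Rs : γ → List (List Ent)} (hP : Primrec P) (hk : Primrec k)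
    (hx : Primrec x) (ht : Primrec ts) (hR : Primrec Rs) :
    Primrec fun c => ent (P c) (k c) (x c) (ts c) (Rs c) := by
  unfold ent
  have hv := Primrec.fst.comp (Primrec.snd.comp hP)
  have hD := Primrec.snd.comp (Primrec.snd.comp hP)
  have hl := Primrec.list_length.comp ht
  refine Primrec.ite (Primrec.eq.comp hx (Primrec.const 3)) (prim_entImp hD hk hl hR) ?_
  refine Primrec.ite (Primrec.eq.comp hx (Primrec.const 7)) (prim_entAll hD hk hR) ?_
  refine Primrec.ite (Primrec.eq.comp hx (Primrec.nat_add.comp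
      (Primrec.nat_mul.comp (Primrec.const 4) hk) (Primrec.const 11)))
    (Primrec.option_some.comp (hl.pair (Primrec.const []))) ?_
  exact Primrec.ite (Primrec.eq.comp hx (Primrec.const 25)) (prim_entRel hv hD hk ht)
    (prim_entEq hv hD hk hx ht)

theorem prim_RR : Primrec₂ RR := by
  have h : Primrec₂ fun (P : Par) (l : List ℕ) => List.recOn (motive := fun _ => List (List Ent))
      l [] fun x ts IH =>
        ((List.range (P.1 + 1)).map fun k => ent P k x ts IH) :: IH := by
    refine Primrec.list_rec (f := fun p : Par × List ℕ => p.2) (g := fun _ => [])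
      (h := fun p (b : ℕ × List ℕ × List (List Ent)) =>
        ((List.range (p.1.1 + 1)).map fun k => ent p.1 k b.1 b.2.1 b.2.2) :: b.2.2)
      Primrec.snd (Primrec.const _) ?_
    refine Primrec.list_cons.comp ?_ (Primrec.snd.comp (Primrec.snd.comp Primrec.snd))
    refine Primrec.list_map (Primrec.list_range.comp (Primrec.succ.comp
      (Primrec.fst.comp (Primrec.fst.comp Primrec.fst)))) ?_
    exact prim_ent (Primrec.fst.comp (Primrec.fst.comp Primrec.fst)) Primrec.snd
      (Primrec.fst.comp (Primrec.snd.comp Primrec.fst))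
      (Primrec.fst.comp (Primrec.snd.comp (Primrec.snd.comp Primrec.fst)))
      (Primrec.snd.comp (Primrec.snd.comp (Primrec.snd.comp Primrec.fst)))
  refine h.of_eq fun P l => ?_
  induction l with
  | nil => rfl
  | cons x ts ih => simp only [RR, ← ih]

/-- Entry of the whole list. -/
noncomputable def hd (P : Par) (l : List ℕ) (k : ℕ) : Ent := getE (RR P l) 0 k

theorem getE_RR (P : Par) (l : List ℕ) (i k : ℕ) : getE (RR P l) i k = hd P (l.drop i) k := by
  induction l generalizing i with
  | nil => simp [hd, RR, getE]
  | cons x ts ih =>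
    cases i with
    | zero => rfl
    | succ i =>
      rw [List.drop_succ_cons, ← ih]
      simp [RR, getE]

theorem hd_nil (P : Par) (k : ℕ) : hd P [] k = none := by simp [hd, RR, getE]

theorem hd_cons (P : Par) (x : ℕ) (ts : List ℕ) (k : ℕ) (hk : k ≤ P.1) :
    hd P (x :: ts) k = ent P k x ts (RR P ts) := by
  have : k < P.1 + 1 := by omega
  simp [hd, RR, getE, List.getD, this]

theorem hd_big (P : Par) (l : List ℕ) (k : ℕ) (hk : P.1 < k) : hd P l k = none := by
  cases l with
  | nil => exact hd_nil _ _
  | cons x ts =>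
    have : ¬ k < P.1 + 1 := by omega
    simp [hd, RR, getE, List.getD, this]

end

section

/-! ### Correctness of the evaluator -/

/-- Token list of a formula. -/
def toks {α : Type} [Encodable α] {k : ℕ} (φ : FirstOrder.Language.graph.BoundedFormula α k) :
    List ℕ := φ.listEncode.map Encodable.encode

theorem encode_list_map {β : Type} [Encodable β] (l : List β) :
    Encodable.encode (l.map Encodable.encode) = Encodable.encode l := by
  induction l with
  | nil => rfl
  | cons a l ih =>
    rw [List.map_cons, Encodable.encode_list_cons, Encodable.encode_list_cons, ih]
    rfl

theorem fmlCode_eq {α : Type} [Encodable α] {k : ℕ}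
    (φ : FirstOrder.Language.graph.BoundedFormula α k) :
    fmlCode φ = Encodable.encode (toks φ) := (encode_list_map _).symm

theorem toks_falsum {α : Type} [Encodable α] (k : ℕ) :
    toks (BoundedFormula.falsum : FirstOrder.Language.graph.BoundedFormula α k) =
      [4 * k + 11] := by
  show [2 * (2 * (k + 2) + 1) + 1] = _
  congr 1
  omega

theorem toks_imp {α : Type} [Encodable α] {k : ℕ}
    (φ ψ : FirstOrder.Language.graph.BoundedFormula α k) :
    toks (φ.imp ψ) = 3 :: (toks φ ++ toks ψ) := by
  show List.map _ ((_ :: φ.listEncode) ++ ψ.listEncode) = _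
  simp only [List.map_append, List.map_cons]
  rfl

theorem toks_all {α : Type} [Encodable α] {k : ℕ}
    (φ : FirstOrder.Language.graph.BoundedFormula α (k + 1)) :
    toks φ.all = 7 :: toks φ := by
  show List.map _ (_ :: φ.listEncode) = _
  simp only [List.map_cons]
  rfl

theorem toks_equal {α : Type} [Encodable α] {k : ℕ} (s1 s2 : α ⊕ Fin k) :
    toks (BoundedFormula.equal (L := FirstOrder.Language.graph) (Term.var s1) (Term.var s2)) =
      [tk k (Encodable.encode s1), tk k (Encodable.encode s2)] := rfl

theorem toks_rel {α : Type} [Encodable α] {k : ℕ}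
    (ts : Fin 2 → FirstOrder.Language.graph.Term (α ⊕ Fin k)) (s1 s2 : α ⊕ Fin k)
    (h1 : ts 0 = Term.var s1) (h2 : ts 1 = Term.var s2) :
    toks (BoundedFormula.rel (L := FirstOrder.Language.graph) (graphRel.adj) ts) =
      [25, 4 * k + 3, tk k (Encodable.encode s1), tk k (Encodable.encode s2)] := by
  have : ts = ![Term.var s1, Term.var s2] := by
    funext i
    refine Fin.cases ?_ (fun j => ?_) i
    · exact h1
    · obtain rfl : j = 0 := Subsingleton.elim _ _
      exact h2
  subst this
  show [25, 2 * (2 * k + 1) + 1, tk k (Encodable.encode s1), tk k (Encodable.encode s2)] = _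
  congr 2
  omega

theorem toks_pos {α : Type} [Encodable α] {k : ℕ}
    (φ : FirstOrder.Language.graph.BoundedFormula α k) : qr φ + 1 ≤ (toks φ).length := by
  induction φ with
  | falsum => simp [toks_falsum, qr]
  | equal t1 t2 =>
    obtain ⟨s1, rfl⟩ := term_var t1
    obtain ⟨s2, rfl⟩ := term_var t2
    simp [toks_equal, qr]
  | rel R ts =>
    cases R
    obtain ⟨s1, h1⟩ := term_var (ts 0)
    obtain ⟨s2, h2⟩ := term_var (ts 1)
    simp [toks_rel ts s1 s2 h1 h2, qr]
  | imp φ ψ ih1 ih2 => simp only [toks_imp, qr, List.length_cons, List.length_append]; omega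
  | all φ ih => simp only [toks_all, qr, List.length_cons]; omega

theorem length_le_encode (l : List ℕ) : l.length ≤ Encodable.encode l := by
  induction l with
  | nil => simp
  | cons a l ih =>
    rw [Encodable.encode_list_cons, List.length_cons]
    have := Nat.right_le_pair (Encodable.encode a) (Encodable.encode l)
    omega

theorem qr_le_fmlCode {α : Type} [Encodable α] {k : ℕ}
    (φ : FirstOrder.Language.graph.BoundedFormula α k) : qr φ ≤ fmlCode φ := by
  rw [fmlCode_eq]
  have h1 := toks_pos φ
  have h2 := length_le_encode (toks φ)
  omega

theorem enc_inl {α : Type} [Encodable α] {k : ℕ} (a : α) :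
    Encodable.encode (Sum.inl a : α ⊕ Fin k) = 2 * Encodable.encode a := rfl

theorem enc_inr {α : Type} [Encodable α] {k : ℕ} (i : Fin k) :
    Encodable.encode (Sum.inr i : α ⊕ Fin k) = 2 * i.val + 1 := rfl

theorem vald_enc {α : Type} [Encodable α] {k n : ℕ} (hn : ∀ i, i < n ↔ ∃ a : α, Encodable.encode a = i)
    (s : α ⊕ Fin k) : vald n k (tk k (Encodable.encode s)) := by
  unfold vald
  rw [dec_tk]
  refine ⟨rfl, ?_⟩
  cases s with
  | inl a =>
    left
    rw [enc_inl]
    have := (hn (Encodable.encode a)).2 ⟨a, rfl⟩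
    omega
  | inr i =>
    right
    rw [enc_inr]
    have := i.2
    omega

theorem enc_of_vald {α : Type} [Encodable α] {k n x : ℕ}
    (hn : ∀ i, i < n ↔ ∃ a : α, Encodable.encode a = i)
    (h : vald n k x) : ∃ s : α ⊕ Fin k, x = tk k (Encodable.encode s) := by
  obtain ⟨h1, ⟨h2, h3⟩ | ⟨h2, h3⟩⟩ := h
  · obtain ⟨a, ha⟩ := (hn _).1 h3
    refine ⟨Sum.inl a, ?_⟩
    rw [enc_inl, ha, show 2 * (dec x / 2) = dec x by omega, h1]
  · refine ⟨Sum.inr ⟨dec x / 2, h3⟩, ?_⟩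
    rw [enc_inr, show 2 * (dec x / 2) + 1 = dec x by omega, h1]

theorem vv_enc {α : Type} [Encodable α] {k : ℕ} {D vl : List Node}
    (v : α → ({u | u ∈ D} : Set Node)) (hv : ∀ a, vl.getD (Encodable.encode a) [] = (v a).1)
    (w : Fin k → ({u | u ∈ D} : Set Node)) (s : α ⊕ Fin k) :
    vv vl (List.ofFn fun i => (w i).1) (tk k (Encodable.encode s)) = (Sum.elim v w s).1 := by
  unfold vv
  rw [dec_tk]
  cases s with
  | inl a =>
    rw [enc_inl, if_pos (by omega), Nat.mul_div_cancel_left _ (by norm_num), hv]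
    rfl
  | inr i =>
    rw [enc_inr, if_neg (by omega), show (2 * i.val + 1) / 2 = i.val by omega]
    simp [List.getD]

theorem tk_even (k s : ℕ) : tk k s % 2 = 0 := by unfold tk; omega

theorem hd_complete {α : Type} [Encodable α] {K : ℕ} {D vl : List Node}
    (hn : ∀ i, i < vl.length ↔ ∃ a : α, Encodable.encode a = i)
    (v : α → ({u | u ∈ D} : Set Node)) (hv : ∀ a, vl.getD (Encodable.encode a) [] = (v a).1)
    {k : ℕ} (φ : FirstOrder.Language.graph.BoundedFormula α k) : ∀ ts,
    k + (toks φ).length ≤ K → ∃ tbl, hd (K, vl, D) (toks φ ++ ts) k = some (ts.length, tbl) ∧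
      ∀ w : Fin k → ({u | u ∈ D} : Set Node),
        (List.ofFn fun i => (w i).1) ∈ tbl ↔ φ.Realize v w := by
  induction φ with
  | @falsum k =>
    intro ts hK
    refine ⟨[], ?_, fun w => by simp [BoundedFormula.Realize]⟩
    rw [toks_falsum, List.singleton_append, hd_cons _ _ _ _ (by simp at hK ⊢; omega)]
    unfold ent
    rw [if_neg (by omega), if_neg (by omega), if_pos rfl]
  | @equal k t1 t2 =>
    intro ts hK
    obtain ⟨s1, rfl⟩ := term_var t1
    obtain ⟨s2, rfl⟩ := term_var t2
    have e1 := tk_even k (Encodable.encode s1)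
    rw [toks_equal, List.cons_append, List.singleton_append,
      hd_cons _ _ _ _ (by simp at hK ⊢; omega)]
    unfold ent entEq
    rw [if_neg (by omega), if_neg (by omega), if_neg (by omega), if_neg (by omega), if_pos]
    · refine ⟨_, rfl, fun w => ?_⟩
      simp only [List.getD_cons_zero, List.mem_filter, decide_eq_true_eq]
      rw [vv_enc v hv, vv_enc v hv]
      simp only [mem_EE, true_and]
      rw [← Subtype.ext_iff]
      rfl
    · exact ⟨by simp, vald_enc hn s1, vald_enc hn s2⟩
  | @rel k l R us =>
    intro ts hK
    cases R
    obtain ⟨s1, h1⟩ := term_var (us 0)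
    obtain ⟨s2, h2⟩ := term_var (us 1)
    rw [toks_rel us s1 s2 h1 h2] at hK ⊢
    rw [List.cons_append, hd_cons _ _ _ _ (by simp at hK ⊢; omega)]
    unfold ent entRel
    rw [if_neg (by omega), if_neg (by omega), if_neg (by omega), if_pos rfl, if_pos]
    · refine ⟨_, rfl, fun w => ?_⟩
      simp only [List.cons_append, List.getD_cons_zero, List.getD_cons_succ, List.mem_filter,
        decide_eq_true_eq]
      rw [vv_enc v hv, vv_enc v hv]
      simp only [mem_EE, true_and]
      show _ ↔ adjN ((us 0).realize (Sum.elim v w)).1 ((us 1).realize (Sum.elim v w)).1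
      rw [h1, h2]
      rfl
    · exact ⟨by simp, rfl, vald_enc hn s1, vald_enc hn s2⟩
  | @imp k φ ψ ih1 ih2 =>
    intro ts hK
    rw [toks_imp] at hK ⊢
    simp only [List.length_cons, List.length_append] at hK
    obtain ⟨t1, h1, g1⟩ := ih1 (toks ψ ++ ts) (by omega)
    obtain ⟨t2, h2, g2⟩ := ih2 ts (by omega)
    rw [List.cons_append, hd_cons _ _ _ _ (by simp at hK ⊢; omega)]
    unfold ent entImp
    rw [if_pos rfl, getE_RR, List.drop_zero, List.append_assoc, h1]
    simp only [Option.bind_some]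
    rw [getE_RR, show (toks φ ++ (toks ψ ++ ts)).length - (toks ψ ++ ts).length =
      (toks φ).length by simp, List.drop_left, h2]
    refine ⟨_, rfl, fun w => ?_⟩
    simp only [List.mem_filter, decide_eq_true_eq, mem_EE, true_and, g1, g2,
      BoundedFormula.realize_imp]
    tauto
  | @all k φ ih =>
    intro ts hK
    rw [toks_all] at hK ⊢
    simp only [List.length_cons] at hK
    obtain ⟨t1, h1, g1⟩ := ih ts (by omega)
    rw [List.cons_append, hd_cons _ _ _ _ (by simp at hK ⊢; omega)]
    unfold ent entAll
    rw [if_neg (by omega), if_pos rfl, getE_RR, List.drop_zero, h1]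
    refine ⟨_, rfl, fun w => ?_⟩
    simp only [List.mem_filter, decide_eq_true_eq, mem_EE, true_and, BoundedFormula.realize_all]
    have key : ∀ u : ({u | u ∈ D} : Set Node), (List.ofFn fun i => (w i).1) ++ [u.1] ∈ t1 ↔
        φ.Realize v (Fin.snoc w u) := by
      intro u
      rw [← g1, List.ofFn_succ', List.concat_eq_append]
      simp
    constructor
    · intro h u
      exact (key u).1 (h u.1 u.2)
    · intro h u hu
      exact (key ⟨u, hu⟩).2 (h _)

theorem hd_sound {α : Type} [Encodable α] {K : ℕ} {D vl : List Node}
    (hn : ∀ i, i < vl.length ↔ ∃ a : α, Encodable.encode a = i) : ∀ (N : ℕ) (l : List ℕ),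
    l.length ≤ N → ∀ k r tbl, hd (K, vl, D) l k = some (r, tbl) →
    ∃ (φ : FirstOrder.Language.graph.BoundedFormula α k) (ts : List ℕ),
      l = toks φ ++ ts ∧ ts.length = r := by
  intro N
  induction N with
  | zero =>
    intro l hl k r tbl h
    obtain rfl : l = [] := by
      rw [← List.length_eq_zero_iff]; omega
    rw [hd_nil] at h
    cases h
  | succ N ih =>
    intro l hl k r tbl h
    cases l with
    | nil => rw [hd_nil] at h; cases h
    | cons x ts =>
      simp only [List.length_cons] at hl
      by_cases hk : k ≤ K
      swap
      · rw [hd_big _ _ _ (by simpa using hk)] at h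
        cases h
      rw [hd_cons _ _ _ _ hk] at h
      unfold ent at h
      split_ifs at h with h1 h2 h3 h4
      · unfold entImp at h
        rw [Option.bind_eq_some_iff] at h
        obtain ⟨p1, hp1, h⟩ := h
        rw [Option.bind_eq_some_iff] at h
        obtain ⟨p2, hp2, h⟩ := h
        rw [getE_RR] at hp1 hp2
        rw [List.drop_zero] at hp1
        obtain ⟨φ, t1, e1, f1⟩ := ih ts (by omega) k p1.1 p1.2 hp1
        obtain ⟨ψ, t2, e2, f2⟩ := ih (ts.drop (ts.length - p1.1))
          (by rw [List.length_drop]; omega) k p2.1 p2.2 hp2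
        have e3 : ts.drop (ts.length - p1.1) = t1 := by
          rw [e1, ← f1]
          simp
        rw [e3] at e2
        cases h
        refine ⟨φ.imp ψ, t2, ?_, f2⟩
        rw [toks_imp, h1, e1, e2]
        simp
      · unfold entAll at h
        rw [Option.bind_eq_some_iff] at h
        obtain ⟨p1, hp1, h⟩ := h
        rw [getE_RR, List.drop_zero] at hp1
        obtain ⟨φ, t1, e1, f1⟩ := ih ts (by omega) (k + 1) p1.1 p1.2 hp1
        cases h
        refine ⟨φ.all, t1, ?_, f1⟩
        rw [toks_all, h2, e1]
        simp
      · cases h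
        refine ⟨BoundedFormula.falsum, ts, ?_, rfl⟩
        rw [toks_falsum, h3]
        simp
      · unfold entRel at h
        split_ifs at h with hc
        obtain ⟨c1, c2, c3, c4⟩ := hc
        match ts, c1 with
        | y0 :: y1 :: y2 :: ts', _ =>
          simp only [List.getD_cons_zero, List.getD_cons_succ] at c2 c3 c4
          obtain ⟨s1, rfl⟩ := enc_of_vald hn c3
          obtain ⟨s2, rfl⟩ := enc_of_vald hn c4
          cases h
          refine ⟨BoundedFormula.rel (L := FirstOrder.Language.graph) graphRel.adj
            ![Term.var s1, Term.var s2], ts', ?_, by simp⟩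
          rw [toks_rel _ s1 s2 rfl rfl, h4, c2]
          simp
      · unfold entEq at h
        split_ifs at h with hc
        obtain ⟨c1, c2, c3⟩ := hc
        match ts, c1 with
        | y0 :: ts', _ =>
          simp only [List.getD_cons_zero] at c3
          obtain ⟨s1, rfl⟩ := enc_of_vald hn c2
          obtain ⟨s2, rfl⟩ := enc_of_vald hn c3
          cases h
          refine ⟨BoundedFormula.equal (Term.var s1) (Term.var s2), ts', ?_, by simp⟩
          rw [toks_equal]
          simp

theorem eval_computable {α : Type} [Encodable α] {D : ℕ → List Node} (hD : Computable D)
    {vl : List Node} (hn : ∀ i, i < vl.length ↔ ∃ a : α, Encodable.encode a = i)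
    (v : ∀ c, α → ({u | u ∈ D c} : Set Node))
    (hv : ∀ c a, vl.getD (Encodable.encode a) [] = (v c a).1)
    (Pr : FirstOrder.Language.graph.Formula α → Prop)
    (hP : ∀ φ, Pr φ ↔ φ.Realize (v (fmlCode φ))) :
    ComputablePred fun c : ℕ => ∃ φ, fmlCode φ = c ∧ Pr φ := by
  classical
  let tl : ℕ → List ℕ := fun c => Denumerable.ofNat (List ℕ) c
  have htl : Computable tl := Computable.ofNat _
  have h1 : Computable fun c => hd ((tl c).length, vl, D c) (tl c) 0 := by
    have h2 : Primrec₂ fun (P : Par) (l : List ℕ) => hd P l 0 :=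
      prim_getE prim_RR (Primrec.const 0) (Primrec.const 0)
    exact h2.to_comp.comp (((Primrec.list_length.to_comp).comp htl).pair
      ((Computable.const vl).pair hD)) htl
  have h3 : PrimrecPred fun e : Ent => ∃ p ∈ e.toList, p.1 = 0 ∧ ([] : List Node) ∈ p.2 := by
    have h4 : PrimrecPred fun p : ℕ × List (List Node) => p.1 = 0 ∧ ([] : List Node) ∈ p.2 :=
      (Primrec.eq.comp Primrec.fst (Primrec.const 0)).and
        (prim_mem.comp (Primrec.const _) Primrec.snd)
    exact h4.exists_mem_list.comp Primrec.optionToList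
  have h5 : ComputablePred fun c => ∃ p ∈ (hd ((tl c).length, vl, D c) (tl c) 0).toList,
      p.1 = 0 ∧ ([] : List Node) ∈ p.2 := by
    obtain ⟨_, h6⟩ := h3
    exact ⟨fun c => inferInstance, h6.to_comp.comp h1⟩
  refine h5.of_eq fun c => ?_
  constructor
  · rintro ⟨⟨r, tbl⟩, hp, h0, hm⟩
    simp only at h0 hm
    subst h0
    rw [Option.mem_toList] at hp
    obtain ⟨φ, ts, e1, e2⟩ := hd_sound (α := α) hn _ _ le_rfl _ _ _ hp
    rw [List.length_eq_zero_iff] at e2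
    subst e2
    have hc : fmlCode φ = c := by
      rw [fmlCode_eq, ← List.append_nil (toks φ), ← e1]
      exact Denumerable.encode_ofNat c
    refine ⟨φ, hc, ?_⟩
    rw [hP, hc]
    obtain ⟨tbl', e3, e4⟩ := hd_complete (K := (tl c).length) hn (v c) (hv c) φ []
      (by rw [e1]; simp)
    rw [← e1] at e3
    have e5 : tbl = tbl' := by
      have := hp.symm.trans e3
      simpa using this
    subst e5
    exact (e4 default).1 (by simpa using hm)
  · rintro ⟨φ, hc, hφ⟩
    have e1 : tl c = toks φ := by
      show Denumerable.ofNat _ c = _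
      rw [← hc, fmlCode_eq, Denumerable.ofNat_encode]
    obtain ⟨tbl', e3, e4⟩ := hd_complete (K := (tl c).length) hn (v c) (hv c) φ []
      (by rw [e1]; simp)
    rw [List.append_nil, ← e1] at e3
    refine ⟨_, Option.mem_toList.2 e3, rfl, ?_⟩
    have := (e4 default).2 (by rw [hP, hc] at hφ; exact hφ)
    simpa using this

/-- The type of a tuple in the saturated model is decidable. -/
theorem sat_decidable {α : Type} [Finite α] [Encodable α] (n : ℕ)
    (hn : ∀ i, i < n ↔ ∃ a : α, Encodable.encode a = i) (a : α → Dsat) :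
    ComputablePred fun c : ℕ => ∃ φ : FirstOrder.Language.graph.Formula α,
      fmlCode φ = c ∧ φ.Realize a := by
  classical
  obtain ⟨m, N, h⟩ := sat_to_fin a
  let qq : ℕ → ℕ := fun c => N + 3 * c
  have hqq : Primrec qq := Primrec.nat_add.comp (Primrec.const N)
    (Primrec.nat_mul.comp (Primrec.const 3) Primrec.id)
  have hD : Computable fun c => DL (qq c) (sl m (qq c)) :=
    prim_DL.to_comp.comp hqq.to_comp ((computable_sl m).comp hqq.to_comp)
  have hmem : ∀ c i, (a i).1 ∈ DL (qq c) (sl m (qq c)) := by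
    intro c
    obtain ⟨h', -⟩ := (h (qq c) (BoundedFormula.falsum.imp BoundedFormula.falsum)
      (by simp [qr, qq])).1 (by simp [Formula.Realize, BoundedFormula.Realize])
    exact h'
  choose g hg using fun i : Fin n => (hn i).1 i.2
  refine eval_computable (vl := List.ofFn fun i : Fin n => (a (g i)).1) hD
    (by simpa using hn) (fun c i => ⟨(a i).1, hmem c i⟩) ?_ _ ?_
  · intro c i
    have hi : Encodable.encode i < n := (hn _).2 ⟨i, rfl⟩
    have : g ⟨Encodable.encode i, hi⟩ = i := Encodable.encode_injective (hg _)
    simp [List.getD, hi, this]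
  · intro φ
    rw [h (qq (fmlCode φ)) φ (by have := qr_le_fmlCode φ; simp only [qq]; omega)]
    exact ⟨fun ⟨_, h⟩ => h, fun h => ⟨_, h⟩⟩

end

section

/-! ### Limits of tuples along an ultrafilter -/

/-- Colours in the saturated model. -/
noncomputable def csat (q : ℕ) : Node → Col :=
  colr (fun x => pre (Psat x) q) (chM Psat ⊤) (2 * q + 2)

theorem Dsat_tail : ∀ n u, n :: u ∈ Dsat → u ∈ Dsat := nodes_tail

theorem Dsat_len : ∀ u ∈ Dsat, u.length ≤ 3 := nodes_len

theorem csat_len {q : ℕ} {u v : Node} (hu : u ∈ Dsat) (hv : v ∈ Dsat)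
    (h : csat q u = csat q v) : u.length = v.length := by
  have h1 := Dsat_len u hu
  have h2 := Dsat_len v hv
  match u, v with
  | [], [] => rfl
  | [], [_] => simp [csat, colr] at h
  | [], [_, _] => simp [csat, colr] at h
  | [], [_, _, _] => simp [csat, colr] at h
  | [_], [] => simp [csat, colr] at h
  | [_], [_] => rfl
  | [_], [_, _] => simp [csat, colr] at h
  | [_], [_, _, _] => simp [csat, colr] at h
  | [_, _], [] => simp [csat, colr] at h
  | [_, _], [_] => simp [csat, colr] at h
  | [_, _], [_, _] => rfl
  | [_, _], [_, _, _] => simp [csat, colr] at h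
  | [_, _, _], [] => simp [csat, colr] at h
  | [_, _, _], [_] => simp [csat, colr] at h
  | [_, _, _], [_, _] => simp [csat, colr] at h
  | [_, _, _], [_, _, _] => rfl
  | (_ :: _ :: _ :: _ :: _), _ => simp at h1; omega
  | _, (_ :: _ :: _ :: _ :: _) => simp at h2; omega

variable {ι : Type} {U : Ultrafilter ι}

open Filter

/-- A limit partial isomorphism. -/
structure LPI (U : Ultrafilter ι) (S : Finset ((ι → Node) × Node)) : Prop where
  nil : ((fun _ => []), []) ∈ S
  mem : ∀ f b, (f, b) ∈ S → b ∈ Dsat ∧ (∀ s, f s ∈ Dsat) ∧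
    ∀ q, ∀ᶠ s in (U : Filter ι), csat q (f s) = csat q b
  inj : ∀ f b f' b', (f, b) ∈ S → (f', b') ∈ S →
    (b = b' ↔ ∀ᶠ s in (U : Filter ι), f s = f' s)
  par : ∀ m f b, (f, m :: b) ∈ S →
    ∃ f', (f', b) ∈ S ∧ ∀ᶠ s in (U : Filter ι), f' s = (f s).tail

open Classical in
/-- The finite partial map at `s`. -/
noncomputable def slice (S : Finset ((ι → Node) × Node)) (s : ι) : Finset (Node × Node) :=
  S.image fun p => (p.1 s, p.2)

theorem mem_slice {S : Finset ((ι → Node) × Node)} {s : ι} {a b : Node} :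
    (a, b) ∈ slice S s ↔ ∃ f, (f, b) ∈ S ∧ f s = a := by
  simp only [slice, Finset.mem_image, Prod.exists, Prod.mk.injEq]
  constructor
  · rintro ⟨f, b', h, h1, rfl⟩; exact ⟨f, h, h1⟩
  · rintro ⟨f, h, h1⟩; exact ⟨f, b, h, h1, rfl⟩

theorem slice_card (S : Finset ((ι → Node) × Node)) (s : ι) : (slice S s).card ≤ S.card :=
  Finset.card_image_le

theorem LPI.toPI {S : Finset ((ι → Node) × Node)} (h : LPI U S) (q : ℕ) :
    ∀ᶠ s in (U : Filter ι), PI Dsat (csat q) Dsat (csat q) (slice S s) := by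
  have e1 : ∀ᶠ s in (U : Filter ι), ∀ p ∈ S, csat q (p.1 s) = csat q p.2 := by
    rw [Filter.eventually_all_finset]
    intro p hp
    exact (h.mem p.1 p.2 hp).2.2 q
  have e2 : ∀ᶠ s in (U : Filter ι), ∀ p ∈ S, ∀ p' ∈ S, (p.1 s = p'.1 s ↔ p.2 = p'.2) := by
    rw [Filter.eventually_all_finset]
    intro p hp
    rw [Filter.eventually_all_finset]
    intro p' hp'
    have hi := h.inj p.1 p.2 p'.1 p'.2 hp hp'
    by_cases hb : p.2 = p'.2
    · filter_upwards [hi.1 hb] with s hs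
      simp [hs, hb]
    · have : ∀ᶠ s in (U : Filter ι), ¬ p.1 s = p'.1 s := by
        rw [Ultrafilter.eventually_not]
        exact fun hh => hb (hi.2 hh)
      filter_upwards [this] with s hs
      simp [hs, hb]
  have e3 : ∀ᶠ s in (U : Filter ι), ∀ p ∈ S, ∀ m b, p.2 = m :: b →
      ∃ f', (f', b) ∈ S ∧ f' s = (p.1 s).tail := by
    rw [Filter.eventually_all_finset]
    rintro ⟨f, b0⟩ hp
    cases b0 with
    | nil => exact Filter.Eventually.of_forall fun s m b hb => by cases hb
    | cons m b =>
      obtain ⟨f', h1, h2⟩ := h.par m f b hp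
      filter_upwards [h2] with s hs m' b' hb
      obtain ⟨rfl, rfl⟩ := List.cons.inj hb
      exact ⟨f', h1, hs⟩
  filter_upwards [e1, e2, e3] with s h1 h2 h3
  have hlen : ∀ f b, (f, b) ∈ S → (f s).length = b.length := fun f b hp =>
    csat_len ((h.mem f b hp).2.1 s) (h.mem f b hp).1 (h1 _ hp)
  constructor
  · exact mem_slice.2 ⟨_, h.nil, rfl⟩
  · intro a b hab
    obtain ⟨f, hf, rfl⟩ := mem_slice.1 hab
    exact ⟨(h.mem _ _ hf).2.1 s, (h.mem _ _ hf).1, h1 _ hf⟩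
  · intro a b a' b' hab hab'
    obtain ⟨f, hf, rfl⟩ := mem_slice.1 hab
    obtain ⟨f', hf', rfl⟩ := mem_slice.1 hab'
    exact h2 _ hf _ hf'
  · intro n a b hab
    obtain ⟨f, hf, hfs⟩ := mem_slice.1 hab
    have hl := hlen _ _ hf
    cases b with
    | nil => rw [hfs] at hl; simp at hl
    | cons m b' =>
      obtain ⟨f', h4, h5⟩ := h3 _ hf m b' rfl
      exact ⟨m, b', rfl, mem_slice.2 ⟨f', h4, by simp [h5, hfs]⟩⟩
  · intro m a b hab
    obtain ⟨f, hf, hfs⟩ := mem_slice.1 hab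
    have hl := hlen _ _ hf
    obtain ⟨f', h4, h5⟩ := h3 _ hf m b rfl
    cases a with
    | nil => rw [hfs] at hl; simp at hl
    | cons n a' => exact ⟨n, a', rfl, mem_slice.2 ⟨f', h4, by simp [h5, hfs]⟩⟩

open Classical in
theorem LPI.insert {S : Finset ((ι → Node) × Node)} (h : LPI U S) {f g : ι → Node} {m : ℕ}
    {b : Node} (hg : (g, b) ∈ S) (hgf : ∀ᶠ s in (U : Filter ι), g s = (f s).tail)
    (hf : ∀ s, f s ∈ Dsat) (hb : m :: b ∈ Dsat)
    (hc : ∀ q, ∀ᶠ s in (U : Filter ι), csat q (f s) = csat q (m :: b))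
    (hn : ∀ f' b', (f', b') ∈ S → ¬ ∀ᶠ s in (U : Filter ι), f' s = f s)
    (hn' : ∀ f', (f', m :: b) ∉ S) : LPI U (Insert.insert (f, m :: b) S) := by
  have hsym : ∀ f' b', (f', b') ∈ S → ¬ ∀ᶠ s in (U : Filter ι), f s = f' s := fun f' b' h1 h2 =>
    hn f' b' h1 (by filter_upwards [h2] with s hs; exact hs.symm)
  constructor
  · exact Finset.mem_insert_of_mem h.nil
  · intro f' b' h1
    rcases Finset.mem_insert.1 h1 with h1 | h1
    · obtain ⟨rfl, rfl⟩ := Prod.mk.inj h1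
      exact ⟨hb, hf, hc⟩
    · exact h.mem _ _ h1
  · intro f1 b1 f2 b2 h1 h2
    rw [Finset.mem_insert] at h1 h2
    rcases h1 with h1 | h1 <;> rcases h2 with h2 | h2
    · obtain ⟨rfl, rfl⟩ := Prod.mk.inj h1
      obtain ⟨rfl, rfl⟩ := Prod.mk.inj h2
      simp
    · obtain ⟨rfl, rfl⟩ := Prod.mk.inj h1
      refine ⟨fun h3 => ?_, fun h3 => absurd h3 (hsym _ _ h2)⟩
      subst h3; exact absurd h2 (hn' _)
    · obtain ⟨rfl, rfl⟩ := Prod.mk.inj h2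
      refine ⟨fun h3 => ?_, fun h3 => absurd h3 (hn _ _ h1)⟩
      subst h3; exact absurd h1 (hn' _)
    · exact h.inj _ _ _ _ h1 h2
  · intro m' f' b' h1
    rcases Finset.mem_insert.1 h1 with h1 | h1
    · obtain ⟨rfl, h2⟩ := Prod.mk.inj h1
      obtain ⟨rfl, rfl⟩ := List.cons.inj h2
      exact ⟨g, Finset.mem_insert_of_mem hg, hgf⟩
    · obtain ⟨f2, h2, h3⟩ := h.par _ _ _ h1
      exact ⟨f2, Finset.mem_insert_of_mem h2, h3⟩

theorem LPI.fresh {S : Finset ((ι → Node) × Node)} (h : LPI U S) {f g : ι → Node}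
    {b : Node} (hg : (g, b) ∈ S) (hgf : ∀ᶠ s in (U : Filter ι), g s = (f s).tail)
    (hf : ∀ s, f s ∈ Dsat) (hne : ∀ᶠ s in (U : Filter ι), f s ≠ [])
    (hn : ∀ f' b', (f', b') ∈ S → ¬ ∀ᶠ s in (U : Filter ι), f' s = f s) (q : ℕ)
    (hq : S.card < q) : ∀ᶠ s in (U : Filter ι), ∃ m, m :: b ∈ Dsat ∧
      csat q (m :: b) = csat q (f s) ∧ ∀ f', (f', m :: b) ∉ S := by
  have e1 : ∀ᶠ s in (U : Filter ι), ∀ p ∈ S, ¬ p.1 s = f s := by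
    rw [Filter.eventually_all_finset]
    intro p hp
    rw [Ultrafilter.eventually_not]
    exact hn p.1 p.2 hp
  filter_upwards [h.toPI q, hgf, hne, e1] with s h1 h2 h3 h4
  obtain ⟨n, a, hfs⟩ := List.exists_cons_of_ne_nil h3
  rw [hfs] at h2
  have hM : Match q Dsat (csat q) Dsat (csat q) := (good_sat q).match (good_sat q)
  obtain ⟨m, hm1, hm2, hm3⟩ := PI.fresh hM h1 (n := n) (a := a) (b := b)
    (mem_slice.2 ⟨g, hg, h2⟩) (by rw [← hfs]; exact hf s)
    (by
      rintro ⟨b', hb'⟩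
      obtain ⟨f', h5, h6⟩ := mem_slice.1 hb'
      exact h4 _ h5 (h6.trans hfs.symm)) (lt_of_le_of_lt (slice_card S s) hq)
  refine ⟨m, hm1, by rw [hm2, hfs], fun f' hf' => hm3 (f' s) (mem_slice.2 ⟨f', hf', rfl⟩)⟩

theorem exists_fresh_index (S : Finset ((ι → Node) × Node)) (b : Node) (i : ℕ → ℕ)
    (hi : Function.Injective i) : ∃ j, ∀ f', (f', i j :: b) ∉ S := by
  classical
  obtain ⟨m, ⟨j, rfl⟩, hm⟩ := (Set.infinite_range_of_injective hi).exists_notMem_finset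
    (S.image fun p => p.2.headD 0)
  refine ⟨j, fun f' hf' => hm (Finset.mem_image.2 ⟨_, hf', rfl⟩)⟩

theorem LPI.root_case (f : ι → Node) (hlen : ∀ᶠ s in (U : Filter ι), (f s).length = 1)
    (S : Finset ((ι → Node) × Node)) :
    ∃ m, [m] ∈ Dsat ∧ (∀ q, ∀ᶠ s in (U : Filter ι), csat q (f s) = csat q [m]) ∧
      ∀ f', (f', [m]) ∉ S := by
  classical
  set x : ι → ℕ := fun s => (f s).headD 0 with hx
  set p : ℕ → Bool := fun k => decide (∀ᶠ s in (U : Filter ι), Psat (x s) k = true) with hp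
  have hk : ∀ k, ∀ᶠ s in (U : Filter ι), Psat (x s) k = p k := by
    intro k
    by_cases h : ∀ᶠ s in (U : Filter ι), Psat (x s) k = true
    · filter_upwards [h] with s hs
      rw [hs, hp]; simp [h]
    · have h' := h
      rw [← Ultrafilter.eventually_not] at h
      filter_upwards [h] with s hs
      rw [hp]; simp [h', hs]
  have hq : ∀ q, ∀ᶠ s in (U : Filter ι), pre (Psat (x s)) q = pre p q := by
    intro q
    have : ∀ᶠ s in (U : Filter ι), ∀ k ∈ Finset.range q, Psat (x s) k = p k := by
      rw [Filter.eventually_all_finset]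
      exact fun k _ => hk k
    filter_upwards [this] with s hs
    exact pre_eq_iff.2 fun k hk => hs k (Finset.mem_range.2 hk)
  have hpC : InC p := by
    intro n hn
    obtain ⟨s, hs1, hs2⟩ := ((hq n).and (hk n)).exists
    rw [← hs1]
    exact Psat_InC _ n (hs2.trans hn)
  obtain ⟨i, hi⟩ := Psat_surj hpC
  obtain ⟨j, hj⟩ := exists_fresh_index S [] (fun j => Nat.pair i j)
    (fun j j' h => (Nat.pair_eq_pair.1 h).2)
  refine ⟨Nat.pair i j, (Set.mem_univ _ : Nat.pair i j ∈ (Set.univ : Set ℕ)), fun q => ?_, hj⟩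
  filter_upwards [hq q, hlen] with s hs hl
  obtain ⟨y, hy⟩ := List.length_eq_one_iff.1 hl
  have hxy : x s = y := by simp [hx, hy]
  rw [hxy] at hs
  rw [hy]
  simp only [csat, colr, hs, hi]

theorem LPI.extend (d : ℕ) : ∀ (f : ι → Node), (∀ s, f s ∈ Dsat) →
    (∀ᶠ s in (U : Filter ι), (f s).length = d) → ∀ S, LPI U S →
    ∃ S', S ⊆ S' ∧ LPI U S' ∧ ∃ f' b, (f', b) ∈ S' ∧ ∀ᶠ s in (U : Filter ι), f' s = f s := by
  classical
  induction d with
  | zero =>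
    intro f hf hl S hS
    refine ⟨S, subset_rfl, hS, _, _, hS.nil, ?_⟩
    filter_upwards [hl] with s hs
    exact (List.length_eq_zero_iff.1 hs).symm
  | succ d ih =>
    intro f hf hl S hS
    obtain ⟨S1, hSS, hS1, g, b, hg, hgf⟩ := ih (fun s => (f s).tail)
      (fun s => nodes_suffix (List.tail_suffix _) (hf s))
      (by filter_upwards [hl] with s hs; simp [hs]) S hS
    by_cases hn : ∃ f' b', (f', b') ∈ S1 ∧ ∀ᶠ s in (U : Filter ι), f' s = f s
    · obtain ⟨f', b', h1, h2⟩ := hn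
      exact ⟨S1, hSS, hS1, f', b', h1, h2⟩
    have hn2 : ∀ f' b', (f', b') ∈ S1 → ¬ ∀ᶠ s in (U : Filter ι), f' s = f s :=
      fun f' b' h1 h2 => hn ⟨f', b', h1, h2⟩
    have hbl : b.length = d := by
      obtain ⟨s, h1, h2, h3⟩ := (((hS1.mem _ _ hg).2.2 0).and (hgf.and hl)).exists
      have := csat_len ((hS1.mem _ _ hg).2.1 s) (hS1.mem _ _ hg).1 h1
      rw [h2] at this
      simp [h3] at this
      omega
    have hne : ∀ᶠ s in (U : Filter ι), f s ≠ [] := by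
      filter_upwards [hl] with s hs h0
      simp [h0] at hs
    have hfr := hS1.fresh hg hgf hf hne hn2
    suffices hm : ∃ m, m :: b ∈ Dsat ∧
        (∀ q, ∀ᶠ s in (U : Filter ι), csat q (f s) = csat q (m :: b)) ∧
        ∀ f', (f', m :: b) ∉ S1 by
      obtain ⟨m, hm1, hm2, hm3⟩ := hm
      exact ⟨_, hSS.trans (Finset.subset_insert _ _),
        hS1.insert hg hgf hf hm1 hm2 hn2 hm3, f, m :: b, Finset.mem_insert_self _ _, by simp⟩
    match b, hbl with
    | [], hbl =>
      simp only [List.length_nil] at hbl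
      subst hbl
      exact LPI.root_case f hl S1
    | [x0], hbl =>
      simp only [List.length_cons, List.length_nil] at hbl
      subst hbl
      set c : ι → ℕ∞ := fun s => match f s with
        | [n, x] => chM Psat ⊤ x n
        | _ => 0 with hc
      have hcol : ∀ᶠ s in (U : Filter ι), ∀ q, csat q (f s) =
          Col.child (min (c s) (2 * q + 2 : ℕ)) := by
        filter_upwards [hl] with s hs q
        obtain ⟨n, x, hnx⟩ := List.length_eq_two.1 hs
        simp [hc, hnx, csat, colr]
      by_cases hA : ∃ k : ℕ, ∀ᶠ s in (U : Filter ι), c s = k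
      · obtain ⟨k, hk⟩ := hA
        set q := S1.card + k + 1
        obtain ⟨s, ⟨m, hm1, hm2, hm3⟩, h2, h3⟩ :=
          ((hfr q (by omega)).and (hcol.and hk)).exists
        rw [h2 q, h3] at hm2
        have hm4 : chM Psat ⊤ x0 m = k := by
          simp only [csat, colr, Col.child.injEq] at hm2
          have hkq : (k : ℕ∞) < ((2 * q + 2 : ℕ) : ℕ∞) := by
            exact_mod_cast (by omega : k < 2 * q + 2)
          rw [min_eq_left hkq.le] at hm2
          rcases min_choice (chM Psat ⊤ x0 m) ((2 * q + 2 : ℕ) : ℕ∞) with h | h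
          · exact h ▸ hm2
          · rw [h] at hm2
            exact absurd hm2 hkq.ne'
        refine ⟨m, hm1, fun q' => ?_, hm3⟩
        filter_upwards [hcol, hk] with s h5 h6
        rw [h5 q', h6]
        simp only [csat, colr, hm4]
      · obtain ⟨j, hj⟩ := exists_fresh_index S1 [x0] (fun j => 2 * j + 1)
          (fun j j' h => by simpa using h)
        have htop : chM Psat ⊤ x0 (2 * j + 1) = ⊤ := by
          unfold chM
          rw [if_neg (by omega)]
        refine ⟨2 * j + 1, ⟨Set.mem_univ _, by rw [htop]; simp⟩, fun q => ?_, hj⟩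
        have : ∀ᶠ s in (U : Filter ι), ∀ k ∈ Finset.range (2 * q + 2), ¬ c s = k := by
          rw [Filter.eventually_all_finset]
          intro k _
          rw [Ultrafilter.eventually_not]
          exact fun h => hA ⟨k, h⟩
        filter_upwards [hcol, this] with s h5 h6
        rw [h5 q]
        simp only [csat, colr, htop]
        congr 1
        rw [min_eq_right, min_eq_right le_top]
        · rcases h7 : c s with _ | k
          · exact le_top
          · by_contra h8
            have h9 : ((k : ℕ) : ℕ∞) < ((2 * q + 2 : ℕ) : ℕ∞) := lt_of_not_ge h8
            exact h6 k (Finset.mem_range.2 (by exact_mod_cast h9)) h7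
    | [n0, x0], hbl =>
      simp only [List.length_cons, List.length_nil] at hbl
      subst hbl
      obtain ⟨s, m, hm1, -, hm3⟩ := (hfr (S1.card + 1) (by omega)).exists
      refine ⟨m, hm1, fun q => ?_, hm3⟩
      filter_upwards [hl] with s hs
      obtain ⟨a1, a2, a3, h3⟩ := List.length_eq_three.1 hs
      simp [h3, csat, colr]
    | (b1 :: b2 :: b3 :: b4), hbl =>
      exfalso
      obtain ⟨s, hs⟩ := hl.exists
      have := Dsat_len _ (hf s)
      simp at hbl
      omega

theorem lpi_nil : LPI U {((fun _ => []), [])} := by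
  constructor
  · simp
  · intro f b h
    obtain ⟨rfl, rfl⟩ := Prod.mk.inj (Finset.mem_singleton.1 h)
    exact ⟨trivial, fun _ => trivial, by simp⟩
  · intro f b f' b' h h'
    obtain ⟨rfl, rfl⟩ := Prod.mk.inj (Finset.mem_singleton.1 h)
    obtain ⟨rfl, rfl⟩ := Prod.mk.inj (Finset.mem_singleton.1 h')
    simp
  · intro m f b h
    have := (Prod.mk.inj (Finset.mem_singleton.1 h)).2
    simp at this

theorem eventually_len (f : ι → Node) (hf : ∀ s, f s ∈ Dsat) :
    ∃ d, ∀ᶠ s in (U : Filter ι), (f s).length = d := by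
  have h : ∀ᶠ s in (U : Filter ι), ∃ d ∈ Set.Iic 3, (f s).length = d :=
    Filter.Eventually.of_forall fun s => ⟨_, Dsat_len _ (hf s), rfl⟩
  rw [Ultrafilter.eventually_exists_mem_iff (Set.finite_Iic 3)] at h
  obtain ⟨d, -, h⟩ := h
  exact ⟨d, h⟩

/-- Every sequence of tuples has a limit. -/
theorem exists_limit {n : ℕ} (a : ι → Fin n → Dsat) : ∃ b : Fin n → Dsat,
    ∀ φ : FirstOrder.Language.graph.Formula (Fin n),
      φ.Realize b ↔ ∀ᶠ s in (U : Filter ι), φ.Realize (a s) := by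
  classical
  have key : ∀ F : Finset (Fin n), ∃ S, LPI U S ∧ ∀ i ∈ F, ∃ f' b, (f', b) ∈ S ∧
      ∀ᶠ s in (U : Filter ι), f' s = (a s i).1 := by
    intro F
    induction F using Finset.induction_on with
    | empty => exact ⟨_, lpi_nil, by simp⟩
    | insert i F _ ih =>
      obtain ⟨S, hS, hF⟩ := ih
      obtain ⟨d, hd⟩ := eventually_len (U := U) (fun s => (a s i).1) (fun s => (a s i).2)
      obtain ⟨S', h1, h2, h3⟩ := LPI.extend d (fun s => (a s i).1) (fun s => (a s i).2) hd S hS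
      refine ⟨S', h2, fun j hj => ?_⟩
      rcases Finset.mem_insert.1 hj with rfl | hj
      · exact h3
      · obtain ⟨f', b, h4, h5⟩ := hF j hj
        exact ⟨f', b, h1 h4, h5⟩
  obtain ⟨S, hS, hF⟩ := key Finset.univ
  choose f b hfb hf using fun i => hF i (Finset.mem_univ i)
  refine ⟨fun i => ⟨b i, (hS.mem _ _ (hfb i)).1⟩, fun φ => ?_⟩
  have hall : ∀ᶠ s in (U : Filter ι), ∀ i, f i s = (a s i).1 := by
    rw [Filter.eventually_all]
    exact hf
  have hiff : ∀ᶠ s in (U : Filter ι), (φ.Realize (a s) ↔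
      φ.Realize fun i => (⟨b i, (hS.mem _ _ (hfb i)).1⟩ : Dsat)) := by
    filter_upwards [hS.toPI (S.card + 3 * qr φ), hall] with s h1 h2
    have hM := (good_sat (S.card + 3 * qr φ)).match (good_sat (S.card + 3 * qr φ))
    exact EF hM Dsat_tail Dsat_tail Dsat_len Dsat_len φ (slice S s) h1
      (Nat.add_le_add_right (slice_card S s) _) _ _ default default
      (fun i => mem_slice.2 ⟨f i, hfb i, h2 i⟩) (fun i => i.elim0)
  rw [Filter.eventually_congr hiff]
  simp

end

section

open Filter

/-! ### The theory -/

/-- Our theory. -/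
def Tsat : FirstOrder.Language.graph.Theory := FirstOrder.Language.graph.completeTheory Dsat

instance : Nonempty Dsat := ⟨⟨[], trivial⟩⟩

theorem Dsat_model : (Dsat : Type) ⊨ Tsat := model_completeTheory

theorem Dat_model : (Dat : Type) ⊨ Tsat := by
  rw [Theory.model_iff]
  intro φ hφ
  have h : (Dsat : Type) ⊨ φ := hφ
  have hM := (good_at (1 + 3 * qr φ)).match (good_sat (1 + 3 * qr φ))
  have hP : PI Dat (colr (fun x => pre (Pat x) (1 + 3 * qr φ)) (chM Pat 0)
      (2 * (1 + 3 * qr φ) + 2)) Dsat (csat (1 + 3 * qr φ)) {([], [])} := by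
    constructor
    · simp
    · intro a b h
      obtain ⟨rfl, rfl⟩ := Prod.mk.inj (Finset.mem_singleton.1 h)
      exact ⟨trivial, trivial, rfl⟩
    · intro a b a' b' h h'
      obtain ⟨rfl, rfl⟩ := Prod.mk.inj (Finset.mem_singleton.1 h)
      obtain ⟨rfl, rfl⟩ := Prod.mk.inj (Finset.mem_singleton.1 h')
      simp
    · intro n a b h
      have := (Prod.mk.inj (Finset.mem_singleton.1 h)).1
      simp at this
    · intro n a b h
      have := (Prod.mk.inj (Finset.mem_singleton.1 h)).2
      simp at this
  exact (EF hM nodes_tail nodes_tail nodes_len nodes_len φ _ hP (by simp) default default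
    default default (fun i => i.elim) (fun i => i.elim0)).2 h

theorem Tsat_complete : Tsat.IsComplete := completeTheory.isComplete _ _

theorem Tsat_graph : FirstOrder.Language.Theory.simpleGraph ⊆ Tsat := by
  have : (Dsat : Type) ⊨ FirstOrder.Language.Theory.simpleGraph := simpleGraph_model (grN Dsat)
  exact Theory.model_iff_subset_completeTheory.1 this

theorem ex_transfer {N : Type} [FirstOrder.Language.graph.Structure N] (hN : N ⊨ Tsat)
    {α : Type} [Finite α] (φ : FirstOrder.Language.graph.Formula α) :
    (∃ a : α → N, φ.Realize a) ↔ ∃ a : α → Dsat, φ.Realize a := by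
  set ψ : FirstOrder.Language.graph.Sentence :=
    Formula.iExs α (φ.relabel (Sum.inr : α → Empty ⊕ α)) with hψ
  have hN' : N ⊨ FirstOrder.Language.graph.completeTheory Dsat := hN
  have h := realize_iff_of_model_completeTheory (L := FirstOrder.Language.graph) Dsat N ψ
  have key : ∀ (K : Type) [FirstOrder.Language.graph.Structure K],
      K ⊨ ψ ↔ ∃ a : α → K, φ.Realize a := by
    intro K _
    show Formula.Realize ψ _ ↔ _
    rw [hψ, Formula.realize_iExs]
    refine exists_congr fun a => ?_
    rw [Formula.realize_relabel, Sum.elim_comp_inr]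
  rw [key, key] at h
  exact h

theorem type_realized {n : ℕ} {p : Set (FirstOrder.Language.graph.Formula (Fin n))}
    (hp : IsTypeOf Tsat p) : ∃ a : Fin n → Dsat, typeOf Dsat a = p := by
  classical
  obtain ⟨N, -, b, rfl⟩ := hp
  have hfin : ∀ F : Finset (typeOf (L := FirstOrder.Language.graph) N b),
      ∃ a : Fin n → Dsat, ∀ φ ∈ F, φ.1.Realize a := by
    intro F
    have h := (ex_transfer N.is_model (Formula.iInf fun φ : F => φ.1.1)).1
      ⟨b, by rw [Formula.realize_iInf]; exact fun φ => φ.1.2⟩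
    obtain ⟨a, ha⟩ := h
    rw [Formula.realize_iInf] at ha
    exact ⟨a, fun φ hφ => ha ⟨φ, hφ⟩⟩
  choose a ha using hfin
  obtain ⟨c, hc⟩ := exists_limit (U := Ultrafilter.of atTop) a
  have hpos : ∀ φ, φ ∈ typeOf (L := FirstOrder.Language.graph) N b → φ.Realize c := by
    intro φ hφ
    rw [hc]
    have : ∀ᶠ F in (atTop : Filter (Finset (typeOf (L := FirstOrder.Language.graph) N b))),
        φ.Realize (a F) := by
      filter_upwards [eventually_ge_atTop {⟨φ, hφ⟩}] with F hF
      exact ha F ⟨φ, hφ⟩ (hF (Finset.mem_singleton_self _))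
    exact Ultrafilter.of_le atTop this
  refine ⟨c, Set.ext fun φ => ⟨fun h => ?_, fun h => hpos φ h⟩⟩
  by_contra hn
  have h1 := hpos φ.not (by
    show Formula.Realize _ _
    rw [Formula.realize_not]
    exact hn)
  rw [Formula.realize_not] at h1
  exact h1 h

theorem Tsat_small : IsSmall Tsat := by
  intro n
  apply (Set.countable_range fun a : Fin n → Dsat =>
    typeOf (L := FirstOrder.Language.graph) Dsat a).mono
  intro p hp
  obtain ⟨a, ha⟩ := type_realized hp
  exact ⟨a, ha⟩

theorem Tsat_decidable : DecidableTheory Tsat := by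
  have h := sat_decidable (α := Empty) 0 (fun i => by simp) default
  exact h

theorem Tsat_types (n : ℕ) (p : Set (FirstOrder.Language.graph.Formula (Fin n)))
    (hp : IsTypeOf Tsat p) : DecidableType p := by
  obtain ⟨a, rfl⟩ := type_realized hp
  refine sat_decidable (α := Fin n) n (fun i => ?_) a
  constructor
  · intro h; exact ⟨⟨i, h⟩, rfl⟩
  · rintro ⟨⟨j, hj⟩, rfl⟩; exact hj

end

section

/-! ### The formula: `x` has a neighbour of degree `d` -/

/-- Adjacency in a structure. -/
def Rl (M : Type) [FirstOrder.Language.graph.Structure M] (x y : M) : Prop :=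
  Structure.RelMap (L := FirstOrder.Language.graph) (n := 2) graphRel.adj ![x, y]

/-- `x` has a neighbour of degree `d`. -/
def HND (M : Type) [FirstOrder.Language.graph.Structure M] (d : ℕ) (x : M) : Prop :=
  ∃ y, Rl M x y ∧ ∃ z : Fin d → M, (∀ j, Rl M y (z j)) ∧ (∀ j k, j ≠ k → z j ≠ z k) ∧
    ∀ w, Rl M y w → ∃ j, w = z j

/-- The atomic formula of adjacency. -/
def adjF {α : Type} {n : ℕ} (s t : α ⊕ Fin n) : FirstOrder.Language.graph.BoundedFormula α n :=
  BoundedFormula.rel graphRel.adj ![Term.var s, Term.var t]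

/-- Negation. -/
def negF {α : Type} {n : ℕ} (φ : FirstOrder.Language.graph.BoundedFormula α n) :
    FirstOrder.Language.graph.BoundedFormula α n := φ.imp .falsum

/-- Equality. -/
def eqF {α : Type} {n : ℕ} (s t : α ⊕ Fin n) : FirstOrder.Language.graph.BoundedFormula α n :=
  BoundedFormula.equal (Term.var s) (Term.var t)

/-- Negated conjunction of a list of formulas. -/
def imps {α : Type} {n : ℕ} : List (FirstOrder.Language.graph.BoundedFormula α n) →
    FirstOrder.Language.graph.BoundedFormula α n
  | [] => .falsum
  | a :: l => a.imp (imps l)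

variable {M : Type} [FirstOrder.Language.graph.Structure M]

theorem realize_adjF {α : Type} {n : ℕ} (s t : α ⊕ Fin n) (v : α → M) (xs : Fin n → M) :
    (adjF s t).Realize v xs ↔ Rl M (Sum.elim v xs s) (Sum.elim v xs t) := by
  unfold Rl adjF
  show Structure.RelMap (L := FirstOrder.Language.graph) (n := 2) graphRel.adj _ ↔ _
  have : (fun i => (((![Term.var s, Term.var t] : Fin 2 →
      FirstOrder.Language.graph.Term (α ⊕ Fin n)) i).realize (Sum.elim v xs))) =
      ![Sum.elim v xs s, Sum.elim v xs t] := by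
    funext i
    fin_cases i <;> rfl
  rw [this]

theorem realize_negF {α : Type} {n : ℕ} (φ : FirstOrder.Language.graph.BoundedFormula α n)
    (v : α → M) (xs : Fin n → M) : (negF φ).Realize v xs ↔ ¬ φ.Realize v xs := Iff.rfl

theorem realize_eqF {α : Type} {n : ℕ} (s t : α ⊕ Fin n) (v : α → M) (xs : Fin n → M) :
    (eqF s t).Realize v xs ↔ Sum.elim v xs s = Sum.elim v xs t := Iff.rfl

theorem realize_imps {α : Type} {n : ℕ}
    (l : List (FirstOrder.Language.graph.BoundedFormula α n)) (v : α → M) (xs : Fin n → M) :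
    (imps l).Realize v xs ↔ ¬ ∀ a ∈ l, a.Realize v xs := by
  induction l with
  | nil => simp [imps, BoundedFormula.Realize]
  | cons a l ih =>
    show (a.Realize v xs → (imps l).Realize v xs) ↔ _
    rw [ih, List.forall_mem_cons, not_and]

/-- Premises of the main formula. -/
def prem1 {α : Type} (i : α) (d : ℕ) :
    List (FirstOrder.Language.graph.BoundedFormula α (d + 1)) :=
  adjF (.inl i) (.inr 0) :: (List.finRange d).map fun j => adjF (.inr 0) (.inr j.succ)

/-- Premises of the main formula. -/
def prem2 {α : Type} (d : ℕ) :
    List (FirstOrder.Language.graph.BoundedFormula α (d + 1)) :=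
  (List.finRange d).flatMap fun j => (List.finRange d).map fun k =>
    if j.1 = k.1 then negF .falsum else negF (eqF (.inr j.succ) (.inr k.succ))

/-- Premises of the main formula. -/
def prem3 {α : Type} (d : ℕ) :
    FirstOrder.Language.graph.BoundedFormula α (d + 1 + 1) :=
  imps (adjF (.inr 0) (.inr (Fin.last (d + 1))) :: (List.finRange d).map fun j =>
    negF (eqF (.inr (Fin.last (d + 1))) (.inr j.succ.castSucc)))

/-- The main formula: `i` has no neighbour of degree `d`. -/
def psiF {α : Type} (i : α) (d : ℕ) : FirstOrder.Language.graph.Formula α :=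
  (imps (prem1 i d ++ (prem2 d ++ [(prem3 d).all]))).alls

theorem realize_psiF {α : Type} (i : α) (d : ℕ) (v : α → M) :
    (psiF i d).Realize v ↔ ¬ HND M d (v i) := by
  unfold psiF
  rw [BoundedFormula.realize_alls]
  simp only [realize_imps]
  rw [← not_exists]
  apply not_congr
  have h1 : ∀ xs : Fin (d + 1) → M, (∀ a ∈ prem1 i d, a.Realize v xs) ↔
      Rl M (v i) (xs 0) ∧ ∀ j : Fin d, Rl M (xs 0) (xs j.succ) := by
    intro xs
    simp [prem1, realize_adjF]
  have h2 : ∀ xs : Fin (d + 1) → M, (∀ a ∈ prem2 d, a.Realize v xs) ↔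
      ∀ j k : Fin d, j ≠ k → xs j.succ ≠ xs k.succ := by
    intro xs
    simp only [prem2, List.mem_flatMap, List.mem_finRange, true_and, List.mem_map,
      forall_exists_index, forall_apply_eq_imp_iff]
    constructor
    · intro h j k hjk
      have h3 := h _ j k rfl
      rw [if_neg (fun h4 => hjk (Fin.ext h4)), realize_negF, realize_eqF] at h3
      exact h3
    · rintro h a j k rfl
      split_ifs with h4
      · exact fun h => h
      · exact h j k fun h5 => h4 (by rw [h5])
  have h3 : ∀ xs : Fin (d + 1) → M, ((prem3 d).all.Realize v xs) ↔
      ∀ w, Rl M (xs 0) w → ∃ j : Fin d, w = xs j.succ := by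
    intro xs
    show (∀ w, (prem3 d).Realize v (Fin.snoc xs w)) ↔ _
    refine forall_congr' fun w => ?_
    unfold prem3
    rw [realize_imps]
    have h0 : (Fin.snoc xs w : Fin (d + 1 + 1) → M) 0 = xs 0 :=
      Fin.snoc_castSucc (α := fun _ => M) w xs 0
    have hl : (Fin.snoc xs w : Fin (d + 1 + 1) → M) (Fin.last (d + 1)) = w :=
      Fin.snoc_last (α := fun _ => M) w xs
    have hs : ∀ j : Fin d, (Fin.snoc xs w : Fin (d + 1 + 1) → M) j.succ.castSucc = xs j.succ :=
      fun j => Fin.snoc_castSucc (α := fun _ => M) w xs j.succ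
    simp only [List.forall_mem_cons, List.mem_map, List.mem_finRange, true_and,
      forall_exists_index, forall_apply_eq_imp_iff, realize_adjF, realize_negF, realize_eqF,
      Sum.elim_inr, h0, hl, hs]
    rw [not_and, not_forall]
    simp only [not_not]
  simp only [List.forall_mem_append, h1, h2, List.mem_singleton, forall_eq, h3]
  constructor
  · rintro ⟨xs, ⟨a, b⟩, c, e⟩
    exact ⟨xs 0, a, fun j => xs j.succ, b, c, e⟩
  · rintro ⟨y, a, z, b, c, e⟩
    refine ⟨Fin.cons y z, ?_⟩
    simp only [Fin.cons_zero, Fin.cons_succ]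
    exact ⟨⟨a, b⟩, c, e⟩

/-! Codes -/

theorem toks_imps {α : Type} [Encodable α] {n : ℕ}
    (l : List (FirstOrder.Language.graph.BoundedFormula α n)) :
    toks (imps l) = (l.flatMap fun a => 3 :: toks a) ++ [4 * n + 11] := by
  induction l with
  | nil => exact toks_falsum n
  | cons a l ih =>
    show toks (a.imp (imps l)) = _
    rw [toks_imp, ih]
    simp

theorem toks_alls {α : Type} [Encodable α] {n : ℕ}
    (φ : FirstOrder.Language.graph.BoundedFormula α n) :
    toks φ.alls = List.replicate n 7 ++ toks φ := by
  induction n with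
  | zero => rfl
  | succ n ih =>
    show toks φ.all.alls = _
    rw [ih, toks_all, List.replicate_succ']
    simp

theorem toks_adjF {α : Type} [Encodable α] {n : ℕ} (s t : α ⊕ Fin n) :
    toks (adjF s t) = [25, 4 * n + 3, tk n (Encodable.encode s), tk n (Encodable.encode t)] :=
  toks_rel _ s t rfl rfl

theorem toks_negF {α : Type} [Encodable α] {n : ℕ}
    (φ : FirstOrder.Language.graph.BoundedFormula α n) :
    toks (negF φ) = 3 :: (toks φ ++ [4 * n + 11]) := by
  unfold negF
  rw [toks_imp, toks_falsum]

theorem toks_eqF {α : Type} [Encodable α] {n : ℕ} (s t : α ⊕ Fin n) :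
    toks (eqF s t) = [tk n (Encodable.encode s), tk n (Encodable.encode t)] :=
  toks_equal s t

/-- Tokens of the main formula. -/
def tok1 (i d : ℕ) : List ℕ :=
  [3, 25, 4 * (d + 1) + 3, tk (d + 1) (2 * i), tk (d + 1) 1] ++
    (List.range d).flatMap fun j =>
      [3, 25, 4 * (d + 1) + 3, tk (d + 1) 1, tk (d + 1) (2 * (j + 1) + 1)]

/-- Tokens of the main formula. -/
def tok2 (d : ℕ) : List ℕ :=
  (List.range d).flatMap fun j => (List.range d).flatMap fun k =>
    if j = k then [3, 3, 4 * (d + 1) + 11, 4 * (d + 1) + 11] else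
      [3, 3, tk (d + 1) (2 * (j + 1) + 1), tk (d + 1) (2 * (k + 1) + 1), 4 * (d + 1) + 11]

/-- Tokens of the main formula. -/
def tok3 (d : ℕ) : List ℕ :=
  [3, 25, 4 * (d + 1 + 1) + 3, tk (d + 1 + 1) 1, tk (d + 1 + 1) (2 * (d + 1) + 1)] ++
    ((List.range d).flatMap fun j =>
      [3, 3, tk (d + 1 + 1) (2 * (d + 1) + 1), tk (d + 1 + 1) (2 * (j + 1) + 1),
        4 * (d + 1 + 1) + 11]) ++ [4 * (d + 1 + 1) + 11]

/-- Tokens of the main formula. -/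
def tokP (i d : ℕ) : List ℕ :=
  (List.range (d + 1)).map (fun _ => 7) ++
    ((tok1 i d ++ (tok2 d ++ (3 :: 7 :: tok3 d))) ++ [4 * (d + 1) + 11])

theorem flatMap_finRange {β : Type} (d : ℕ) (f : ℕ → List β) :
    ((List.finRange d).flatMap fun j => f j.1) = (List.range d).flatMap f := by
  have : List.range d = (List.finRange d).map Fin.val := by simp
  rw [this, List.flatMap_map]

theorem toks_psiF (i d : ℕ) : toks (psiF i d) = tokP i d := by
  unfold psiF tokP
  rw [toks_alls, toks_imps]
  have h0 : List.replicate (d + 1) 7 = (List.range (d + 1)).map (fun _ => 7) := by simp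
  rw [h0]
  congr 1
  congr 1
  rw [List.flatMap_append, List.flatMap_append]
  have h1 : (prem1 i d).flatMap (fun a => 3 :: toks a) = tok1 i d := by
    unfold prem1 tok1
    rw [List.flatMap_cons, List.flatMap_map, ← flatMap_finRange]
    simp only [toks_adjF, enc_inl, enc_inr, Encodable.encode_nat]
    simp
  have h2 : (prem2 (α := ℕ) d).flatMap (fun a => 3 :: toks a) = tok2 d := by
    unfold prem2 tok2
    rw [List.flatMap_assoc, ← flatMap_finRange]
    apply List.flatMap_congr
    intro j _
    rw [List.flatMap_map, ← flatMap_finRange]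
    apply List.flatMap_congr
    intro k _
    split_ifs
    · rw [toks_negF, toks_falsum]; rfl
    · simp only [toks_negF, toks_eqF, enc_inr]
      simp
  have h3 : toks (prem3 (α := ℕ) d) = tok3 d := by
    unfold prem3 tok3
    rw [toks_imps, List.flatMap_cons, List.flatMap_map, ← flatMap_finRange]
    simp only [toks_adjF, toks_negF, toks_eqF, enc_inr]
    simp
  rw [h1, h2]
  simp [toks_all, h3]

theorem prim_list2 {γ : Type} [Primcodable γ] {f : γ → ℕ} {l : γ → List ℕ} (hf : Primrec f)
    (hl : Primrec l) : Primrec fun c => f c :: l c := Primrec.list_cons.comp hf hl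

theorem prim_tokP : Primrec₂ tokP := by
  have lin : ∀ {γ : Type} [Primcodable γ] {f : γ → ℕ} (a b : ℕ), Primrec f →
      Primrec fun c => a * f c + b := fun a b hf =>
    Primrec.nat_add.comp (Primrec.nat_mul.comp (Primrec.const a) hf) (Primrec.const b)
  have suc : ∀ {γ : Type} [Primcodable γ] {f : γ → ℕ}, Primrec f →
      Primrec fun c => f c + 1 := fun hf => Primrec.succ.comp hf
  have dbl : ∀ {γ : Type} [Primcodable γ] {f : γ → ℕ}, Primrec f →
      Primrec fun c => 2 * f c := fun hf => Primrec.nat_mul.comp (Primrec.const 2) hf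
  unfold tokP tok1 tok2 tok3
  apply Primrec.list_append.comp
  · exact Primrec.list_map (Primrec.list_range.comp (suc Primrec.snd)) (Primrec.const 7).to₂
  apply Primrec.list_append.comp
  · apply Primrec.list_append.comp
    · apply Primrec.list_append.comp
      · exact prim_list2 (Primrec.const _) (prim_list2 (Primrec.const _)
          (prim_list2 (lin _ _ (suc Primrec.snd)) (prim_list2 (prim_tk.comp (suc Primrec.snd)
            (dbl Primrec.fst)) (prim_list2 (prim_tk.comp (suc Primrec.snd)
            (Primrec.const _)) (Primrec.const _)))))
      · apply Primrec.list_flatMap (Primrec.list_range.comp Primrec.snd)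
        have hd : Primrec fun a : (ℕ × ℕ) × ℕ => a.1.2 := Primrec.snd.comp Primrec.fst
        exact prim_list2 (Primrec.const _) (prim_list2 (Primrec.const _)
          (prim_list2 (lin _ _ (suc hd)) (prim_list2 (prim_tk.comp (suc hd)
            (Primrec.const _)) (prim_list2 (prim_tk.comp (suc hd)
            (lin _ _ (suc Primrec.snd))) (Primrec.const _)))))
    · apply Primrec.list_append.comp
      · apply Primrec.list_flatMap (Primrec.list_range.comp Primrec.snd)
        apply Primrec.list_flatMap (Primrec.list_range.comp (Primrec.snd.comp Primrec.fst))
        have hd : Primrec fun a : ((ℕ × ℕ) × ℕ) × ℕ => a.1.1.2 :=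
          Primrec.snd.comp (Primrec.fst.comp Primrec.fst)
        have hj : Primrec fun a : ((ℕ × ℕ) × ℕ) × ℕ => a.1.2 :=
          Primrec.snd.comp Primrec.fst
        apply Primrec.ite (Primrec.eq.comp hj Primrec.snd)
        · exact prim_list2 (Primrec.const _) (prim_list2 (Primrec.const _)
            (prim_list2 (lin _ _ (suc hd)) (prim_list2 (lin _ _ (suc hd)) (Primrec.const _))))
        · exact prim_list2 (Primrec.const _) (prim_list2 (Primrec.const _)
            (prim_list2 (prim_tk.comp (suc hd) (lin _ _ (suc hj)))
              (prim_list2 (prim_tk.comp (suc hd) (lin _ _ (suc Primrec.snd)))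
                (prim_list2 (lin _ _ (suc hd)) (Primrec.const _)))))
      · refine prim_list2 (Primrec.const _) (prim_list2 (Primrec.const _) ?_)
        apply Primrec.list_append.comp
        · apply Primrec.list_append.comp
          · exact prim_list2 (Primrec.const _) (prim_list2 (Primrec.const _)
              (prim_list2 (lin _ _ (suc (suc Primrec.snd))) (prim_list2 (prim_tk.comp
                (suc (suc Primrec.snd)) (Primrec.const _)) (prim_list2 (prim_tk.comp
                (suc (suc Primrec.snd)) (lin _ _ (suc Primrec.snd))) (Primrec.const _)))))
          · apply Primrec.list_flatMap (Primrec.list_range.comp Primrec.snd)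
            have hd : Primrec fun a : (ℕ × ℕ) × ℕ => a.1.2 := Primrec.snd.comp Primrec.fst
            exact prim_list2 (Primrec.const _) (prim_list2 (Primrec.const _)
              (prim_list2 (prim_tk.comp (suc (suc hd)) (lin _ _ (suc hd)))
              (prim_list2 (prim_tk.comp (suc (suc hd)) (lin _ _ (suc Primrec.snd)))
                (prim_list2 (lin _ _ (suc (suc hd))) (Primrec.const _)))))
        · exact prim_list2 (lin _ _ (suc (suc Primrec.snd))) (Primrec.const _)
  · exact prim_list2 (lin _ _ (suc Primrec.snd)) (Primrec.const _)

theorem fmlCode_inj {α : Type} [Encodable α] {φ ψ : FirstOrder.Language.graph.Formula α}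
    (h : fmlCode φ = fmlCode ψ) : φ = ψ := by
  have h1 : φ.listEncode = ψ.listEncode := Encodable.encode_injective h
  have := BoundedFormula.encoding.encode_injective
    (a₁ := (⟨0, φ⟩ : Σ n, FirstOrder.Language.graph.BoundedFormula α n)) (a₂ := ⟨0, ψ⟩) h1
  simpa using this

/-- In a decidable model the relation `HND` is computable. -/
theorem HND_computable (hM : DecidableModel (L := FirstOrder.Language.graph) M) :
    ∃ (g : ℕ → M) (h : ℕ → ℕ → Bool), Function.Surjective g ∧ Computable₂ h ∧
      ∀ i d, h i d = true ↔ HND M d (g i) := by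
  obtain ⟨g, hg, hc⟩ := hM
  obtain ⟨c, hc1, hc2⟩ := ComputablePred.computable_iff.1 hc
  refine ⟨g, fun i d => !(c (Encodable.encode (tokP i d))), hg, ?_, fun i d => ?_⟩
  · exact Primrec.not.to_comp.comp (hc1.comp (Computable.encode.comp prim_tokP.to_comp))
  · have h1 : (c (Encodable.encode (tokP i d)) : Prop) ↔ (psiF i d).Realize g := by
      have h2 := congrFun hc2 (Encodable.encode (tokP i d))
      rw [← iff_iff_eq] at h2
      rw [← h2]
      constructor
      · rintro ⟨φ, h3, h4⟩
        rw [← toks_psiF, ← fmlCode_eq] at h3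
        rwa [← fmlCode_inj h3]
      · intro h3
        exact ⟨psiF i d, by rw [fmlCode_eq, toks_psiF], h3⟩
    rw [realize_psiF] at h1
    rw [Bool.not_eq_true', ← Bool.not_eq_true, h1, not_not]

theorem HND_of_type {N : Type} [FirstOrder.Language.graph.Structure N] {n : ℕ} {a : Fin n → M}
    {b : Fin n → N} (h : SameType (L := FirstOrder.Language.graph) a b) (i : Fin n) (d : ℕ) :
    HND M d (a i) ↔ HND N d (b i) := by
  have := h (psiF i d)
  rw [realize_psiF, realize_psiF] at this
  exact not_iff_not.1 this

end

section

/-! ### Degrees in the tree models -/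

/-- The degree of a vertex. -/
noncomputable def dg (A : Set Node) (u : Node) : ℕ∞ := Set.encard {w : Node | w ∈ A ∧ adjN u w}

theorem HND_iff (A : Set Node) (d : ℕ) (u : A) :
    HND A d u ↔ ∃ y ∈ A, adjN u.1 y ∧ dg A y = d := by
  constructor
  · rintro ⟨y, h1, z, h2, h3, h4⟩
    refine ⟨y.1, y.2, h1, ?_⟩
    have : {w : Node | w ∈ A ∧ adjN y.1 w} = Set.range fun j => (z j).1 := by
      ext w
      constructor
      · rintro ⟨hw, hw'⟩
        obtain ⟨j, hj⟩ := h4 ⟨w, hw⟩ hw'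
        exact ⟨j, (congrArg Subtype.val hj).symm⟩
      · rintro ⟨j, rfl⟩
        exact ⟨(z j).2, h2 j⟩
    have hinj : Function.Injective fun j => (z j).1 := by
      intro j k hjk
      by_contra hne
      exact h3 j k hne (Subtype.ext hjk)
    unfold dg
    rw [this, ← Set.image_univ, hinj.encard_image]
    simp
  · rintro ⟨y, hy, h1, h2⟩
    unfold dg at h2
    have hfin : Set.Finite {w : Node | w ∈ A ∧ adjN y w} :=
      Set.finite_of_encard_eq_coe h2
    have hc : Nat.card {w : Node | w ∈ A ∧ adjN y w} = d := by
      have : Set.ncard {w : Node | w ∈ A ∧ adjN y w} = d := by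
        rw [Set.ncard, h2]; rfl
      exact this
    have := hfin.to_subtype
    have e := (Finite.equivFinOfCardEq hc).symm
    refine ⟨⟨y, hy⟩, h1, fun j => ⟨(e j).1, (e j).2.1⟩, fun j => (e j).2.2, ?_, ?_⟩
    · intro j k hjk h
      apply hjk
      apply e.injective
      apply Subtype.ext
      exact congrArg (fun a : A => a.1) h
    · intro w hw
      exact ⟨e.symm ⟨w.1, w.2, hw⟩, by simp⟩

section
variable {P : ℕ → ℕ → Bool} {o : ℕ∞}

theorem dg_nil : dg (nodes Set.univ (chM P o)) [] = ⊤ := by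
  unfold dg
  rw [Set.encard_eq_top_iff]
  apply (Set.infinite_range_of_injective (f := fun x : ℕ => [x]) (fun a b h => by simpa using h)).mono
  rintro _ ⟨x, rfl⟩
  exact ⟨(Set.mem_univ _ : x ∈ (Set.univ : Set ℕ)), adjN_iff.2 (Or.inl ⟨x, rfl⟩)⟩

theorem chM_even (x k : ℕ) : chM P o x (2 * k) = (2 * k + (P x k).toNat + 2 : ℕ) := by
  unfold chM
  rw [if_pos (by omega), Nat.mul_div_cancel_left _ (by norm_num)]

theorem dg_root (x : ℕ) : dg (nodes Set.univ (chM P o)) [x] = ⊤ := by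
  unfold dg
  rw [Set.encard_eq_top_iff]
  apply (Set.infinite_range_of_injective (f := fun k : ℕ => [2 * k, x])
    (fun a b h => by simpa using h)).mono
  rintro _ ⟨k, rfl⟩
  refine ⟨⟨Set.mem_univ _, ?_⟩, adjN_iff.2 (Or.inl ⟨2 * k, rfl⟩)⟩
  rw [chM_even]
  exact Nat.cast_ne_zero.2 (by omega)

theorem dg_child (j x : ℕ) : dg (nodes Set.univ (chM P o)) [j, x] = chM P o x j + 1 := by
  have : {w : Node | w ∈ nodes Set.univ (chM P o) ∧ adjN [j, x] w} =
      insert [x] ((fun l : ℕ => [l, j, x]) '' {l : ℕ | (l : ℕ∞) < chM P o x j}) := by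
    ext w
    simp only [Set.mem_ofPred_eq, Set.mem_insert_iff, Set.mem_image, adjN_iff]
    constructor
    · rintro ⟨h1, ⟨n, rfl⟩ | ⟨n, h2⟩⟩
      · exact Or.inr ⟨n, h1.2, rfl⟩
      · simp only [List.cons.injEq] at h2
        exact Or.inl h2.2.symm
    · rintro (rfl | ⟨l, h1, rfl⟩)
      · exact ⟨(Set.mem_univ _ : x ∈ (Set.univ : Set ℕ)), Or.inr ⟨j, rfl⟩⟩
      · exact ⟨⟨Set.mem_univ _, h1⟩, Or.inl ⟨l, rfl⟩⟩
  unfold dg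
  rw [this, Set.encard_insert_of_notMem (by simp),
    Function.Injective.encard_image (fun a b h => by simpa using h), encard_lt]

theorem dg_leaf (l j x : ℕ) (h : [l, j, x] ∈ nodes Set.univ (chM P o)) :
    dg (nodes Set.univ (chM P o)) [l, j, x] = 1 := by
  have : {w : Node | w ∈ nodes Set.univ (chM P o) ∧ adjN [l, j, x] w} = {[j, x]} := by
    ext w
    simp only [Set.mem_ofPred_eq, Set.mem_singleton_iff, adjN_iff]
    constructor
    · rintro ⟨h1, ⟨n, rfl⟩ | ⟨n, h2⟩⟩
      · exact h1.elim
      · simp only [List.cons.injEq] at h2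
        exact h2.2.symm
    · rintro rfl
      exact ⟨nodes_tail _ _ h, Or.inr ⟨l, rfl⟩⟩
  unfold dg
  rw [this, Set.encard_singleton]

theorem HND_root (ho : o = 0 ∨ o = ⊤) (x n : ℕ) (b : Bool)
    (hx : [x] ∈ nodes Set.univ (chM P o)) :
    HND (nodes Set.univ (chM P o)) (2 * n + b.toNat + 3) ⟨[x], hx⟩ ↔ P x n = b := by
  rw [HND_iff]
  constructor
  · rintro ⟨y, hy, h1, h2⟩
    rcases adjN_iff.1 h1 with ⟨j, rfl⟩ | ⟨j, h3⟩
    · rw [dg_child] at h2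
      rcases Nat.even_or_odd' j with ⟨k, rfl | rfl⟩
      · rw [chM_even] at h2
        have h4 : 2 * k + (P x k).toNat + 2 + 1 = 2 * n + b.toNat + 3 := by exact_mod_cast h2
        have h5 := Bool.toNat_le (P x k)
        have h6 := Bool.toNat_le b
        obtain rfl : k = n := by omega
        have h7 : (P x k).toNat = b.toNat := by omega
        revert h7
        cases P x k <;> cases b <;> simp
      · exfalso
        have hodd : chM P o x (2 * k + 1) = o := by
          unfold chM
          rw [if_neg (by omega)]
        rcases ho with rfl | rfl
        · exact hy.2 hodd
        · rw [hodd, top_add] at h2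
          exact ENat.top_ne_natCast _ h2
    · simp only [List.cons.injEq] at h3
      obtain ⟨rfl, rfl⟩ := h3
      rw [dg_nil] at h2
      exact absurd h2 (ENat.top_ne_natCast _)
  · rintro rfl
    refine ⟨[2 * n, x], ⟨Set.mem_univ _, ?_⟩, adjN_iff.2 (Or.inl ⟨_, rfl⟩), ?_⟩
    · rw [chM_even]
      exact Nat.cast_ne_zero.2 (by omega)
    · rw [dg_child, chM_even]
      norm_cast

theorem root_of_HND {d d' : ℕ} (hd : 2 ≤ d) (hne : d ≠ d')
    {u : nodes Set.univ (chM P o)} (h : HND (nodes Set.univ (chM P o)) d u)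
    (h' : HND (nodes Set.univ (chM P o)) d' u) : ∃ x, u.1 = [x] := by
  rw [HND_iff] at h h'
  obtain ⟨y, hy, h1, h2⟩ := h
  obtain ⟨y', hy', h1', h2'⟩ := h'
  obtain ⟨u, hu⟩ := u
  simp only at h1 h1'
  rw [adjN_iff] at h1 h1'
  match u, hu with
  | [], _ =>
    rcases h1 with ⟨n, rfl⟩ | ⟨n, h3⟩
    · rw [dg_root] at h2
      exact absurd h2 (ENat.top_ne_natCast _)
    · cases h3
  | [x], _ => exact ⟨x, rfl⟩
  | [j, x], _ =>
    rcases h1 with ⟨n, rfl⟩ | ⟨n, h3⟩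
    · rw [dg_leaf _ _ _ hy] at h2
      have : 1 = d := by exact_mod_cast h2
      omega
    · simp only [List.cons.injEq] at h3
      rw [← h3.2, dg_root] at h2
      exact absurd h2 (ENat.top_ne_natCast _)
  | [l, j, x], _ =>
    rcases h1 with ⟨n, rfl⟩ | ⟨n, h3⟩
    · exact hy.elim
    · rcases h1' with ⟨n', rfl⟩ | ⟨n', h3'⟩
      · exact hy'.elim
      · simp only [List.cons.injEq] at h3 h3'
        rw [← h3.2] at h2
        rw [← h3'.2, h2] at h2'
        exact absurd (by exact_mod_cast h2') hne
  | (_ :: _ :: _ :: _ :: _), hu => exact hu.elim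

end

/-- `x` looks like a root with path `p`. -/
def Rooty (M : Type) [FirstOrder.Language.graph.Structure M] (x : M) (p : ℕ → Bool) : Prop :=
  ∀ n b, HND M (2 * n + b.toNat + 3) x ↔ p n = b

theorem rooty_sat (x : ℕ) : Rooty Dsat ⟨[x], (Set.mem_univ _ : x ∈ (Set.univ : Set ℕ))⟩ (Psat x) :=
  fun n b => HND_root (Or.inr rfl) x n b _

/-- In any countable model, vertices with bits `0` and `1` are roots. -/
theorem rooty_of_model {M : Mdl Tsat} (hM : Countable M) (x : M) {b b' : Bool} {n n' : ℕ}
    (hn : n ≠ n') (h : HND M (2 * n + b.toNat + 3) x) (h' : HND M (2 * n' + b'.toNat + 3) x) :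
    ∃ p, InC p ∧ Rooty M x p := by
  obtain ⟨c, hc⟩ := type_realized (p := typeOf (L := FirstOrder.Language.graph) M
    (fun _ : Fin 1 => x)) ⟨M, hM, _, rfl⟩
  have hs : SameType (L := FirstOrder.Language.graph) (fun _ : Fin 1 => x) c := fun φ => by
    have := Set.ext_iff.1 hc φ
    exact this.symm
  have ht : ∀ d, HND M d x ↔ HND Dsat d (c 0) := fun d => HND_of_type hs 0 d
  have hb := Bool.toNat_le b
  have hb' := Bool.toNat_le b'
  obtain ⟨y, hy⟩ := root_of_HND (by omega) (by omega) ((ht _).1 h) ((ht _).1 h')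
  have hcy : c 0 = ⟨[y], (Set.mem_univ _ : y ∈ (Set.univ : Set ℕ))⟩ := Subtype.ext hy
  refine ⟨Psat y, Psat_InC y, fun n b => ?_⟩
  rw [ht, hcy]
  exact rooty_sat y n b

theorem rooty_of_prime {M : Type} [FirstOrder.Language.graph.Structure M]
    (f : M ↪ₑ[FirstOrder.Language.graph] Dat) (x : M) {b b' : Bool} {n n' : ℕ}
    (hn : n ≠ n') (h : HND M (2 * n + b.toNat + 3) x) (h' : HND M (2 * n' + b'.toNat + 3) x) :
    ∃ p, Isol p ∧ Rooty M x p := by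
  have hs : SameType (L := FirstOrder.Language.graph) (fun _ : Fin 1 => x)
      (fun _ : Fin 1 => f x) := fun φ => (f.map_formula φ _).symm
  have ht : ∀ d, HND M d x ↔ HND Dat d (f x) := fun d => HND_of_type hs 0 d
  have hb := Bool.toNat_le b
  have hb' := Bool.toNat_le b'
  obtain ⟨y, hy⟩ := root_of_HND (by omega) (by omega) ((ht _).1 h) ((ht _).1 h')
  have hcy : f x = ⟨[y], (Set.mem_univ _ : y ∈ (Set.univ : Set ℕ))⟩ := Subtype.ext hy
  refine ⟨Pat y, Pat_Isol y, fun n b => ?_⟩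
  rw [ht, hcy]
  exact HND_root (Or.inl rfl) y n b _

/-- Every finite piece of a path is realized in every model. -/
theorem exists_piece {M : Type} [FirstOrder.Language.graph.Structure M] (hM : M ⊨ Tsat)
    {p : ℕ → Bool} (hp : InC p) (m : ℕ) :
    ∃ x : M, ∀ n < m, HND M (2 * n + (p n).toNat + 3) x := by
  obtain ⟨i, hi⟩ := Psat_surj hp
  have key : ∀ (K : Type) [FirstOrder.Language.graph.Structure K] (a : Fin 1 → K),
      (Formula.iInf fun n : Fin m =>
        (psiF (0 : Fin 1) (2 * n.1 + (p n).toNat + 3)).not).Realize a ↔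
      ∀ n < m, HND K (2 * n + (p n).toNat + 3) (a 0) := by
    intro K _ a
    rw [Formula.realize_iInf]
    simp only [Formula.realize_not, realize_psiF, not_not]
    exact ⟨fun h n hn => h ⟨n, hn⟩, fun h n => h n.1 n.2⟩
  have h := (ex_transfer hM (Formula.iInf fun n : Fin m =>
        (psiF (0 : Fin 1) (2 * n.1 + (p n).toNat + 3)).not)).2
    ⟨fun _ => ⟨[Nat.pair i 0], (Set.mem_univ _ : Nat.pair i 0 ∈ (Set.univ : Set ℕ))⟩, by
      rw [key]
      intro n _
      exact (rooty_sat (Nat.pair i 0) n (p n)).2 (by rw [hi])⟩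
  obtain ⟨a, ha⟩ := h
  rw [key] at ha
  exact ⟨a 0, ha⟩

/-- Every path is realized in a saturated model. -/
theorem exists_rooty {M : Mdl Tsat} (hM : IsSaturatedModel Tsat M)
    {p : ℕ → Bool} (hp : InC p) : ∃ x : M, Rooty M x p := by
  obtain ⟨i, hi⟩ := Psat_surj hp
  have := Dsat_model
  obtain ⟨d, hd⟩ := hM.2 0 Fin.elim0 (Theory.ModelType.of Tsat Dsat)
    (inferInstanceAs (Countable Dsat)) Fin.elim0
    (⟨[Nat.pair i 0], (Set.mem_univ _ : Nat.pair i 0 ∈ (Set.univ : Set ℕ))⟩ : Dsat) (by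
      intro φ
      have h1 := @realize_iff_of_model_completeTheory FirstOrder.Language.graph Dsat M _ _
        (show (M : Type) ⊨ FirstOrder.Language.graph.completeTheory Dsat from M.is_model)
        (φ.relabel (Fin.elim0 : Fin 0 → Empty))
      have h2 : ∀ (K : Type) [FirstOrder.Language.graph.Structure K] (a : Fin 0 → K),
          K ⊨ (φ.relabel (Fin.elim0 : Fin 0 → Empty) : FirstOrder.Language.graph.Sentence) ↔
          φ.Realize a := by
        intro K _ a
        show Formula.Realize _ _ ↔ _
        rw [Formula.realize_relabel, Subsingleton.elim a]
      rw [h2 _ Fin.elim0, h2 _ Fin.elim0] at h1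
      exact h1)
  refine ⟨d, fun n b => ?_⟩
  have h3 := HND_of_type hd (Fin.last 0) (2 * n + b.toNat + 3)
  have h4 := rooty_sat (Nat.pair i 0) n b
  rw [hi] at h4
  exact h3.trans h4

end

section

/-! ### The computability endgame -/

theorem lin_comp {γ : Type} [Primcodable γ] {f : γ → ℕ} (a b : ℕ) (hf : Computable f) :
    Computable fun c => a * f c + b :=
  (Primrec.nat_add.comp (Primrec.nat_mul.comp (Primrec.const a) Primrec.id)
    (Primrec.const b)).to_comp.comp hf

/-- Vertex `i` looks like a root of a path which starts with `e` zeros and a one. -/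
def cnd (h : ℕ → ℕ → Bool) (e i : ℕ) : Bool :=
  (Nat.rec true (fun k acc => acc && h i (2 * k + 3)) e : Bool) &&
    (h i (2 * e + 4) && (h i (2 * e + 5) || h i (2 * e + 6)))

theorem cnd_comp {h : ℕ → ℕ → Bool} (hh : Computable₂ h) : Computable₂ (cnd h) := by
  have hand : Computable₂ Bool.and := Primrec.and.to_comp
  have hor : Computable₂ Bool.or := Primrec.or.to_comp
  have h1 : Computable fun p : ℕ × ℕ =>
      (Nat.rec true (fun k acc => acc && h p.2 (2 * k + 3)) p.1 : Bool) := by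
    refine Computable.nat_rec (f := fun p : ℕ × ℕ => p.1) (g := fun _ => true)
      (h := fun (p : ℕ × ℕ) (y : ℕ × Bool) => y.2 && h p.2 (2 * y.1 + 3)) Computable.fst
      (Computable.const true) ?_
    exact hand.comp (Computable.snd.comp Computable.snd)
      (hh.comp (Computable.snd.comp Computable.fst)
        (lin_comp 2 3 (Computable.fst.comp Computable.snd)))
  exact hand.comp h1 (hand.comp (hh.comp Computable.snd (lin_comp 2 4 Computable.fst))
    (hor.comp (hh.comp Computable.snd (lin_comp 2 5 Computable.fst))
      (hh.comp Computable.snd (lin_comp 2 6 Computable.fst))))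

theorem cnd_iff (h : ℕ → ℕ → Bool) (e i : ℕ) : cnd h e i = true ↔
    (∀ k < e, h i (2 * k + 3) = true) ∧ h i (2 * e + 4) = true ∧
      (h i (2 * e + 5) = true ∨ h i (2 * e + 6) = true) := by
  have : ∀ e, (Nat.rec true (fun k acc => acc && h i (2 * k + 3)) e : Bool) = true ↔
      ∀ k < e, h i (2 * k + 3) = true := by
    intro e
    induction e with
    | zero => simp
    | succ e ih =>
      simp only [Bool.and_eq_true, ih]
      constructor
      · rintro ⟨h1, h2⟩ k hk
        rcases Nat.lt_succ_iff_lt_or_eq.1 hk with hk | rfl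
        · exact h1 k hk
        · exact h2
      · exact fun h1 => ⟨fun k hk => h1 k (by omega), h1 e (by omega)⟩
  unfold cnd
  simp only [Bool.and_eq_true, Bool.or_eq_true, this]

theorem prime_abs {h : ℕ → ℕ → Bool} (hh : Computable₂ h)
    (H1 : ∀ e i, cnd h e i = true → ∃ p, Isol p ∧ ∀ n b, h i (2 * n + b.toNat + 3) = true ↔ p n = b)
    (H2 : ∀ e, ∃ i, cnd h e i = true) : False := by
  have hpart : Partrec fun e => Nat.rfind fun i => (Part.some (cnd h e i) : Part Bool) :=
    Partrec.rfind (p := fun e i => (Part.some (cnd h e i) : Part Bool)) (cnd_comp hh)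
  have hdom : ∀ e, ∃ j, j ∈ Nat.rfind fun i => (Part.some (cnd h e i) : Part Bool) := by
    intro e
    obtain ⟨i, hi⟩ := H2 e
    obtain ⟨j, hj, -⟩ := Nat.rfind_min' (p := cnd h e) (m := i) hi
    exact ⟨j, hj⟩
  choose idx hidx using hdom
  have hcomp : Computable idx := by
    refine Partrec.of_eq hpart fun e => ?_
    exact Part.eq_some_iff.2 (hidx e)
  have hspec : ∀ e, cnd h e (idx e) = true := by
    intro e
    exact (Part.mem_some_iff.1 (Nat.rfind_spec (hidx e))).symm
  refine no_selector (fun e n => h (idx e) (2 * n + 4)) ?_ ?_ ?_ ?_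
  · exact hh.comp (hcomp.comp Computable.fst) (lin_comp 2 4 Computable.snd)
  · intro e
    obtain ⟨p, hp, hp'⟩ := H1 e _ (hspec e)
    have : (fun n => h (idx e) (2 * n + 4)) = p := by
      funext n
      have := hp' n true
      simp only [Bool.toNat_true, show 2 * n + 1 + 3 = 2 * n + 4 by omega] at this
      exact Bool.eq_iff_iff.2 this
    rw [this]
    exact hp
  · exact fun e => ((cnd_iff _ _ _).1 (hspec e)).2.1
  · intro e k hk
    obtain ⟨p, hp, hp'⟩ := H1 e _ (hspec e)
    have h1 := (hp' k false).1 (((cnd_iff _ _ _).1 (hspec e)).1 k hk)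
    have h2 := hp' k true
    by_contra hc
    rw [Bool.not_eq_false] at hc
    rw [h2.1 hc] at h1
    exact absurd h1 (by decide)

theorem no_decidable_prime (M : Mdl Tsat) (hM : IsPrimeModel Tsat M)
    (hd : DecidableModel (L := FirstOrder.Language.graph) M) : False := by
  obtain ⟨g, h, hg, hh, hH⟩ := HND_computable hd
  have hm : (Dat : Type) ⊨ Tsat := Dat_model
  have hne : Nonempty (Dat : Type) := ⟨⟨[], trivial⟩⟩
  obtain ⟨f⟩ := hM.2 (Theory.ModelType.of Tsat (Dat : Type)) (inferInstanceAs (Countable (Dat : Type)))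
  refine prime_abs hh (fun e i hc => ?_) (fun e => ?_)
  · rw [cnd_iff] at hc
    obtain ⟨h1, h2, h3⟩ := hc
    have h2' : HND M (2 * e + true.toNat + 3) (g i) := (hH _ _).1 h2
    have h3' : ∃ b : Bool, HND M (2 * (e + 1) + b.toNat + 3) (g i) := by
      rcases h3 with h3 | h3
      · exact ⟨false, (hH _ _).1 h3⟩
      · exact ⟨true, (hH _ _).1 h3⟩
    obtain ⟨b, h3'⟩ := h3'
    obtain ⟨p, hp, hr⟩ := rooty_of_prime f (g i) (Nat.ne_of_lt (Nat.lt_succ_self e)) h2' h3'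
    exact ⟨p, hp, fun n b => (hH _ _).trans (hr n b)⟩
  · have hp : InC (ext1 (fun _ => false) e true) :=
      InC_ext1 InC_zero e true fun _ => allowed_zero fun _ _ => rfl
    obtain ⟨x, hx⟩ := exists_piece (M := M) M.is_model hp (e + 2)
    obtain ⟨i, rfl⟩ := hg x
    refine ⟨i, (cnd_iff _ _ _).2 ⟨fun k hk => (hH _ _).2 ?_, (hH _ _).2 ?_, Or.inl ((hH _ _).2 ?_)⟩⟩
    · simpa [ext1, hk] using hx k (by omega)
    · simpa [ext1] using hx e (by omega)
    · have := hx (e + 1) (by omega)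
      simp [ext1] at this
      exact this

/-- One step of the diagonal construction. -/
def dstep (al : List Bool → Bool) (h : ℕ → ℕ → Bool) (e n : ℕ) (s : List Bool × ℕ) :
    Bool × ℕ :=
  bif decide (n < e) then (false, s.2) else bif decide (n = e) then (true, s.2) else
    bif al s.1 then (!(h s.2 (2 * n + 4)), s.2 + 1) else (false, s.2)

/-- The diagonal construction. -/
def diag (al : List Bool → Bool) (h : ℕ → ℕ → Bool) (e n : ℕ) : List Bool × ℕ :=
  Nat.rec ([], 0) (fun n s => (s.1 ++ [(dstep al h e n s).1], (dstep al h e n s).2)) n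

theorem dstep_comp {al : List Bool → Bool} {h : ℕ → ℕ → Bool} (hal : Computable al)
    (hh : Computable₂ h) :
    Computable fun q : ℕ × ℕ × List Bool × ℕ => dstep al h q.1 q.2.1 q.2.2 := by
  have he : Computable fun q : ℕ × ℕ × List Bool × ℕ => q.1 := Computable.fst
  have hn : Computable fun q : ℕ × ℕ × List Bool × ℕ => q.2.1 :=
    Computable.fst.comp Computable.snd
  have hs1 : Computable fun q : ℕ × ℕ × List Bool × ℕ => q.2.2.1 :=
    Computable.fst.comp (Computable.snd.comp Computable.snd)
  have hs2 : Computable fun q : ℕ × ℕ × List Bool × ℕ => q.2.2.2 :=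
    Computable.snd.comp (Computable.snd.comp Computable.snd)
  have hlt : Computable₂ fun a b : ℕ => decide (a < b) := Primrec.nat_lt.decide.to_comp
  have heq : Computable₂ fun a b : ℕ => decide (a = b) :=
    (Primrec.eq (α := ℕ)).decide.to_comp
  refine Computable.cond (hlt.comp hn he) ((Computable.const false).pair hs2)
    (Computable.cond (heq.comp hn he) ((Computable.const true).pair hs2)
      (Computable.cond (hal.comp hs1) (Computable.pair ?_ (Computable.succ.comp hs2))
        ((Computable.const false).pair hs2)))
  exact Primrec.not.to_comp.comp (hh.comp hs2 (lin_comp 2 4 hn))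

theorem comp_aux {α β γ : Type} [Primcodable α] [Primcodable β] [Primcodable γ] {f : β → γ}
    {g : α → β} {k : α → γ} (hf : Computable f) (hg : Computable g) (hk : ∀ a, k a = f (g a)) :
    Computable k := (hf.comp hg).of_eq fun a => (hk a).symm

theorem iter_comp (S : ℕ → ℕ → List Bool × ℕ → Bool × ℕ)
    (hd : Computable fun q : ℕ × ℕ × List Bool × ℕ => S q.1 q.2.1 q.2.2) :
    Computable fun p : ℕ × ℕ => (Nat.rec ([], 0) (fun n s =>
      (s.1 ++ [(S p.1 n s).1], (S p.1 n s).2)) p.2 : List Bool × ℕ) := by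
  refine Computable.nat_rec (f := fun p : ℕ × ℕ => p.2)
    (g := fun _ => (([], 0) : List Bool × ℕ))
    (h := fun (p : ℕ × ℕ) (y : ℕ × List Bool × ℕ) =>
      (y.2.1 ++ [(S p.1 y.1 y.2).1], (S p.1 y.1 y.2).2)) Computable.snd
    (Computable.const _) ?_
  have h0 : Computable fun q : (ℕ × ℕ) × ℕ × List Bool × ℕ => (q.1.1, q.2) :=
    (Computable.fst.comp Computable.fst).pair Computable.snd
  have h1 : Computable fun q : (ℕ × ℕ) × ℕ × List Bool × ℕ => S q.1.1 q.2.1 q.2.2 :=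
    comp_aux hd h0 fun _ => rfl
  have h2 : Computable fun q : (ℕ × ℕ) × ℕ × List Bool × ℕ => (S q.1.1 q.2.1 q.2.2).1 :=
    comp_aux Computable.fst h1 fun _ => rfl
  have h3 : Computable fun q : (ℕ × ℕ) × ℕ × List Bool × ℕ => (S q.1.1 q.2.1 q.2.2).2 :=
    comp_aux Computable.snd h1 fun _ => rfl
  have h4 : Computable fun q : (ℕ × ℕ) × ℕ × List Bool × ℕ => q.2.2.1 :=
    Computable.fst.comp (Computable.snd.comp Computable.snd)
  exact (Computable.list_concat.comp h4 h2).pair h3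

theorem step_comp (S : ℕ → ℕ → List Bool × ℕ → Bool × ℕ) (D : ℕ → ℕ → List Bool × ℕ)
    (hd : Computable fun q : ℕ × ℕ × List Bool × ℕ => S q.1 q.2.1 q.2.2)
    (hD : Computable fun p : ℕ × ℕ => D p.1 p.2) :
    Computable fun p : ℕ × ℕ => (S p.1 p.2 (D p.1 p.2)).1 := by
  have h0 : Computable fun p : ℕ × ℕ => (p.1, p.2, D p.1 p.2) :=
    Computable.fst.pair (Computable.snd.pair hD)
  have h1 : Computable fun p : ℕ × ℕ => S p.1 p.2 (D p.1 p.2) := comp_aux hd h0 fun _ => rfl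
  exact comp_aux Computable.fst h1 fun _ => rfl

theorem diag_comp {al : List Bool → Bool} {h : ℕ → ℕ → Bool} (hal : Computable al)
    (hh : Computable₂ h) : Computable fun p : ℕ × ℕ => diag al h p.1 p.2 :=
  iter_comp (dstep al h) (dstep_comp hal hh)

/-- The diagonal paths. -/
def dF (al : List Bool → Bool) (h : ℕ → ℕ → Bool) (e n : ℕ) : Bool :=
  (dstep al h e n (diag al h e n)).1

theorem dF_comp {al : List Bool → Bool} {h : ℕ → ℕ → Bool} (hal : Computable al)
    (hh : Computable₂ h) : Computable₂ (dF al h) :=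
  step_comp (dstep al h) (diag al h) (dstep_comp hal hh) (diag_comp hal hh)

theorem diag_fst (al : List Bool → Bool) (h : ℕ → ℕ → Bool) (e n : ℕ) :
    (diag al h e n).1 = pre (dF al h e) n := by
  induction n with
  | zero => rfl
  | succ n ih =>
    rw [pre_succ, ← ih]
    rfl

theorem diag_snd (al : List Bool → Bool) (h : ℕ → ℕ → Bool) (e n : ℕ) :
    (diag al h e (n + 1)).2 = (dstep al h e n (diag al h e n)).2 := rfl

theorem dF_lt {al : List Bool → Bool} {h : ℕ → ℕ → Bool} {e n : ℕ} (hn : n < e) :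
    dF al h e n = false := by
  simp [dF, dstep, hn]

theorem dF_eq (al : List Bool → Bool) (h : ℕ → ℕ → Bool) (e : ℕ) : dF al h e e = true := by
  simp [dF, dstep]

theorem dF_gt {al : List Bool → Bool} {h : ℕ → ℕ → Bool} {e n : ℕ} (hn : e < n) :
    dF al h e n = (al (pre (dF al h e) n) && !(h (diag al h e n).2 (2 * n + 4))) := by
  rw [← diag_fst]
  have h1 : ¬ n < e := by omega
  have h2 : n ≠ e := by omega
  simp only [dF, dstep, h1, h2, decide_false, cond_false]
  cases al (diag al h e n).1 <;> simp

theorem dc_gt {al : List Bool → Bool} {h : ℕ → ℕ → Bool} {e n : ℕ} (hn : e < n) :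
    (diag al h e (n + 1)).2 = (diag al h e n).2 + (al (pre (dF al h e) n)).toNat := by
  rw [diag_snd, ← diag_fst]
  have h1 : ¬ n < e := by omega
  have h2 : n ≠ e := by omega
  simp only [dstep, h1, h2, decide_false, cond_false]
  cases al (diag al h e n).1 <;> simp

theorem dc_le {al : List Bool → Bool} {h : ℕ → ℕ → Bool} {e n : ℕ} (hn : n ≤ e + 1) :
    (diag al h e n).2 = 0 := by
  induction n with
  | zero => rfl
  | succ n ih =>
    rw [diag_snd, ← ih (by omega)]
    rcases Nat.lt_or_ge n e with h1 | h1
    · simp [dstep, h1]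
    · have h2 : n = e := by omega
      simp [dstep, h2]

theorem sat_abs {h : ℕ → ℕ → Bool} (hh : Computable₂ h)
    (H : ∀ p, InC p → ∃ i, ∀ n b, h i (2 * n + b.toNat + 3) = true ↔ p n = b) : False := by
  obtain ⟨dec, hal⟩ := prim_allowed
  have hal' : Computable fun σ => decide (allowed σ) := hal.to_comp
  obtain ⟨al, hale⟩ : ∃ al : List Bool → Bool, al = fun σ => decide (allowed σ) := ⟨_, rfl⟩
  have hali : ∀ σ, al σ = true ↔ allowed σ := fun σ => by simp [hale]
  rw [← hale] at hal'
  have hC : ∀ e, InC (dF al h e) := by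
    intro e n hn
    rcases Nat.lt_trichotomy n e with h1 | rfl | h1
    · rw [dF_lt h1] at hn
      exact absurd hn (by decide)
    · exact allowed_zero fun k hk => dF_lt hk
    · rw [dF_gt h1, Bool.and_eq_true] at hn
      exact (hali _).1 hn.1
  refine no_selector (dF al h) (dF_comp hal' hh) (fun e => ⟨hC e, ?_⟩) (dF_eq al h)
    (fun e k hk => dF_lt hk)
  by_contra hc
  push Not at hc
  obtain ⟨i, hi⟩ := H _ (hC e)
  have hunb : ∀ k, ∃ n, k < (diag al h e n).2 := by
    have hmono : ∀ N m, e < N → (diag al h e N).2 ≤ (diag al h e (N + m)).2 := by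
      intro N m hN
      induction m with
      | zero => exact le_rfl
      | succ m ih =>
        rw [← Nat.add_assoc, dc_gt (by omega)]
        omega
    intro k
    have : ∃ n, e < n ∧ k < (diag al h e n).2 := by
      induction k with
      | zero =>
        obtain ⟨n, hn, hn'⟩ := hc (e + 1)
        refine ⟨n + 1, by omega, ?_⟩
        rw [dc_gt (by omega), (hali _).2 hn']
        simp
      | succ k ih =>
        obtain ⟨N, hN, hN'⟩ := ih
        obtain ⟨n, hn, hn'⟩ := hc N
        refine ⟨n + 1, by omega, ?_⟩
        have := hmono N (n - N) hN
        rw [show N + (n - N) = n by omega] at this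
        rw [dc_gt (by omega), (hali _).2 hn']
        simp only [Bool.toNat_true]
        omega
    exact this.imp fun n hn => hn.2
  classical
  obtain ⟨n, hn⟩ : ∃ n, n = Nat.find (hunb i) := ⟨_, rfl⟩
  have hn1 : i < (diag al h e n).2 := hn ▸ Nat.find_spec (hunb i)
  have hge : e + 1 < n := by
    by_contra hle
    rw [dc_le (by omega)] at hn1
    omega
  obtain ⟨m, rfl⟩ : ∃ m, n = m + 1 := ⟨n - 1, by omega⟩
  have hn2 : ¬ i < (diag al h e m).2 := Nat.find_min (hunb i) (by omega)
  rw [dc_gt (by omega)] at hn1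
  have hb : al (pre (dF al h e) m) = true := by
    by_contra hb
    rw [Bool.not_eq_true] at hb
    simp only [hb, Bool.toNat_false] at hn1
    omega
  have hci : (diag al h e m).2 = i := by
    simp only [hb, Bool.toNat_true] at hn1
    omega
  have h1 := dF_gt (al := al) (h := h) (show e < m by omega)
  rw [hb, hci, Bool.true_and] at h1
  have h2 := hi m true
  rw [h1, show 2 * m + true.toNat + 3 = 2 * m + 4 from rfl] at h2
  cases hv : h i (2 * m + 4) <;> simp [hv] at h2

theorem no_decidable_sat (M : Mdl Tsat) (hM : IsSaturatedModel Tsat M)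
    (hd : DecidableModel (L := FirstOrder.Language.graph) M) : False := by
  obtain ⟨g, h, hg, hh, hH⟩ := HND_computable hd
  refine sat_abs hh fun p hp => ?_
  obtain ⟨x, hx⟩ := exists_rooty hM hp
  obtain ⟨i, rfl⟩ := hg x
  exact ⟨i, fun n b => (hH _ _).trans (hx n b)⟩

end

/-- There is a decidable small theory of graphs, all of whose types are
decidable, whose prime model is not decidable; consequently its saturated model is not
decidable either. -/
theorem decidable_graph_theory_with_undecidable_prime_model :
    ∃ T : FirstOrder.Language.graph.Theory,
      FirstOrder.Language.Theory.simpleGraph ⊆ T ∧ T.IsComplete ∧ IsSmall T ∧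
      DecidableTheory T ∧
      (∀ (n : ℕ) (p : Set (FirstOrder.Language.graph.Formula (Fin n))),
        IsTypeOf T p → DecidableType p) ∧
      (∀ M : Mdl T, Countable M → IsPrimeModel T M →
        ¬ DecidableModel (L := FirstOrder.Language.graph) M) ∧
      (∀ M : Mdl T, Countable M → IsSaturatedModel T M →
        ¬ DecidableModel (L := FirstOrder.Language.graph) M) := by
  exact ⟨Tsat, Tsat_graph, Tsat_complete, Tsat_small, Tsat_decidable, Tsat_types,
    fun M _ hM hd => no_decidable_prime M hM hd, fun M _ hM hd => no_decidable_sat M hM hd⟩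

end PaperAL
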